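/- arXiv:1810.08022 — 5 statements merged into one kernel-verified Lean document; each statement's English description precedes it below -/
import Mathlib

section
/- Let q ∈ ℂ be a primitive fourth root of unity (q = i or q = −i). For every integer k and every positive integer n the following identities hold in ℂ[x]: (1) d_{2n+1,4k}(x,q) = 0; (2) d_{2n,4k}(x,q) = 2^n · [∏_{l=1}^{2n−1} 4^{⌊l/2⌋}⌊l/2⌋!/l!] · q^n · ∏_{l=1}^{⌊n/2⌋}(x/2+2l+1/2)_{2n−4l+1} · ∏_{l=0}^{⌊(n−1)/2⌋}(x/2+2l+1/2)_{2n−4l−1}; (3) d_{n,4k+1}(x,q) = 2^{⌊n/2⌋} · [∏_{l=1}^{n−1} 4^{⌊l/2⌋}⌊l/2⌋!/l!] · ∏_{l=1}^{⌊n/2⌋}(x/2+l)_{n−2l+1}; (4) d_{n,4k+2}(x,q) = [∏_{l=1}^{n−1} 4^{⌊l/2⌋}⌊l/2⌋!/l!] · (1−q)^n · ∏_{l=1}^{⌊n/2⌋}(x/2+l+1/2)_l · ∏_{l=1}^{⌊(n−1)/2⌋}(x/2+l+1/2)_l, where (1−q)^n realizes (2q^{−1})^{n/2} since (1−q)² =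 2q^{−1}; (5) d_{n,4k+3}(x,q) = (−q)^n · d_{n,4k+1}(x,q). -/
open Polynomial Finset

noncomputable section

/-- The polynomial binomial coefficient binom(y, m) = y(y-1)⋯(y-m+1)/m! over a field F. -/
noncomputable def binomP (F : Type*) [Field F] (y : Polynomial F) (m : ℕ) : Polynomial F :=
  Polynomial.C ((m.factorial : F))⁻¹ * ∏ t ∈ Finset.range m, (y - (t : Polynomial F))

/-- a_m(q) for a numeric value q in a field: a_m = ∑_{l=0}^{m-1}(-q)^l for m > 0, a_0 = 0,
a_m = -∑_{l=1}^{-m}(-q)^{-l} for m < 0. -/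
noncomputable def aF (F : Type*) [Field F] (q : F) (m : ℤ) : F :=
  if 0 < m then ∑ l ∈ Finset.range m.toNat, (-q) ^ l
  else -∑ l ∈ Finset.range (-m).toNat, (-q) ^ (-(l + 1 : ℤ))

/-- d_{n,k}(x,q) ∈ F[x] for a numeric value q:
the determinant of the matrix with (1-based) (i,j) entry binom(x+i+j-2, j-1)·a_{j-i+k}(q). -/
noncomputable def dF (F : Type*) [Field F] (n : ℕ) (k : ℤ) (q : F) : Polynomial F :=
  Matrix.det (Matrix.of fun i j : Fin n =>
    binomP F (Polynomial.X + ((i : ℕ) : Polynomial F) + ((j : ℕ) : Polynomial F)) (j : ℕ) *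
      Polynomial.C (aF F q ((j : ℤ) - (i : ℤ) + k)))

/-- The Pochhammer symbol (y)_m = y(y+1)⋯(y+m-1) for m > 0, and (y)_m = 1 for m ≤ 0. -/
noncomputable def poch (y : Polynomial ℂ) (m : ℤ) : Polynomial ℂ :=
  ∏ t ∈ Finset.range m.toNat, (y + (t : Polynomial ℂ))

/-- x/2 as a polynomial. -/
noncomputable def halfX : Polynomial ℂ := Polynomial.C (2⁻¹ : ℂ) * Polynomial.X

/-- ∏_{l=1}^{m} 4^{⌊l/2⌋}·⌊l/2⌋!/l!. -/
noncomputable def prodFact4 (m : ℕ) : ℂ :=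
  ∏ l ∈ Finset.range m,
    (4 : ℂ) ^ ((l + 1) / 2) * (((l + 1) / 2).factorial : ℂ) / ((l + 1).factorial : ℂ)

/-!
Put `w = -q` and `ε = w ^ k`. Once the denominators `1 + q` are cleared, the `j`-th entry of row `i`
is the coefficient of `Tʲ` in `(1 - T) ^ (-x - 1 - i) - ε (-w)ⁱ (1 - w T) ^ (-x - 1 - i)`. Since
`w ^ 2 = -1`, the linear forms `1 - w T` and `1 - T` satisfy
`(1 - w T) - w (1 - T) = 1 - w` and `-(1 - T) - w (1 - w T) = -w (1 - w)`. Their `i`-th powers show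
that the rows are, up to the factors `(1 - w)ⁱ`, a binomial transform of the rows
`(Pⱼ(s + l) - (-1)ˡ ε Pⱼ(-s - l))ⱼ` with `s = (x + 1) / 2`, where
`Pⱼ(y) = [Tʲ] (1 - T) ^ (-s - y) (1 - w T) ^ (-s + y)` is a polynomial of degree `j` in `y`, of
Meixner–Pollaczek type. Only the leading coefficients of the `Pⱼ` matter for the determinant, so it
reduces to the Vandermonde-like determinant with entries `(1 - (-1)ˡ⁺ʳ ε) (s + l)ʳ`.

For `ε = -1` the weights vanish unless `l` and `r` have the same parity, and the determinant splits
into two Vandermonde determinants in the squares of the nodes; for `ε = 1` exchanging neighbouring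
rows leads back to this case. For `ε = w` the weights factor, and the matrix is a scaled Vandermonde
matrix at the nodes `(-1)ˡ (s + l)`. Finally, changing the signs of alternate rows and columns
exchanges `ε` and `ε⁻¹` up to a scalar, which settles `ε = -w` and the odd sizes for `ε = 1`.
-/

section Determinants

variable {R : Type*} [CommRing R]

theorem det_linearMap_polynomial (n : ℕ) (L : ℕ → R[X] →ₗ[R] R) (p : ℕ → R[X])
    (hp : ∀ r, (p r).natDegree ≤ r) :
    (Matrix.of fun j r : Fin n => L j (p r)).det =
      (∏ r ∈ range n, (p r).coeff r) * (Matrix.of fun j r : Fin n => L j (X ^ (r : ℕ))).det := by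
  have hfactor : (Matrix.of fun j r : Fin n => L j (p r)) =
      (Matrix.of fun j s : Fin n => L j (X ^ (s : ℕ))) *
        (Matrix.of fun s r : Fin n => (p r).coeff s) := by
    ext j r
    simp only [Matrix.mul_apply, Matrix.of_apply]
    conv_lhs => rw [(p r).as_sum_range_C_mul_X_pow' ((hp r).trans_lt r.2)]
    rw [Finset.sum_range, map_sum]
    refine Finset.sum_congr rfl fun s _ => ?_
    rw [← smul_eq_C_mul, map_smul, smul_eq_mul, mul_comm]
  have hcoeff : (Matrix.of fun s r : Fin n => (p r).coeff s).det =
      ∏ r ∈ range n, (p r).coeff r := by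
    rw [Matrix.det_of_isUpperTriangular, Finset.prod_range]
    · rfl
    · exact fun s r hrs => coeff_eq_zero_of_natDegree_lt ((hp r).trans_lt hrs)
  rw [hfactor, Matrix.det_mul, hcoeff, mul_comm]

theorem det_linearMap_X_pow_of_triangular (n : ℕ) (L : ℕ → R[X] →ₗ[R] R) (p : ℕ → R[X])
    (hp : ∀ r, (p r).natDegree = r) (hm : ∀ r, (p r).Monic) (hL : ∀ j r, j < r → L j (p r) = 0) :
    (Matrix.of fun j r : Fin n => L j (X ^ (r : ℕ))).det = ∏ j ∈ range n, L j (p j) := by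
  have hcoeff : ∀ r, (p r).coeff r = 1 := fun r => by simpa only [hp] using (hm r).coeff_natDegree
  have h := det_linearMap_polynomial n L p fun r => (hp r).le
  rw [Finset.prod_eq_one fun r _ => hcoeff r, one_mul] at h
  rw [← h, Matrix.det_of_isLowerTriangular, Finset.prod_range]
  · rfl
  · exact fun j r hjr => hL j r hjr

theorem det_binomial_transform (n : ℕ) (a : R) (f : ℕ → ℕ → R) :
    (Matrix.of fun i j : Fin n =>
      ∑ l ∈ range (i + 1), (i : ℕ).choose l * a ^ (i - l : ℕ) * f l j).det =
      (Matrix.of fun i j : Fin n => f i j).det := by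
  set T : Matrix (Fin n) (Fin n) R :=
    Matrix.of fun i l : Fin n => (i : ℕ).choose l * a ^ (i - l : ℕ) with hT
  have hfactor : (Matrix.of fun i j : Fin n =>
      ∑ l ∈ range (i + 1), (i : ℕ).choose l * a ^ (i - l : ℕ) * f l j) =
        T * Matrix.of fun i j : Fin n => f i j := by
    ext i j
    simp only [hT, Matrix.mul_apply, Matrix.of_apply]
    rw [← Finset.sum_range fun l => (i : ℕ).choose l * a ^ (i - l : ℕ) * f l j]
    refine Finset.sum_subset (range_subset_range.2 i.2) fun l _ hl => ?_
    rw [Nat.choose_eq_zero_of_lt (by simpa [Nat.lt_succ_iff] using hl), Nat.cast_zero, zero_mul,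
      zero_mul]
  have hdet : T.det = 1 := by
    rw [Matrix.det_of_isLowerTriangular]
    · simp [hT]
    · intro i l hil
      simp [hT, Nat.choose_eq_zero_of_lt (show (i : ℕ) < l from hil)]
  rw [hfactor, Matrix.det_mul, hdet, one_mul]

theorem det_pow_eq_prod_range (n : ℕ) (v : ℕ → R) :
    (Matrix.of fun j r : Fin n => v j ^ (r : ℕ)).det =
      ∏ j ∈ range n, ∏ i ∈ range j, (v j - v i) := by
  have hvandermonde := Matrix.det_vandermonde fun j : Fin n => v j
  rw [Finset.prod_comm' (t' := univ) (s' := Iio) (by simp)] at hvandermonde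
  rw [Finset.prod_range]
  refine hvandermonde.trans (Finset.prod_congr rfl fun j _ => ?_)
  rw [← Nat.Iio_eq_range, ← Fin.map_valEmbedding_Iio, Finset.prod_map]
  rfl

/-- The linear functional `p ↦ p(vⱼ) - (-1)ʲ ε p(-vⱼ)`. -/
def signedEval (ε : R) (v : ℕ → R) (j : ℕ) : R[X] →ₗ[R] R :=
  leval (v j) - ((-1) ^ j * ε) • leval (-v j)

theorem signedEval_apply (ε : R) (v : ℕ → R) (j : ℕ) (p : R[X]) :
    signedEval ε v j p = p.eval (v j) - (-1) ^ j * ε * p.eval (-v j) :=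
  rfl

/-- The matrix of the functionals `signedEval ε v j` on the monomials `X ^ r`: a Vandermonde matrix
in which the entry `(j, r)` carries the weight `1 - (-1)ʲ⁺ʳ ε`. -/
def signedVandermonde (n : ℕ) (ε : R) (v : ℕ → R) : Matrix (Fin n) (Fin n) R :=
  Matrix.of fun j r => (1 - (-1) ^ (j + r : ℕ) * ε) * v j ^ (r : ℕ)

theorem signedVandermonde_eq_signedEval (n : ℕ) (ε : R) (v : ℕ → R) :
    signedVandermonde n ε v = Matrix.of fun j r : Fin n => signedEval ε v j (X ^ (r : ℕ)) := by
  ext j r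
  rw [signedVandermonde, Matrix.of_apply, Matrix.of_apply, signedEval_apply, eval_pow, eval_pow,
    eval_X, eval_X, neg_pow, pow_add]
  ring

theorem det_signedVandermonde_of_mul_eq_one {ε ε' : R} (h : ε' * ε = 1) (n : ℕ) (v : ℕ → R) :
    (signedVandermonde n ε' v).det = (-ε') ^ n * (signedVandermonde n ε v).det := by
  have hscale : signedVandermonde n ε' v = -ε' • Matrix.of fun j r : Fin n =>
      (-1) ^ (j : ℕ) * Matrix.of (fun j r : Fin n =>
        (-1) ^ (r : ℕ) * signedVandermonde n ε v j r) j r := by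
    ext j r
    simp only [signedVandermonde, Matrix.of_apply, Matrix.smul_apply, smul_eq_mul]
    have hsq : (-1 : R) ^ (j + r : ℕ) * (-1) ^ (j + r : ℕ) = 1 :=
      pow_mul_pow_eq_one _ (by norm_num)
    rw [pow_add] at hsq ⊢
    linear_combination -(v j ^ (r : ℕ) * ε' * ε) * hsq - v j ^ (r : ℕ) * h
  rw [hscale, Matrix.det_smul, Matrix.det_mul_column, Matrix.det_mul_row, Fintype.card_fin,
    ← mul_assoc (∏ _, _), ← Finset.prod_mul_distrib, Finset.prod_eq_one, one_mul]
  exact fun i _ => pow_mul_pow_eq_one _ (by norm_num)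

theorem det_signedVandermonde_neg_one_eq_prod_range (n : ℕ) (v : ℕ → R) :
    (signedVandermonde n (-1) v).det = ∏ j ∈ range n,
      2 * (v j ^ (j % 2) * ∏ l ∈ range (j / 2), (v j ^ 2 - v (j % 2 + 2 * l) ^ 2)) := by
  nontriviality R
  set p : ℕ → R[X] := fun r =>
    X ^ (r % 2) * ∏ l ∈ range (r / 2), (X ^ 2 - C (v (r % 2 + 2 * l) ^ 2)) with hp
  have hmonic (r : ℕ) : (∏ l ∈ range (r / 2), (X ^ 2 - C (v (r % 2 + 2 * l) ^ 2)) : R[X]).Monic :=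
    monic_prod_of_monic _ _ fun l _ => monic_X_pow_sub_C _ two_ne_zero
  have hdegree (r : ℕ) : (p r).natDegree = r := by
    rw [hp, (monic_X_pow _).natDegree_mul (hmonic r),
      natDegree_prod_of_monic _ _ fun l _ => monic_X_pow_sub_C _ two_ne_zero]
    simp only [natDegree_X_pow_sub_C, sum_const, card_range, smul_eq_mul, natDegree_X_pow]
    omega
  have hparity (j r : ℕ) : signedEval (-1) v j (p r) = (1 + (-1) ^ (j + r)) *
      (v j ^ (r % 2) * ∏ l ∈ range (r / 2), (v j ^ 2 - v (r % 2 + 2 * l) ^ 2)) := by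
    simp only [hp, signedEval_apply, eval_mul, eval_prod, eval_sub, eval_pow, eval_X, eval_C,
      neg_sq, neg_pow (v j) (r % 2), ← neg_one_pow_eq_pow_mod_two, pow_add]
    ring
  rw [signedVandermonde_eq_signedEval, det_linearMap_X_pow_of_triangular n _ p hdegree
    (fun r => (monic_X_pow _).mul (hmonic r))]
  · refine Finset.prod_congr rfl fun j _ => ?_
    rw [hparity, ← two_mul, pow_mul, neg_one_sq, one_pow, one_add_one_eq_two]
  · intro j r hjr
    rw [hparity]
    rcases Nat.even_or_odd (j + r) with heven | hodd
    · rw [Finset.prod_eq_zero (i := j / 2) (mem_range.2 (by grind)), mul_zero, mul_zero]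
      rw [show r % 2 + 2 * (j / 2) = j by grind, sub_self]
    · rw [hodd.neg_one_pow, add_neg_cancel, zero_mul]

theorem prod_range_even_mul_odd {M : Type*} [CommMonoid M] (f : ℕ → M) (n : ℕ) :
    (∏ a ∈ range ((n + 1) / 2), f (2 * a)) * ∏ a ∈ range (n / 2), f (2 * a + 1) =
      ∏ j ∈ range n, f j := by
  induction n with
  | zero => simp
  | succ n ih =>
    rw [Finset.prod_range_succ, ← ih]
    obtain ⟨m, rfl | rfl⟩ := n.even_or_odd'
    · rw [show (2 * m + 1 + 1) / 2 = m + 1 by omega, show (2 * m + 1) / 2 = m by omega,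
        show 2 * m / 2 = m by omega, Finset.prod_range_succ, mul_right_comm]
    · rw [show (2 * m + 1 + 1 + 1) / 2 = m + 1 by omega, show (2 * m + 1 + 1) / 2 = m + 1 by omega,
        show (2 * m + 1) / 2 = m by omega, Finset.prod_range_succ (fun a => f (2 * a + 1)),
        mul_assoc]

theorem det_signedVandermonde_neg_one (n : ℕ) (v : ℕ → R) :
    (signedVandermonde n (-1) v).det = 2 ^ n *
      (∏ a ∈ range ((n + 1) / 2), ∏ l ∈ range a, (v (2 * a) ^ 2 - v (2 * l) ^ 2)) *
      ∏ a ∈ range (n / 2),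
        v (2 * a + 1) * ∏ l ∈ range a, (v (2 * a + 1) ^ 2 - v (2 * l + 1) ^ 2) := by
  rw [det_signedVandermonde_neg_one_eq_prod_range, Finset.prod_mul_distrib, Finset.prod_const,
    card_range, ← prod_range_even_mul_odd _ n, mul_assoc]
  simp only [Nat.mul_mod_right, Nat.mul_add_mod, Nat.mul_add_div, Nat.mul_div_right, Nat.one_mod,
    Nat.succ_pos, pow_zero, pow_one, one_mul, zero_add, add_comm 1, Nat.reduceDiv, add_zero]

/-- The permutation of `Fin (m * 2)` exchanging `2 * a` and `2 * a + 1` for every `a`. -/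
def swapPairs (m : ℕ) : Equiv.Perm (Fin (m * 2)) :=
  finProdFinEquiv.permCongr (Equiv.prodCongrRight fun _ : Fin m => Equiv.swap (0 : Fin 2) 1)

theorem val_swapPairs {m : ℕ} (j : Fin (m * 2)) :
    (swapPairs m j : ℕ) = j + 1 - 2 * (j % 2) := by
  obtain ⟨⟨a, b⟩, rfl⟩ := finProdFinEquiv.surjective j
  fin_cases b <;> simp [swapPairs, Equiv.permCongr_apply]
  omega

theorem sign_swapPairs (m : ℕ) : Equiv.Perm.sign (swapPairs m) = (-1) ^ m := by
  rw [swapPairs, Equiv.Perm.sign_permCongr, Equiv.Perm.sign_prodCongrRight]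
  simp

theorem det_signedVandermonde_one_mul_two (m : ℕ) (v : ℕ → R) :
    (signedVandermonde (m * 2) 1 v).det = (-4) ^ m *
      (∏ a ∈ range m, ∏ l ∈ range a, (v (2 * a + 1) ^ 2 - v (2 * l + 1) ^ 2)) *
      ∏ a ∈ range m, v (2 * a) * ∏ l ∈ range a, (v (2 * a) ^ 2 - v (2 * l) ^ 2) := by
  have hperm : (signedVandermonde (m * 2) 1 v).submatrix (swapPairs m) id =
      signedVandermonde (m * 2) (-1) fun j => v (j + 1 - 2 * (j % 2)) := by
    ext j r
    simp only [signedVandermonde, Matrix.submatrix_apply, Matrix.of_apply, id_eq, val_swapPairs]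
    have hsign : (-1 : R) ^ (j + 1 - 2 * (j % 2) : ℕ) = -(-1) ^ (j : ℕ) := by
      rw [neg_eq_neg_one_mul ((-1) ^ _), ← pow_succ', neg_one_pow_congr]
      grind
    rw [pow_add, pow_add, hsign]
    ring
  have hdet := Matrix.det_permute (swapPairs m) (signedVandermonde (m * 2) 1 v)
  rw [hperm, sign_swapPairs, det_signedVandermonde_neg_one] at hdet
  have hcancel : ((((-1) ^ m : ℤˣ) : ℤ) : R) * (((-1) ^ m : ℤˣ) : ℤ) = 1 := by
    push_cast
    exact pow_mul_pow_eq_one _ (by norm_num)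
  calc (signedVandermonde (m * 2) 1 v).det
      = (((-1) ^ m : ℤˣ) : ℤ) * ((((-1) ^ m : ℤˣ) : ℤ) * (signedVandermonde (m * 2) 1 v).det) := by
        rw [← mul_assoc, hcancel, one_mul]
    _ = _ := by
        rw [← hdet, show (m * 2 + 1) / 2 = m by omega, show m * 2 / 2 = m by omega]
        have heven (a : ℕ) : 2 * a + 1 - 2 * (2 * a % 2) = 2 * a + 1 := by omega
        have hodd (a : ℕ) : 2 * a + 1 + 1 - 2 * ((2 * a + 1) % 2) = 2 * a := by omega
        simp only [heven, hodd]
        push_cast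
        rw [mul_comm m 2, pow_mul, ← mul_assoc, ← mul_assoc, ← mul_pow]
        norm_num

theorem det_signedVandermonde_of_sq_eq_neg_one {w : R} (hw : w ^ 2 = -1) (n : ℕ) (v : ℕ → R) :
    (signedVandermonde n w v).det =
      ∏ j ∈ range n, (1 - w) * ∏ i ∈ range j, (v j - (-1) ^ (i + j) * v i) := by
  have hweight (j r : ℕ) :
      1 - (-1) ^ (j + r) * w = (1 - w) * w ^ (j % 2) * ((-1) ^ j) ^ r * w ^ (r % 2) := by
    rcases j.even_or_odd with hj | hj <;> rcases r.even_or_odd with hr | hr <;>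
      simp only [pow_add, hj.neg_one_pow, hr.neg_one_pow, Nat.even_iff.1, Nat.odd_iff.1, hj, hr,
        one_pow, pow_zero, pow_one]
    · ring
    · linear_combination hw
    · linear_combination hw
    · linear_combination (1 - w) * hw
  have hfactor : signedVandermonde n w v = Matrix.of fun j r : Fin n =>
      w ^ (r % 2 : ℕ) * Matrix.of (fun j r : Fin n => (1 - w) * w ^ (j % 2 : ℕ) *
        Matrix.of (fun j r : Fin n => ((-1) ^ (j : ℕ) * v j) ^ (r : ℕ)) j r) j r := by
    ext j r
    simp only [signedVandermonde, Matrix.of_apply, hweight, mul_pow]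
    ring
  rw [hfactor, Matrix.det_mul_row, Matrix.det_mul_column,
    det_pow_eq_prod_range n fun j => (-1) ^ j * v j]
  simp only [Finset.prod_range, ← Finset.prod_mul_distrib]
  refine Finset.prod_congr rfl fun j _ => ?_
  have hrow : w ^ (j % 2 : ℕ) * (w ^ (j % 2 : ℕ) * ((-1) ^ (j : ℕ)) ^ (j : ℕ)) = 1 := by
    rcases (j : ℕ).even_or_odd with hj | hj
    · simp [hj.neg_one_pow, Nat.even_iff.1 hj]
    · simp only [hj.neg_one_pow, Nat.odd_iff.1 hj, pow_one]
      linear_combination -hw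
  have hsign (i : Fin j) : (-1) ^ (j : ℕ) * v j - (-1) ^ (i : ℕ) * v i =
      (-1) ^ (j : ℕ) * (v j - (-1) ^ (i + j : ℕ) * v i) := by
    have hsq : (-1 : R) ^ (j : ℕ) * (-1) ^ (j : ℕ) = 1 :=
      pow_mul_pow_eq_one _ (by norm_num)
    rw [pow_add]
    linear_combination (-1) ^ (i : ℕ) * v i * hsq
  simp only [hsign, Finset.prod_mul_distrib, Finset.prod_const, card_univ, Fintype.card_fin]
  linear_combination (1 - w) * (∏ i : Fin j, (v j - (-1) ^ (i + j : ℕ) * v i)) * hrow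

end Determinants

section Products

theorem prod_range_half_reflect {M : Type*} [CommMonoid M] (f : ℕ → M) (j : ℕ) :
    ∏ a ∈ range ((j + 1) / 2), f (j - 1 - a) = ∏ e ∈ Ico (j / 2) j, f e := by
  rw [Finset.prod_Ico_eq_prod_range, show j - j / 2 = (j + 1) / 2 by omega,
    ← Finset.prod_range_reflect]
  refine Finset.prod_congr rfl fun a ha => ?_
  have ha := mem_range.1 ha
  rw [show j - 1 - ((j + 1) / 2 - 1 - a) = j / 2 + a by omega]

theorem prod_range_prod_Ico_half {M : Type*} [CommMonoid M] (f : ℕ → M) (n : ℕ) :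
    ∏ j ∈ range n, ∏ e ∈ Ico (j / 2) j, f e =
      ∏ l ∈ range (n / 2), ∏ e ∈ Ico l (n - 1 - l), f e := by
  rw [Finset.prod_sigma', Finset.prod_sigma']
  refine Finset.prod_nbij' (fun p => ⟨p.1 - 1 - p.2, p.2⟩) (fun p => ⟨p.1 + p.2 + 1, p.2⟩)
    ?_ ?_ ?_ ?_ fun _ _ => rfl
  all_goals
    rintro ⟨a, e⟩ h
    simp only [mem_sigma, mem_range, mem_Ico, Sigma.mk.injEq, heq_eq_eq, and_true] at h ⊢
    omega

theorem prod_range_prod_Ico_two_mul {M : Type*} [CommMonoid M] (f : ℕ → M) (m : ℕ) :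
    ∏ b ∈ range m, ∏ e ∈ Ico b (2 * b + 1), f e =
      ∏ l ∈ range ((m + 1) / 2), ∏ e ∈ Ico (2 * l) (2 * m - 1 - 2 * l), f e := by
  rw [Finset.prod_sigma', Finset.prod_sigma']
  refine Finset.prod_nbij' (fun p => ⟨p.1 - (p.2 + 1) / 2, p.2⟩)
    (fun p => ⟨(p.2 + 1) / 2 + p.1, p.2⟩) ?_ ?_ ?_ ?_ fun _ _ => rfl
  all_goals
    rintro ⟨a, e⟩ h
    simp only [mem_sigma, mem_range, mem_Ico, Sigma.mk.injEq, heq_eq_eq, and_true] at h ⊢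
    omega

variable {R : Type*} [CommRing R]

theorem ascPochhammer_eval_add_natCast (z : R) (a m : ℕ) :
    (ascPochhammer R m).eval (z + a) = ∏ e ∈ Ico a (a + m), (z + e) := by
  induction m with
  | zero => simp
  | succ m ih =>
    rw [ascPochhammer_succ_eval, ih, ← add_assoc, Finset.prod_Ico_succ_top (Nat.le_add_right a m)]
    push_cast
    ring

/-- The product `∏_{b < m} (z + b)_{b + 1}` of rising factorials, which is the form taken by the
Vandermonde products over the squares of the nodes `z, z + 2, z + 4, …`. -/
def risingTriangle (z : R) (m : ℕ) : R :=
  ∏ b ∈ range m, ∏ e ∈ Ico b (2 * b + 1), (z + e)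

theorem risingTriangle_eq_prod_ascPochhammer (z : R) (m : ℕ) :
    risingTriangle z m = ∏ b ∈ range m, (ascPochhammer R (b + 1)).eval (z + b) :=
  Finset.prod_congr rfl fun b _ => by
    rw [ascPochhammer_eval_add_natCast, two_mul, add_assoc]

theorem risingTriangle_eq_prod_ascPochhammer_two_mul (z : R) (m : ℕ) :
    risingTriangle z m =
      ∏ l ∈ range ((m + 1) / 2), (ascPochhammer R (2 * m - 1 - 4 * l)).eval (z + 2 * l) := by
  rw [risingTriangle, prod_range_prod_Ico_two_mul]
  refine Finset.prod_congr rfl fun l hl => ?_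
  have hl := mem_range.1 hl
  rw [show (2 * l : R) = (2 * l : ℕ) by push_cast; rfl, ascPochhammer_eval_add_natCast,
    show 2 * l + (2 * m - 1 - 4 * l) = 2 * m - 1 - 2 * l by omega]

theorem risingTriangle_add_one (z : R) (m : ℕ) :
    risingTriangle (z + 1) (m - 1) = ∏ a ∈ range m, ∏ e ∈ Ico a (2 * a), (z + e) := by
  rcases m with _ | m
  · simp [risingTriangle]
  · rw [Finset.prod_range_succ', mul_zero, Ico_self, Finset.prod_empty, mul_one,
      Nat.add_sub_cancel, risingTriangle]
    refine Finset.prod_congr rfl fun b _ => ?_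
    rw [show 2 * (b + 1) = 2 * b + 1 + 1 by ring, ← Finset.prod_Ico_add']
    push_cast
    exact Finset.prod_congr rfl fun e _ => by ring

theorem prod_range_sq_sub_sq (z : R) (a : ℕ) :
    ∏ l ∈ range a, ((z + (2 * a : ℕ)) ^ 2 - (z + (2 * l : ℕ)) ^ 2) =
      4 ^ a * a.factorial * ∏ e ∈ Ico a (2 * a), (z + e) := by
  have hfactorial : ∏ l ∈ range a, ((a - l : ℕ) : R) = a.factorial := by
    rw [← Nat.cast_prod, ← Nat.descFactorial_eq_prod_range, Nat.descFactorial_self]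
  rw [Finset.prod_Ico_eq_prod_range, show 2 * a - a = a by omega, ← hfactorial, ← card_range a,
    ← Finset.prod_const, card_range, ← Finset.prod_mul_distrib, ← Finset.prod_mul_distrib]
  refine Finset.prod_congr rfl fun l hl => ?_
  rw [Nat.cast_sub (mem_range.1 hl).le]
  push_cast
  ring

theorem prod_range_prod_range_sq_sub_sq (z : R) (m : ℕ) :
    ∏ a ∈ range m, ∏ l ∈ range a, ((z + (2 * a : ℕ)) ^ 2 - (z + (2 * l : ℕ)) ^ 2) =
      (∏ a ∈ range m, (4 ^ a * a.factorial : R)) * risingTriangle (z + 1) (m - 1) := by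
  simp only [prod_range_sq_sub_sq, Finset.prod_mul_distrib, risingTriangle_add_one]

theorem prod_range_mul_prod_range_sq_sub_sq (z : R) (m : ℕ) :
    ∏ a ∈ range m, (z + (2 * a : ℕ)) *
        ∏ l ∈ range a, ((z + (2 * a : ℕ)) ^ 2 - (z + (2 * l : ℕ)) ^ 2) =
      (∏ a ∈ range m, (4 ^ a * a.factorial : R)) * risingTriangle z m := by
  rw [risingTriangle, ← Finset.prod_mul_distrib]
  refine Finset.prod_congr rfl fun a _ => ?_
  rw [prod_range_sq_sub_sq, Finset.prod_Ico_succ_top (by omega)]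
  ring

theorem prod_range_sub_neg_one_pow_mul {s z : R} (h : 2 * s = 2 * z - 1) (j : ℕ) :
    ∏ i ∈ range j, (s + j - (-1) ^ (i + j) * (s + i)) =
      2 ^ j * (j / 2).factorial * ∏ e ∈ Ico (j / 2) j, (z + e) := by
  have hsum (a : ℕ) (ha : a ∈ range ((j + 1) / 2)) :
      s + j - (-1) ^ (j - 1 - 2 * a + j) * (s + (j - 1 - 2 * a : ℕ)) =
        2 * (z + (j - 1 - a : ℕ)) := by
    have ha := mem_range.1 ha
    obtain ⟨b, rfl⟩ : ∃ b, j = 2 * a + 1 + b := ⟨j - 1 - 2 * a, by omega⟩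
    rw [show 2 * a + 1 + b - 1 - 2 * a = b by omega,
      show 2 * a + 1 + b - 1 - a = a + b by omega, Odd.neg_one_pow (by grind)]
    push_cast
    linear_combination h
  have hdiff (a : ℕ) (ha : a ∈ range (j / 2)) :
      s + j - (-1) ^ (j - 1 - (2 * a + 1) + j) * (s + (j - 1 - (2 * a + 1) : ℕ)) =
        2 * ((a + 1 : ℕ) : R) := by
    have ha := mem_range.1 ha
    obtain ⟨b, rfl⟩ : ∃ b, j = 2 * a + 2 + b := ⟨j - 2 * a - 2, by omega⟩
    rw [show 2 * a + 2 + b - 1 - (2 * a + 1) = b by omega, Even.neg_one_pow (by grind)]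
    push_cast
    ring
  have hfactorial : ∏ a ∈ range (j / 2), ((a + 1 : ℕ) : R) = (j / 2).factorial := by
    rw [← Nat.cast_prod, Finset.prod_range_add_one_eq_factorial]
  rw [← Finset.prod_range_reflect, ← prod_range_even_mul_odd, Finset.prod_congr rfl hsum,
    Finset.prod_congr rfl hdiff, Finset.prod_mul_distrib, Finset.prod_mul_distrib,
    prod_range_half_reflect fun e => z + (e : R), hfactorial, Finset.prod_const,
    Finset.prod_const, card_range, card_range]
  have hpow : (2 : R) ^ j = 2 ^ ((j + 1) / 2) * 2 ^ (j / 2) := by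
    rw [← pow_add, show (j + 1) / 2 + j / 2 = j by omega]
  rw [hpow]
  ring

end Products

section ArithmeticNodes

variable {R : Type*} [CommRing R]

theorem prod_four_pow_mul_factorial_mul_prod (n : ℕ) :
    (∏ a ∈ range ((n + 1) / 2), (4 ^ a * a.factorial : R)) *
        ∏ a ∈ range (n / 2), (4 ^ a * a.factorial : R) =
      ∏ l ∈ range n, (4 ^ (l / 2) * (l / 2).factorial : R) := by
  rw [← prod_range_even_mul_odd (fun l => (4 ^ (l / 2) * (l / 2).factorial : R))]
  simp only [Nat.mul_div_right, Nat.mul_add_div, Nat.succ_pos, Nat.reduceDiv, add_zero]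

theorem prod_two_pow_mul_factorial (n : ℕ) :
    ∏ j ∈ range n, (2 ^ j * (j / 2).factorial : R) =
      2 ^ (n / 2) * ∏ l ∈ range n, (4 ^ (l / 2) * (l / 2).factorial : R) := by
  rw [← prod_four_pow_mul_factorial_mul_prod, ← prod_range_even_mul_odd, mul_left_comm]
  simp only [Nat.mul_div_right, Nat.mul_add_div, Nat.succ_pos, Nat.reduceDiv, add_zero, pow_succ',
    pow_mul, mul_assoc, Finset.prod_mul_distrib (f := fun _ => (2 : R)), Finset.prod_const,
    card_range]
  norm_num

theorem det_signedVandermonde_one_of_odd [IsDomain R] [CharZero R] {n : ℕ} (hn : Odd n)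
    (v : ℕ → R) : (signedVandermonde n 1 v).det = 0 := by
  have h := det_signedVandermonde_of_mul_eq_one (one_mul (1 : R)) n v
  rw [hn.neg_one_pow, neg_one_mul] at h
  exact self_eq_neg.1 h

theorem det_signedVandermonde_one_add_natCast (s : R) (m : ℕ) :
    (signedVandermonde (m * 2) 1 fun j => s + j).det =
      (-4) ^ m * (∏ l ∈ range (m * 2), (4 ^ (l / 2) * (l / 2).factorial : R)) *
        risingTriangle (s + 2) (m - 1) * risingTriangle s m := by
  have hodd (a : ℕ) : s + ((2 * a + 1 : ℕ) : R) = s + 1 + (2 * a : ℕ) := by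
    push_cast
    ring
  rw [det_signedVandermonde_one_mul_two, prod_range_mul_prod_range_sq_sub_sq]
  simp only [hodd]
  rw [prod_range_prod_range_sq_sub_sq, add_assoc s, one_add_one_eq_two,
    ← prod_four_pow_mul_factorial_mul_prod, show (m * 2 + 1) / 2 = m by omega,
    show m * 2 / 2 = m by omega]
  ring

theorem det_signedVandermonde_neg_one_add_natCast (s : R) (n : ℕ) :
    (signedVandermonde n (-1) fun j => s + j).det =
      2 ^ n * (∏ l ∈ range n, (4 ^ (l / 2) * (l / 2).factorial : R)) *
        risingTriangle (s + 1) (n / 2) * risingTriangle (s + 1) ((n - 1) / 2) := by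
  have hodd (a : ℕ) : s + ((2 * a + 1 : ℕ) : R) = s + 1 + (2 * a : ℕ) := by
    push_cast
    ring
  rw [det_signedVandermonde_neg_one, prod_range_prod_range_sq_sub_sq,
    ← prod_four_pow_mul_factorial_mul_prod]
  simp only [hodd]
  rw [prod_range_mul_prod_range_sq_sub_sq, show (n + 1) / 2 - 1 = (n - 1) / 2 by omega]
  ring

theorem det_signedVandermonde_add_natCast_of_sq_eq_neg_one {w s z : R} (hw : w ^ 2 = -1)
    (hz : 2 * s = 2 * z - 1) (n : ℕ) :
    (signedVandermonde n w fun j => s + j).det = (1 - w) ^ n * 2 ^ (n / 2) *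
      (∏ l ∈ range n, (4 ^ (l / 2) * (l / 2).factorial : R)) *
        ∏ l ∈ range (n / 2), (ascPochhammer R (n - 1 - 2 * l)).eval (z + l) := by
  have hinterval (l : ℕ) (hl : l ∈ range (n / 2)) :
      (ascPochhammer R (n - 1 - 2 * l)).eval (z + l) = ∏ e ∈ Ico l (n - 1 - l), (z + e) := by
    have hl := mem_range.1 hl
    rw [ascPochhammer_eval_add_natCast, show l + (n - 1 - 2 * l) = n - 1 - l by omega]
  rw [det_signedVandermonde_of_sq_eq_neg_one hw]
  simp only [prod_range_sub_neg_one_pow_mul hz]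
  rw [Finset.prod_mul_distrib, Finset.prod_mul_distrib, Finset.prod_const, card_range,
    prod_two_pow_mul_factorial, prod_range_prod_Ico_half, Finset.prod_congr rfl hinterval]
  ring

end ArithmeticNodes

section Reduction

variable {K : Type*} [Field K]

theorem one_add_mul_aF {q : K} (hq : q ≠ 0) (m : ℤ) : (1 + q) * aF K q m = 1 - (-q) ^ m := by
  have hq' : -q ≠ 0 := neg_ne_zero.2 hq
  rw [aF]
  split_ifs with hm
  · rw [show 1 + q = 1 - -q by ring, mul_neg_geom_sum, ← zpow_natCast, Int.toNat_of_nonneg hm.le]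
  · obtain ⟨d, rfl⟩ : ∃ d : ℕ, m = -d := ⟨(-m).toNat, by omega⟩
    rw [neg_neg, Int.toNat_natCast]
    clear hm
    induction d with
    | zero => simp
    | succ d ih =>
      have hstep : (-q) ^ (-(d : ℤ)) = (-q) ^ (-(d + 1 : ℤ)) * -q := by
        rw [← zpow_add_one₀ hq']
        congr 1
        ring
      rw [hstep] at ih
      rw [Finset.sum_range_succ, neg_add, mul_add, ih]
      push_cast
      ring

theorem natDegree_sub_natCast_le {p : K[X]} (hp : p.natDegree ≤ 1) (t : ℕ) :
    (p - (t : K[X])).natDegree ≤ 1 :=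
  (natDegree_sub_le _ _).trans (max_le hp (by simp))

theorem natDegree_binomP_le {p : K[X]} (hp : p.natDegree ≤ 1) (m : ℕ) :
    (binomP K p m).natDegree ≤ m := by
  refine (natDegree_C_mul_le _ _).trans ((natDegree_prod_le _ _).trans ?_)
  exact (Finset.sum_le_card_nsmul _ _ 1 fun t _ => natDegree_sub_natCast_le hp t).trans (by simp)

theorem coeff_binomP {p : K[X]} (hp : p.natDegree ≤ 1) (m : ℕ) :
    (binomP K p m).coeff m = (m.factorial : K)⁻¹ * p.coeff 1 ^ m := by
  have h := coeff_prod_of_natDegree_le (range m) (fun t : ℕ => p - (t : K[X])) 1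
    fun t _ => natDegree_sub_natCast_le hp t
  rw [card_range, mul_one] at h
  simp [binomP, h, coeff_natCast_ite]

/-- The Meixner–Pollaczek type polynomial whose value at `y` is the coefficient of `Tʲ` in
`(1 - T) ^ (c - y) * (1 - w T) ^ (c + y)`. -/
def meixnerPollaczek (w c : K) (j : ℕ) : K[X] :=
  ∑ m ∈ antidiagonal j,
    C ((-1) ^ m.1 * (-w) ^ m.2) * (binomP K (C c - X) m.1 * binomP K (C c + X) m.2)

theorem natDegree_meixnerPollaczek_le (w c : K) (j : ℕ) :
    (meixnerPollaczek w c j).natDegree ≤ j := by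
  refine natDegree_sum_le_of_forall_le _ _ fun m hm => ?_
  rw [← mem_antidiagonal.1 hm]
  refine (natDegree_C_mul_le _ _).trans (natDegree_mul_le_of_le ?_ ?_)
  · exact natDegree_binomP_le (by compute_degree) _
  · exact natDegree_binomP_le (by compute_degree) _

variable [CharZero K]

theorem eval_binomP (p : K[X]) (m : ℕ) (y : K) :
    (binomP K p m).eval y = Ring.choose (p.eval y) m := by
  rw [Ring.choose_eq_smul, ← aeval_eq_smeval, aeval_def, eval₂_eq_eval_map,
    descPochhammer_map, descPochhammer_eval_eq_prod_range, binomP, eval_mul, eval_C, eval_prod,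
    smul_eq_mul]
  simp

/-- The power series `(1 - a X) ^ c` for an arbitrary exponent `c`. -/
def oneSubPow (a c : K) : PowerSeries K :=
  PowerSeries.rescale (-a) (PowerSeries.binomialSeries K c)

theorem coeff_oneSubPow (a c : K) (m : ℕ) :
    PowerSeries.coeff m (oneSubPow a c) = (-a) ^ m * Ring.choose c m := by
  rw [oneSubPow, PowerSeries.coeff_rescale, PowerSeries.binomialSeries_coeff, smul_eq_mul, mul_one]

theorem oneSubPow_add (a c d : K) : oneSubPow a (c + d) = oneSubPow a c * oneSubPow a d := by
  rw [oneSubPow, PowerSeries.binomialSeries_add, map_mul]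
  rfl

theorem oneSubPow_natCast (a : K) (m : ℕ) :
    oneSubPow a m = (1 - PowerSeries.C a * PowerSeries.X) ^ m := by
  rw [oneSubPow, PowerSeries.binomialSeries_nat, map_pow, map_add, map_one, PowerSeries.rescale_X,
    map_neg, neg_mul, sub_eq_add_neg]

theorem eval_meixnerPollaczek (w c : K) (j : ℕ) (y : K) :
    (meixnerPollaczek w c j).eval y =
      PowerSeries.coeff j (oneSubPow 1 (c - y) * oneSubPow w (c + y)) := by
  rw [PowerSeries.coeff_mul, meixnerPollaczek, eval_finsetSum]
  refine Finset.sum_congr rfl fun m _ => ?_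
  simp only [eval_mul, eval_C, eval_binomP, eval_sub, eval_add, eval_X, coeff_oneSubPow]
  ring

theorem coeff_meixnerPollaczek (w c : K) (j : ℕ) :
    (meixnerPollaczek w c j).coeff j = (j.factorial : K)⁻¹ * (1 - w) ^ j := by
  rw [sub_eq_add_neg, (Commute.all 1 (-w)).add_pow', Finset.mul_sum, meixnerPollaczek,
    finsetSum_coeff]
  refine Finset.sum_congr rfl fun m hm => ?_
  rw [← mem_antidiagonal.1 hm, coeff_C_mul, coeff_mul_add_eq_of_natDegree_le
    (natDegree_binomP_le (by compute_degree) _) (natDegree_binomP_le (by compute_degree) _),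
    coeff_binomP (by compute_degree), coeff_binomP (by compute_degree)]
  have hsq : (-1 : K) ^ m.1 * (-1) ^ m.1 = 1 := pow_mul_pow_eq_one _ (by norm_num)
  rw [Nat.choose_symm_add, Nat.add_choose, nsmul_eq_mul,
    Nat.cast_div (Nat.factorial_mul_factorial_dvd_factorial_add _ _)
      (by simp [Nat.factorial_ne_zero])]
  have hfactorial : ((m.1 + m.2).factorial : K) ≠ 0 := Nat.cast_ne_zero.2 (Nat.factorial_ne_zero _)
  simp only [coeff_sub, coeff_add, coeff_C_succ, coeff_X_one, zero_sub, zero_add, one_pow]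
  push_cast
  rw [← mul_assoc _ (_ / _), div_eq_mul_inv, inv_mul_cancel_left₀ hfactorial, mul_inv]
  linear_combination (-w) ^ m.2 * (m.1.factorial : K)⁻¹ * (m.2.factorial : K)⁻¹ * hsq

theorem oneSubPow_sub_natCast (a c : K) {l i : ℕ} (hl : l ≤ i) :
    oneSubPow a (c - l) =
      oneSubPow a (c - i) * (1 - PowerSeries.C a * PowerSeries.X) ^ (i - l) := by
  rw [← oneSubPow_natCast, ← oneSubPow_add, Nat.cast_sub hl]
  ring_nf

theorem sum_choose_mul_oneSubPow {w : K} (hw : w ^ 2 = -1) (c ε : K) (i : ℕ) :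
    ∑ l ∈ range (i + 1), PowerSeries.C (i.choose l * (-w) ^ (i - l)) *
        (oneSubPow 1 (c - l) * oneSubPow w (l : K) -
          PowerSeries.C ((-1) ^ l * ε) * (oneSubPow 1 (l : K) * oneSubPow w (c - l))) =
      PowerSeries.C ((1 - w) ^ i) *
        (oneSubPow 1 (c - i) - PowerSeries.C (ε * (-w) ^ i) * oneSubPow w (c - i)) := by
  set ι := PowerSeries.C (R := K) with hι
  set A : PowerSeries K := 1 - ι 1 * PowerSeries.X with hA
  set B : PowerSeries K := 1 - ι w * PowerSeries.X with hB
  have hιw : ι w ^ 2 = -1 := by rw [← map_pow, hw, map_neg, map_one]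
  have hfirst : (B + ι (-w) * A) ^ i = ι ((1 - w) ^ i) := by
    rw [map_pow]
    congr 1
    simp only [hA, hB, map_neg, map_sub, map_one]
    ring
  have hsecond : (-A + ι (-w) * B) ^ i = ι ((-w) ^ i * (1 - w) ^ i) := by
    rw [← mul_pow, map_pow]
    congr 1
    simp only [hA, hB, map_mul, map_neg, map_sub, map_one]
    linear_combination (PowerSeries.X - 1) * hιw
  calc _ = (B + ι (-w) * A) ^ i * oneSubPow 1 (c - i) -
        ι ε * (-A + ι (-w) * B) ^ i * oneSubPow w (c - i) := by
        rw [add_pow, add_pow, Finset.mul_sum, Finset.sum_mul, Finset.sum_mul,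
          ← Finset.sum_sub_distrib]
        refine Finset.sum_congr rfl fun l hl => ?_
        have hl : l ≤ i := Nat.lt_succ_iff.1 (mem_range.1 hl)
        rw [oneSubPow_sub_natCast 1 c hl, oneSubPow_sub_natCast w c hl, oneSubPow_natCast,
          oneSubPow_natCast, ← hι, ← hA, ← hB]
        simp only [map_mul, map_pow, map_neg, map_one, map_natCast, mul_pow, neg_pow A]
        ring
    _ = _ := by
        rw [hfirst, hsecond]
        simp only [map_mul]
        ring

theorem one_sub_ne_zero_of_sq_eq_neg_one {w : K} (hw : w ^ 2 = -1) : 1 - w ≠ 0 := fun h => by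
  rw [← sub_eq_zero.1 h] at hw
  norm_num at hw

theorem sum_choose_mul_signedEval_meixnerPollaczek {w : K} (hw : w ^ 2 = -1) (x ε : K)
    (i j : ℕ) :
    ∑ l ∈ range (i + 1), i.choose l * (-w) ^ (i - l) *
        signedEval ε (fun l => x / 2 + 1 / 2 + l) l (meixnerPollaczek w (-(x + 1) / 2) j) =
      (1 - w) ^ i * PowerSeries.coeff j (oneSubPow 1 (-(x + 1) - i) -
        PowerSeries.C (ε * (-w) ^ i) * oneSubPow w (-(x + 1) - i)) := by
  rw [← PowerSeries.coeff_C_mul, ← sum_choose_mul_oneSubPow hw, map_sum]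
  refine Finset.sum_congr rfl fun l _ => ?_
  rw [PowerSeries.coeff_C_mul, map_sub, PowerSeries.coeff_C_mul, signedEval_apply,
    eval_meixnerPollaczek, eval_meixnerPollaczek]
  ring_nf

theorem prod_factorial_mul_det_oneSubPow {w : K} (hw : w ^ 2 = -1) (n : ℕ) (x ε : K) :
    (∏ r ∈ range n, (r.factorial : K)) * (Matrix.of fun i j : Fin n =>
      PowerSeries.coeff j (oneSubPow 1 (-(x + 1) - (i : ℕ)) -
        PowerSeries.C (ε * (-w) ^ (i : ℕ)) * oneSubPow w (-(x + 1) - (i : ℕ)))).det =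
      (signedVandermonde n ε fun j => x / 2 + 1 / 2 + j).det := by
  have hrows := det_binomial_transform n (-w) fun l j =>
    signedEval ε (fun l => x / 2 + 1 / 2 + l) l (meixnerPollaczek w (-(x + 1) / 2) j)
  rw [det_linearMap_polynomial n _ _ (natDegree_meixnerPollaczek_le w _),
    ← signedVandermonde_eq_signedEval] at hrows
  simp only [sum_choose_mul_signedEval_meixnerPollaczek hw, coeff_meixnerPollaczek] at hrows
  have hscale := Matrix.det_mul_column (fun i : Fin n => (1 - w) ^ (i : ℕ))
    (Matrix.of fun i j : Fin n => PowerSeries.coeff j (oneSubPow 1 (-(x + 1) - (i : ℕ)) -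
      PowerSeries.C (ε * (-w) ^ (i : ℕ)) * oneSubPow w (-(x + 1) - (i : ℕ))))
  simp only [Matrix.of_apply] at hscale
  rw [hscale, Finset.prod_mul_distrib, Finset.prod_inv_distrib,
    Fin.prod_univ_eq_prod_range (fun i => (1 - w) ^ i) n] at hrows
  have hfactorial : ∏ r ∈ range n, (r.factorial : K) ≠ 0 :=
    Finset.prod_ne_zero_iff.2 fun r _ => Nat.cast_ne_zero.2 r.factorial_ne_zero
  have hpow : ∏ r ∈ range n, (1 - w) ^ r ≠ 0 :=
    Finset.prod_ne_zero_iff.2 fun r _ => pow_ne_zero r (one_sub_ne_zero_of_sq_eq_neg_one hw)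
  refine mul_left_cancel₀ hpow ?_
  rw [mul_left_comm, hrows, mul_assoc, mul_inv_cancel_left₀ hfactorial]

theorem one_add_mul_eval_binomP_mul_aF {q : K} (hq : q ^ 2 = -1) (x : K) (k : ℤ) (i j : ℕ) :
    (1 + q) * (binomP K (X + (i : K[X]) + (j : K[X])) j * C (aF K q (j - i + k))).eval x =
      PowerSeries.coeff j (oneSubPow 1 (-(x + 1) - i) -
        PowerSeries.C ((-q) ^ k * q ^ i) * oneSubPow (-q) (-(x + 1) - i)) := by
  have hinv : q * -q = 1 := by linear_combination -hq
  have hq0 : q ≠ 0 := left_ne_zero_of_mul_eq_one hinv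
  have hpow : (-q) ^ (j - i + k : ℤ) = (-q) ^ k * q ^ i * (-q) ^ j := by
    rw [zpow_add₀ (neg_ne_zero.2 hq0), zpow_sub₀ (neg_ne_zero.2 hq0), zpow_natCast, zpow_natCast,
      div_eq_mul_inv, ← inv_pow, ← eq_inv_of_mul_eq_one_left hinv]
    ring
  have hchoose : Ring.choose (-(x + 1) - i) j = (-1) ^ j * Ring.choose (x + i + j) j := by
    rw [show -(x + 1) - i = -(x + 1 + i) by ring, Ring.choose_neg,
      show x + 1 + i + j - 1 = x + i + j by ring, Int.negOnePow_def, Units.smul_def]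
    simp
  have hsq : (-1 : K) ^ j * (-1) ^ j = 1 := pow_mul_pow_eq_one _ (by norm_num)
  rw [map_sub, PowerSeries.coeff_C_mul, coeff_oneSubPow, coeff_oneSubPow, hchoose, eval_mul,
    eval_C, eval_binomP, mul_left_comm, one_add_mul_aF hq0, hpow, neg_neg, neg_pow q]
  simp only [eval_add, eval_X, eval_natCast]
  linear_combination -Ring.choose (x + i + j) j * hsq

theorem eval_dF_eq_det_signedVandermonde {q : K} (hq : q ^ 2 = -1) (n : ℕ) (k : ℤ) (x : K) :
    (1 + q) ^ n * (∏ r ∈ range n, (r.factorial : K)) * (dF K n k q).eval x =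
      (signedVandermonde n ((-q) ^ k) fun j => x / 2 + 1 / 2 + j).det := by
  have hscale := Matrix.det_smul ((evalRingHom x).mapMatrix (Matrix.of fun i j : Fin n =>
    binomP K (X + ((i : ℕ) : K[X]) + ((j : ℕ) : K[X])) j * C (aF K q (j - i + k)))) (1 + q)
  rw [Fintype.card_fin, ← RingHom.map_det] at hscale
  rw [← prod_factorial_mul_det_oneSubPow ((neg_sq q).trans hq) n x, mul_comm ((1 + q) ^ n),
    mul_assoc, neg_neg]
  refine congrArg _ (hscale.symm.trans (congrArg Matrix.det (Matrix.ext fun i j => ?_)))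
  exact one_add_mul_eval_binomP_mul_aF hq x k i j

end Reduction

section ClosedForms

variable {K : Type*} [Field K]

/-- The constant `∏_{l < n} 4 ^ ⌊l/2⌋ ⌊l/2⌋! / l!` common to all the evaluations. -/
def factorialRatio (K : Type*) [Field K] (n : ℕ) : K :=
  ∏ l ∈ range n, 4 ^ (l / 2) * ((l / 2).factorial : K) / (l.factorial : K)

/-- The rising factorial `(x/2 + a)_m` as a polynomial in `x`. -/
def halfPochhammer (a : K) (m : ℕ) : K[X] :=
  (ascPochhammer K m).comp (C 2⁻¹ * X + C a)

theorem eval_halfPochhammer (a : K) (m : ℕ) (x : K) :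
    (halfPochhammer a m).eval x = (ascPochhammer K m).eval (x / 2 + a) := by
  simp only [halfPochhammer, eval_comp, eval_add, eval_mul, eval_C, eval_X, div_eq_inv_mul]

theorem neg_zpow_four_mul_add {q : K} (hq : q ^ 2 = -1) (k : ℤ) (s : ℕ) :
    (-q) ^ (4 * k + s) = (-q) ^ s := by
  have hfour : (-q) ^ (4 : ℤ) = 1 := by
    rw [show (4 : ℤ) = (4 : ℕ) by rfl, zpow_natCast]
    linear_combination (q ^ 2 - 1) * hq
  have hq0 : q ≠ 0 := by
    rintro rfl
    norm_num at hq
  rw [zpow_add₀ (neg_ne_zero.2 hq0), zpow_mul, hfour, one_zpow, one_mul, zpow_natCast]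

variable [CharZero K]

theorem prod_factorial_mul_factorialRatio (n : ℕ) :
    (∏ r ∈ range n, (r.factorial : K)) * factorialRatio K n =
      ∏ l ∈ range n, (4 ^ (l / 2) * (l / 2).factorial : K) := by
  rw [factorialRatio, ← Finset.prod_mul_distrib]
  exact Finset.prod_congr rfl fun l _ =>
    mul_div_cancel₀ _ (Nat.cast_ne_zero.2 l.factorial_ne_zero)

variable {q : K} {k : ℤ}

theorem one_add_pow_mul_prod_factorial_ne_zero (hq : q ^ 2 = -1) (n : ℕ) :
    (1 + q) ^ n * ∏ r ∈ range n, (r.factorial : K) ≠ 0 := by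
  refine mul_ne_zero (pow_ne_zero n ?_)
    (Finset.prod_ne_zero_iff.2 fun r _ => Nat.cast_ne_zero.2 r.factorial_ne_zero)
  simpa using one_sub_ne_zero_of_sq_eq_neg_one ((neg_sq q).trans hq)

theorem dF_eq_of_eval_eq (hq : q ^ 2 = -1) {n : ℕ} {P : K[X]}
    (h : ∀ x, (signedVandermonde n ((-q) ^ k) fun j => x / 2 + 1 / 2 + j).det =
      (1 + q) ^ n * (∏ l ∈ range n, (4 ^ (l / 2) * (l / 2).factorial : K)) * P.eval x) :
    dF K n k q = C (factorialRatio K n) * P := by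
  refine Polynomial.funext fun x =>
    mul_left_cancel₀ (one_add_pow_mul_prod_factorial_ne_zero hq n) ?_
  rw [eval_dF_eq_det_signedVandermonde hq, h, ← prod_factorial_mul_factorialRatio, eval_mul, eval_C]
  ring

theorem dF_of_odd_of_zpow_eq_one (hq : q ^ 2 = -1) (hk : (-q) ^ k = 1) {n : ℕ} (hn : Odd n) :
    dF K n k q = 0 := by
  rw [dF_eq_of_eval_eq (P := 0) hq fun x => ?_, mul_zero]
  rw [hk, det_signedVandermonde_one_of_odd hn, eval_zero, mul_zero]

theorem dF_two_mul_of_zpow_eq_one (hq : q ^ 2 = -1) (hk : (-q) ^ k = 1) (n : ℕ) :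
    dF K (2 * n) k q = C (factorialRatio K (2 * n)) * (C (2 ^ n * q ^ n) *
      (∏ l ∈ range (n / 2), halfPochhammer (2 * ((l : K) + 1) + 1 / 2) (2 * n - 3 - 4 * l)) *
      ∏ l ∈ range ((n + 1) / 2), halfPochhammer (2 * (l : K) + 1 / 2) (2 * n - 1 - 4 * l)) := by
  refine dF_eq_of_eval_eq hq fun x => ?_
  have hshort : ∏ l ∈ range (n / 2),
      (halfPochhammer (2 * ((l : K) + 1) + 1 / 2) (2 * n - 3 - 4 * l)).eval x =
        risingTriangle (x / 2 + 1 / 2 + 2) (n - 1) := by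
    rw [risingTriangle_eq_prod_ascPochhammer_two_mul]
    refine Finset.prod_congr (congrArg range (by omega)) fun l _ => ?_
    rw [eval_halfPochhammer, show 2 * (n - 1) - 1 - 4 * l = 2 * n - 3 - 4 * l by omega]
    ring_nf
  have hlong : ∏ l ∈ range ((n + 1) / 2),
      (halfPochhammer (2 * (l : K) + 1 / 2) (2 * n - 1 - 4 * l)).eval x =
        risingTriangle (x / 2 + 1 / 2) n := by
    rw [risingTriangle_eq_prod_ascPochhammer_two_mul]
    refine Finset.prod_congr rfl fun l _ => ?_
    rw [eval_halfPochhammer]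
    ring_nf
  have hpow : (1 + q) ^ (2 * n) * (2 ^ n * q ^ n) = (-4) ^ n := by
    rw [pow_mul, ← mul_pow, ← mul_pow]
    congr 1
    linear_combination (2 * q + 4) * hq
  rw [hk, mul_comm 2 n, det_signedVandermonde_one_add_natCast, mul_comm n 2, ← hpow]
  simp only [eval_mul, eval_C, eval_prod]
  rw [hshort, hlong]
  ring

theorem dF_of_zpow_eq_neg (hq : q ^ 2 = -1) (hk : (-q) ^ k = -q) (n : ℕ) :
    dF K n k q = C (factorialRatio K n) *
      (C (2 ^ (n / 2)) * ∏ l ∈ range (n / 2), halfPochhammer ((l : K) + 1) (n - 1 - 2 * l)) := by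
  refine dF_eq_of_eval_eq hq fun x => ?_
  rw [hk, det_signedVandermonde_add_natCast_of_sq_eq_neg_one ((neg_sq q).trans hq)
    (show 2 * (x / 2 + 1 / 2) = 2 * (x / 2 + 1) - 1 by ring)]
  simp only [eval_mul, eval_C, eval_prod, eval_halfPochhammer, add_assoc, add_comm (1 : K),
    sub_neg_eq_add]
  ring

theorem dF_of_zpow_eq_neg_one (hq : q ^ 2 = -1) (hk : (-q) ^ k = -1) (n : ℕ) :
    dF K n k q = C (factorialRatio K n) * (C ((1 - q) ^ n) *
      (∏ l ∈ range (n / 2), halfPochhammer ((l : K) + 3 / 2) (l + 1)) *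
      ∏ l ∈ range ((n - 1) / 2), halfPochhammer ((l : K) + 3 / 2) (l + 1)) := by
  refine dF_eq_of_eval_eq hq fun x => ?_
  have htriangle (m : ℕ) : ∏ l ∈ range m, (halfPochhammer ((l : K) + 3 / 2) (l + 1)).eval x =
      risingTriangle (x / 2 + 1 / 2 + 1) m := by
    rw [risingTriangle_eq_prod_ascPochhammer]
    refine Finset.prod_congr rfl fun l _ => ?_
    rw [eval_halfPochhammer]
    ring_nf
  have hpow : (1 + q) ^ n * (1 - q) ^ n = 2 ^ n := by
    rw [← mul_pow]
    congr 1
    linear_combination -hq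
  rw [hk, det_signedVandermonde_neg_one_add_natCast, ← hpow]
  simp only [eval_mul, eval_C, eval_prod, htriangle]
  ring

theorem dF_of_zpow_eq_self (hq : q ^ 2 = -1) {k' : ℤ} (hk' : (-q) ^ k' = q) (hk : (-q) ^ k = -q)
    (n : ℕ) : dF K n k' q = C ((-q) ^ n) * dF K n k q := by
  refine Polynomial.funext fun x =>
    mul_left_cancel₀ (one_add_pow_mul_prod_factorial_ne_zero hq n) ?_
  rw [eval_mul, eval_C, mul_left_comm, eval_dF_eq_det_signedVandermonde hq,
    eval_dF_eq_det_signedVandermonde hq, hk, hk']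
  exact det_signedVandermonde_of_mul_eq_one (by linear_combination -hq) n _

theorem statement13_general (hq : q ^ 2 = -1) (k : ℤ) (n : ℕ) :
    (dF K (2 * n + 1) (4 * k) q = 0) ∧
    (dF K (2 * n) (4 * k) q = C (2 ^ n * factorialRatio K (2 * n) * q ^ n) *
      (∏ l ∈ range (n / 2), halfPochhammer (2 * ((l : K) + 1) + 1 / 2) (2 * n - 3 - 4 * l)) *
      (∏ l ∈ range ((n + 1) / 2), halfPochhammer (2 * (l : K) + 1 / 2) (2 * n - 1 - 4 * l))) ∧
    (dF K n (4 * k + 1) q = C (2 ^ (n / 2) * factorialRatio K n) *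
      ∏ l ∈ range (n / 2), halfPochhammer ((l : K) + 1) (n - 1 - 2 * l)) ∧
    (dF K n (4 * k + 2) q = C (factorialRatio K n * (1 - q) ^ n) *
      (∏ l ∈ range (n / 2), halfPochhammer ((l : K) + 3 / 2) (l + 1)) *
      (∏ l ∈ range ((n - 1) / 2), halfPochhammer ((l : K) + 3 / 2) (l + 1))) ∧
    (dF K n (4 * k + 3) q = C ((-q) ^ n) * dF K n (4 * k + 1) q) := by
  have hzero : (-q) ^ (4 * k) = 1 := by simpa using neg_zpow_four_mul_add hq k 0
  have hone : (-q) ^ (4 * k + 1) = -q := by simpa using neg_zpow_four_mul_add hq k 1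
  have htwo : (-q) ^ (4 * k + 2) = -1 := by simpa [hq] using neg_zpow_four_mul_add hq k 2
  have hthree : (-q) ^ (4 * k + 3) = q := (neg_zpow_four_mul_add hq k 3).trans (by
    linear_combination -q * hq)
  refine ⟨dF_of_odd_of_zpow_eq_one hq hzero (odd_two_mul_add_one n), ?_, ?_, ?_,
    dF_of_zpow_eq_self hq hthree hone n⟩
  · rw [dF_two_mul_of_zpow_eq_one hq hzero]
    simp only [C_mul]
    ring
  · rw [dF_of_zpow_eq_neg hq hone]
    simp only [C_mul]
    ring
  · rw [dF_of_zpow_eq_neg_one hq htwo]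
    simp only [C_mul]
    ring

end ClosedForms

theorem poch_halfX_add_C (a : ℂ) (m : ℤ) : poch (halfX + C a) m = halfPochhammer a m.toNat := by
  refine Polynomial.funext fun x => ?_
  have heval := ascPochhammer_eval_add_natCast (x / 2 + a) 0 m.toNat
  rw [Nat.cast_zero, add_zero, zero_add, ← range_eq_Ico] at heval
  rw [eval_halfPochhammer, heval, poch, halfX, eval_prod]
  simp [div_eq_inv_mul]

theorem prodFact4_sub_one (n : ℕ) : prodFact4 (n - 1) = factorialRatio ℂ n := by
  rcases n with _ | n
  · simp [prodFact4, factorialRatio]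
  · simp [prodFact4, factorialRatio, Finset.prod_range_succ' _ n]

/-- the evaluations of d_{n,k}(x,q) for q a primitive fourth root of unity
(q = i or q = -i); in (4) the factor (1-q)^n realizes (2q⁻¹)^{n/2}. -/
theorem statement13 (q : ℂ) (hq : IsPrimitiveRoot q 4) (k : ℤ) (n : ℕ) (hn : 1 ≤ n) :
    (dF ℂ (2 * n + 1) (4 * k) q = 0) ∧
    (dF ℂ (2 * n) (4 * k) q =
      Polynomial.C ((2 : ℂ) ^ n * prodFact4 (2 * n - 1) * q ^ n) *
      (∏ l ∈ Finset.range (n / 2),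
        poch (halfX + Polynomial.C (2 * ((l : ℂ) + 1) + 1 / 2)) ((2 * n : ℤ) - 4 * l - 3)) *
      (∏ l ∈ Finset.range ((n + 1) / 2),
        poch (halfX + Polynomial.C (2 * (l : ℂ) + 1 / 2)) ((2 * n : ℤ) - 4 * l - 1))) ∧
    (dF ℂ n (4 * k + 1) q =
      Polynomial.C ((2 : ℂ) ^ (n / 2) * prodFact4 (n - 1)) *
      ∏ l ∈ Finset.range (n / 2),
        poch (halfX + Polynomial.C ((l : ℂ) + 1)) ((n : ℤ) - 2 * l - 1)) ∧
    (dF ℂ n (4 * k + 2) q =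
      Polynomial.C (prodFact4 (n - 1) * (1 - q) ^ n) *
      (∏ l ∈ Finset.range (n / 2),
        poch (halfX + Polynomial.C ((l : ℂ) + 3 / 2)) ((l : ℤ) + 1)) *
      (∏ l ∈ Finset.range ((n - 1) / 2),
        poch (halfX + Polynomial.C ((l : ℂ) + 3 / 2)) ((l : ℤ) + 1))) ∧
    (dF ℂ n (4 * k + 3) q = Polynomial.C ((-q) ^ n) * dF ℂ n (4 * k + 1) q) := by
  have hq' : q ^ 2 = -1 :=
    (hq.pow (by norm_num) (show 4 = 2 * 2 by norm_num)).eq_neg_one_of_two_right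
  have hshort (l : ℕ) : ((2 * n : ℤ) - 4 * l - 3).toNat = 2 * n - 3 - 4 * l := by omega
  have hlong (l : ℕ) : ((2 * n : ℤ) - 4 * l - 1).toNat = 2 * n - 1 - 4 * l := by omega
  have hmiddle (l : ℕ) : ((n : ℤ) - 2 * l - 1).toNat = n - 1 - 2 * l := by omega
  have hlow (l : ℕ) : ((l : ℤ) + 1).toNat = l + 1 := by omega
  simpa only [poch_halfX_add_C, prodFact4_sub_one, hshort, hlong, hmiddle, hlow] using
    statement13_general hq' k n

end
end

section
/- For every positive integer n, the 2-enumeration of alternating sign matrices of size n satisfies A_n(2) = 2^{n(n−1)/2}. -/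
open Finset

noncomputable section

/-- A matrix is an alternating sign matrix: entries in {-1,0,1}, all row and column sums 1,
and all partial row and column sums (from the start) equal to 0 or 1. -/
def IsASM {n : ℕ} (A : Matrix (Fin n) (Fin n) ℤ) : Prop :=
  (∀ i j, A i j = -1 ∨ A i j = 0 ∨ A i j = 1) ∧
  (∀ i, ∑ j, A i j = 1) ∧
  (∀ j, ∑ i, A i j = 1) ∧
  (∀ i j, (∑ j' ∈ Finset.Iic j, A i j') = 0 ∨ (∑ j' ∈ Finset.Iic j, A i j') = 1) ∧
  (∀ i j, (∑ i' ∈ Finset.Iic i, A i' j) = 0 ∨ (∑ i' ∈ Finset.Iic i, A i' j) = 1)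

open scoped Classical in
/-- The (finite) set of all alternating sign matrices of size n; since every ASM has entries
in {-1,0,1}, it occurs in the image below. -/
noncomputable def asmFinset (n : ℕ) : Finset (Matrix (Fin n) (Fin n) ℤ) :=
  ((Finset.univ : Finset (Matrix (Fin n) (Fin n) (Fin 3))).image
    (fun B => Matrix.of fun i j => ((B i j : ℕ) : ℤ) - 1)).filter (fun A => IsASM A)

/-- μ(A): the number of entries of A equal to -1. -/
def asmMu {n : ℕ} (A : Matrix (Fin n) (Fin n) ℤ) : ℕ :=
  (Finset.univ.filter (fun p : Fin n × Fin n => A p.1 p.2 = -1)).card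

/-- The Q-enumeration A_n(Q) = ∑_A Q^{μ(A)} of alternating sign matrices of size n. -/
noncomputable def asmEnum {S : Type*} [CommRing S] (n : ℕ) (Q : S) : S :=
  ∑ A ∈ asmFinset n, Q ^ asmMu A

/-!
Read an alternating sign matrix row by row. The sets of columns whose partial sums are `1` form a
chain `∅ = S₀, S₁, …, Sₙ = univ` in which consecutive sets interlace (a monotone triangle), and the
`i`-th row has `#(Sᵢ₋₁ \ Sᵢ)` entries `-1`.

Let `D x j` be the Delannoy numbers. The `2`-weighted number of such chains ending in
`{k₀ < ⋯ < kᵣ₋₁}` is `det (D kᵢ j)`. Indeed, an element of the next-to-last set has weight `1` at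
either end of the interval that interlacing allows for it and weight `2` inside. This is the
trapezoidal rule, and the recurrence `D (x + 1) (j + 1) - D x (j + 1) = D x j + D (x + 1) j` makes
the trapezoidal sum of `D · j` telescope. Expanding the smaller determinant multilinearly in its
rows thus yields the row differences of the larger one, whose first column is constant. Interlacing
sequences with a repeated term contribute determinants with two equal rows, that is, nothing.

The mixed differences of the full Delannoy matrix are twice the Delannoy matrix of one size less, so
its determinant is `2 ^ (0 + 1 + ⋯ + (n - 1))`.
-/

section Delannoy

/-- The Delannoy numbers: `delannoy x j` is the number of lattice paths from `(0, 0)` to `(x, j)`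
with steps `(1, 0)`, `(0, 1)` and `(1, 1)`. -/
def delannoy : ℕ → ℕ → ℕ
  | 0, _ => 1
  | _ + 1, 0 => 1
  | x + 1, j + 1 => delannoy x (j + 1) + delannoy (x + 1) j + delannoy x j

theorem delannoy_zero_right (x : ℕ) : delannoy x 0 = 1 := by
  cases x <;> rw [delannoy]

variable {R : Type*} [CommRing R] {r m : ℕ}

theorem delannoy_succ_sub_delannoy (x j : ℕ) :
    (delannoy (x + 1) (j + 1) - delannoy x (j + 1) : R) = delannoy x j + delannoy (x + 1) j := by
  rw [delannoy]
  push_cast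
  ring

theorem det_eq_det_sub_of_col_zero_eq_one {M : Matrix (Fin (r + 1)) (Fin (r + 1)) R}
    (hM : ∀ i, M i 0 = 1) :
    M.det = (Matrix.of fun i j : Fin r => M i.succ j.succ - M i.castSucc j.succ).det := by
  let N : Matrix (Fin (r + 1)) (Fin (r + 1)) R :=
    Matrix.of (Fin.cons (M 0) fun i => M i.succ - M i.castSucc)
  have hdet : M.det = N.det :=
    Matrix.det_eq_of_forall_row_eq_smul_add_pred (fun _ => 1) (fun j => by simp [N])
      (fun i j => by simp [N])
  have hzero : N 0 0 = 1 := hM 0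
  have hsucc (i : Fin r) : N i.succ 0 = 0 := by simp [N, hM]
  rw [hdet, Matrix.det_succ_column_zero, Fin.sum_univ_succ]
  simp only [hzero, hsucc, Fin.val_zero, pow_zero, one_mul, mul_zero, zero_mul,
    Finset.sum_const_zero, add_zero]
  rfl

variable (R) in
/-- The minor of the infinite Delannoy matrix on the rows `k i` and the first `r` columns. -/
def delannoyDet (k : Fin r → ℕ) : R := (Matrix.of fun i j : Fin r => (delannoy (k i) j : R)).det

theorem delannoyDet_eq_det_sub (k : Fin (r + 1) → ℕ) :
    delannoyDet R k = (Matrix.of fun i j : Fin r =>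
      (delannoy (k i.succ) (j + 1) - delannoy (k i.castSucc) (j + 1) : R)).det :=
  det_eq_det_sub_of_col_zero_eq_one fun i => by simp [delannoy_zero_right]

theorem injective_of_delannoyDet_ne_zero {k : Fin r → ℕ} (hk : delannoyDet R k ≠ 0) :
    Function.Injective k := by
  intro a b hab
  by_contra hne
  exact hk (Matrix.det_zero_of_row_eq hne (by ext j; simp [hab]))

theorem delannoyDet_val_succ (n : ℕ) :
    delannoyDet R (Fin.val : Fin (n + 1) → ℕ) = 2 ^ n * delannoyDet R (Fin.val : Fin n → ℕ) := by
  have hsmul : (2 : R) ^ n * delannoyDet R (Fin.val : Fin n → ℕ) =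
      ((2 : R) • Matrix.of fun i j : Fin n => (delannoy i j : R)).det := by
    rw [Matrix.det_smul, Fintype.card_fin, delannoyDet]
  rw [delannoyDet_eq_det_sub, hsmul]
  cases n with
  | zero => simp
  | succ n =>
    refine Matrix.det_eq_of_forall_col_eq_smul_add_pred (fun _ => 1) (fun i => ?_) fun i j => ?_
    · have h := delannoy_succ_sub_delannoy (R := R) i 0
      simpa [delannoy_zero_right, one_add_one_eq_two] using h
    · have h := delannoy_succ_sub_delannoy (R := R) i (j + 1)
      simp only [Matrix.of_apply, Matrix.smul_apply, Fin.val_succ, Fin.val_castSucc, smul_eq_mul]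
      linear_combination h

theorem delannoyDet_val (n : ℕ) :
    delannoyDet R (Fin.val : Fin n → ℕ) = 2 ^ (n * (n - 1) / 2) := by
  rw [← Finset.sum_range_id]
  induction n with
  | zero => simp [delannoyDet]
  | succ n ih => rw [delannoyDet_val_succ, ih, Finset.sum_range_succ, pow_add, mul_comm]

theorem sum_Icc_trapezoid {α R : Type*} [PartialOrder α] [LocallyFiniteOrder α] [DecidableEq α]
    [NonAssocSemiring R] {a b : α} (hab : a < b) (f : α → R) :
    ∑ x ∈ Icc a b, (if x = a ∨ x = b then 1 else 2) * f x =
      ∑ x ∈ Ico a b, f x + ∑ x ∈ Ioc a b, f x := by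
  rw [← Icc_erase_right, ← Icc_erase_left, ← Finset.filter_ne', ← Finset.filter_ne',
    Finset.sum_filter, Finset.sum_filter, ← Finset.sum_add_distrib]
  refine Finset.sum_congr rfl fun x _ => ?_
  by_cases ha : x = a
  · simp [ha, hab.ne]
  · by_cases hb : x = b <;> simp [ha, hb, hab.ne', two_mul]

theorem sum_Icc_trapezoid_delannoy {a b : Fin m} (hab : a < b) (j : ℕ) :
    ∑ x ∈ Icc a b, (if x = a ∨ x = b then 1 else 2) * (delannoy x j : R) =
      delannoy b (j + 1) - delannoy a (j + 1) := by
  have hIco : ∑ x ∈ Ico a b, (delannoy x j : R) = ∑ x ∈ Ico (a : ℕ) b, (delannoy x j : R) := by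
    rw [← Fin.map_valEmbedding_Ico, Finset.sum_map]
    rfl
  have hIoc : ∑ x ∈ Ioc a b, (delannoy x j : R) =
      ∑ x ∈ Ico (a : ℕ) b, (delannoy (x + 1) j : R) := by
    rw [Finset.sum_Ico_add' (fun x => (delannoy x j : R)), Finset.Ico_add_one_add_one_eq_Ioc,
      ← Fin.map_valEmbedding_Ioc, Finset.sum_map]
    rfl
  rw [sum_Icc_trapezoid hab, hIco, hIoc, ← Finset.sum_add_distrib,
    ← Finset.sum_Ico_sub (fun x => (delannoy x (j + 1) : R)) hab.le]
  exact Finset.sum_congr rfl fun x _ => (delannoy_succ_sub_delannoy x j).symm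

end Delannoy

section Interlacing

variable {α : Type*} [LinearOrder α] {r : ℕ} {k : Fin (r + 1) → α} {l : Fin r → α}

/-- `T` interlaces `S`: writing the elements of `S` and `T` in increasing order,
`s₀ ≤ t₀ ≤ s₁ ≤ t₁ ≤ ⋯ ≤ sᵣ`. This is encoded by the numbers of elements below each threshold,
which are what the partial sums of a row of an alternating sign matrix compare. -/
def Interlaces (T S : Finset α) : Prop :=
  #S = #T + 1 ∧
    ∀ x, #{t ∈ T | t ≤ x} ≤ #{s ∈ S | s ≤ x} ∧ #{s ∈ S | s ≤ x} ≤ #{t ∈ T | t ≤ x} + 1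

theorem apply_le_iff_lt_card_filter_le {f : Fin r → α} (hf : Monotone f) (i : Fin r) (x : α) :
    f i ≤ x ↔ (i : ℕ) < #{a | f a ≤ x} := by
  constructor
  · intro h
    have hsub : Iic i ⊆ ({a | f a ≤ x} : Finset (Fin r)) := fun a ha => by
      simpa using (hf (mem_Iic.1 ha)).trans h
    simpa [Fin.card_Iic, Nat.succ_le_iff] using Finset.card_le_card hsub
  · contrapose!
    intro h
    have hsub : ({a | f a ≤ x} : Finset (Fin r)) ⊆ Iio i := fun a ha => by
      rw [mem_filter_univ] at ha
      exact mem_Iio.2 (hf.reflect_lt (ha.trans_lt h))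
    simpa [Fin.card_Iio] using Finset.card_le_card hsub

theorem le_iff_forall_fin_lt {c d : ℕ} (hd : d ≤ r) : d ≤ c ↔ ∀ i : Fin r, i < d → i < c := by
  refine ⟨fun h i hi => hi.trans_le h, fun h => ?_⟩
  by_contra! hlt
  exact lt_irrefl c (h ⟨c, hlt.trans_le hd⟩ hlt)

theorem card_filter_univ_image_le {f : Fin r → α} (hf : Function.Injective f) (x : α) :
    #{y ∈ univ.image f | y ≤ x} = #{a | f a ≤ x} := by
  rw [Finset.filter_image, Finset.card_image_of_injective _ hf]

variable [LocallyFiniteOrder α]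

/-- The sequences `l` with `k 0 ≤ l 0 ≤ k 1 ≤ l 1 ≤ ⋯ ≤ k r`. -/
def interlacingSeqs (k : Fin (r + 1) → α) : Finset (Fin r → α) :=
  Fintype.piFinset fun i => Icc (k i.castSucc) (k i.succ)

theorem mem_interlacingSeqs :
    l ∈ interlacingSeqs k ↔ ∀ i, k i.castSucc ≤ l i ∧ l i ≤ k i.succ := by
  simp only [interlacingSeqs, Fintype.mem_piFinset, mem_Icc]

theorem monotone_of_mem_interlacingSeqs (hk : Monotone k) (hl : l ∈ interlacingSeqs k) :
    Monotone l := by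
  rw [mem_interlacingSeqs] at hl
  intro a b hab
  rcases hab.eq_or_lt with rfl | hlt
  · exact le_rfl
  · exact (hl a).2.trans ((hk (Fin.succ_le_castSucc_iff.2 hlt)).trans (hl b).1)

theorem interlaces_image_iff (hk : StrictMono k) (hl : StrictMono l) :
    Interlaces (univ.image l) (univ.image k) ↔ l ∈ interlacingSeqs k := by
  have hlower (x : α) : #{a | l a ≤ x} ≤ #{a | k a ≤ x} ↔
      ∀ i : Fin r, l i ≤ x → k i.castSucc ≤ x := by
    rw [le_iff_forall_fin_lt (card_finset_fin_le _)]
    exact forall_congr' fun i => imp_congr (apply_le_iff_lt_card_filter_le hl.monotone i x).symm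
      (apply_le_iff_lt_card_filter_le hk.monotone i.castSucc x).symm
  have hupper (x : α) : #{a | k a ≤ x} ≤ #{a | l a ≤ x} + 1 ↔
      ∀ i : Fin r, k i.succ ≤ x → l i ≤ x := by
    rw [← Nat.sub_le_iff_le_add, le_iff_forall_fin_lt (Nat.sub_le_of_le_add (card_finset_fin_le _))]
    exact forall_congr' fun i => imp_congr
      (Nat.lt_sub_iff_add_lt.trans (apply_le_iff_lt_card_filter_le hk.monotone i.succ x).symm)
      (apply_le_iff_lt_card_filter_le hl.monotone i x).symm
  simp only [Interlaces, Finset.card_image_of_injective _ hk.injective,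
    Finset.card_image_of_injective _ hl.injective, Finset.card_fin, true_and,
    card_filter_univ_image_le hk.injective, card_filter_univ_image_le hl.injective, hlower, hupper,
    mem_interlacingSeqs, forall_and]
  rw [forall_comm, forall_comm (α := α)]
  simp only [forall_ge_iff_le]

theorem mem_image_iff_of_mem_interlacingSeqs (hk : StrictMono k) (hl : l ∈ interlacingSeqs k)
    (i : Fin r) : l i ∈ univ.image k ↔ l i = k i.castSucc ∨ l i = k i.succ := by
  rw [mem_interlacingSeqs] at hl
  simp only [mem_image, mem_univ, true_and]
  constructor
  · rintro ⟨a, ha⟩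
    have hlower : i.castSucc ≤ a := hk.le_iff_le.1 ((hl i).1.trans_eq ha.symm)
    have hupper : a ≤ i.succ := hk.le_iff_le.1 (ha.trans_le (hl i).2)
    rcases hlower.eq_or_lt with rfl | hlt
    · exact Or.inl ha.symm
    · rw [hupper.antisymm (Fin.castSucc_lt_iff_succ_le.1 hlt)] at ha
      exact Or.inr ha.symm
  · rintro (h | h) <;> exact ⟨_, h.symm⟩

theorem pow_card_image_sdiff_image {R : Type*} [CommMonoid R] (Q : R) (hk : StrictMono k)
    (hl : StrictMono l) (hkl : l ∈ interlacingSeqs k) :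
    Q ^ #(univ.image l \ univ.image k) =
      ∏ i, if l i = k i.castSucc ∨ l i = k i.succ then 1 else Q := by
  simp only [← mem_image_iff_of_mem_interlacingSeqs hk hkl]
  rw [Finset.sdiff_eq_filter, Finset.filter_image, Finset.card_image_of_injective _ hl.injective,
    ← Finset.prod_const, Finset.prod_filter]
  simp only [ite_not]

open scoped Classical in
theorem sum_interlaces_eq_sum_interlacingSeqs [Fintype α] {R : Type*} [AddCommMonoid R]
    (hk : StrictMono k) (g : Finset α → R) :
    ∑ T with Interlaces T (univ.image k), g T =
      ∑ l ∈ interlacingSeqs k with StrictMono l, g (univ.image l) := by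
  symm
  refine Finset.sum_bij (fun l _ => univ.image l) (fun l hl => ?_) (fun l hl l' hl' heq => ?_)
    (fun T hT => ?_) fun _ _ => rfl
  · rw [mem_filter] at hl
    exact mem_filter_univ _ |>.2 ((interlaces_image_iff hk hl.2).2 hl.1)
  · refine ((mem_filter.1 hl).2.range_inj (mem_filter.1 hl').2).1 ?_
    simpa using congrArg (fun s : Finset α => (s : Set α)) heq
  · have hT : Interlaces T (univ.image k) := (mem_filter.1 hT).2
    have hcard : #T = r := by
      simpa [Finset.card_image_of_injective _ hk.injective] using hT.1.symm
    have hmono : StrictMono (T.orderEmbOfFin hcard) := (T.orderEmbOfFin hcard).strictMono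
    have himage : univ.image (T.orderEmbOfFin hcard) = T := by simp
    refine ⟨T.orderEmbOfFin hcard, mem_filter.2 ⟨?_, hmono⟩, himage⟩
    rwa [← interlaces_image_iff hk hmono, himage]

end Interlacing

section InterlacingDelannoy

variable {R : Type*} [CommRing R] {r m : ℕ} {k : Fin (r + 1) → Fin m}

theorem sum_interlacingSeqs_delannoyDet (hk : StrictMono k) :
    ∑ l ∈ interlacingSeqs k, (∏ i, if l i = k i.castSucc ∨ l i = k i.succ then 1 else 2) *
      delannoyDet R (fun i => (l i : ℕ)) = delannoyDet R fun i => (k i : ℕ) := by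
  let row (i : Fin r) (x : Fin m) (j : Fin r) : R :=
    (if x = k i.castSucc ∨ x = k i.succ then 1 else 2) * delannoy x j
  have hterm (l : Fin r → Fin m) :
      (∏ i, if l i = k i.castSucc ∨ l i = k i.succ then 1 else 2) *
        delannoyDet R (fun i => (l i : ℕ)) = (Matrix.of fun i => row i (l i)).det :=
    (Matrix.det_mul_column _ _).symm
  have hrow (i j : Fin r) : (∑ x ∈ Icc (k i.castSucc) (k i.succ), row i x) j =
      delannoy (k i.succ) (j + 1) - delannoy (k i.castSucc) (j + 1) := by
    rw [Finset.sum_apply]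
    exact sum_Icc_trapezoid_delannoy (hk i.castSucc_lt_succ) j
  calc
    _ = ∑ l ∈ interlacingSeqs k, (Matrix.of fun i => row i (l i)).det :=
      Finset.sum_congr rfl fun l _ => hterm l
    _ = (Matrix.of fun i => ∑ x ∈ Icc (k i.castSucc) (k i.succ), row i x).det :=
      (Matrix.detRowAlternating.toMultilinearMap.map_sum_finset row _).symm
    _ = delannoyDet R fun i => (k i : ℕ) := by
      rw [delannoyDet_eq_det_sub]
      exact congrArg Matrix.det (Matrix.ext hrow)

open scoped Classical in
theorem sum_interlaces_two_pow_mul_delannoyDet (hk : StrictMono k) {g : Finset (Fin m) → R}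
    (hg : ∀ l : Fin r → Fin m, StrictMono l →
      g (univ.image l) = delannoyDet R fun i => (l i : ℕ)) :
    ∑ T with Interlaces T (univ.image k), 2 ^ #(T \ univ.image k) * g T =
      delannoyDet R fun i => (k i : ℕ) := by
  have hterm (l : Fin r → Fin m) (hl : l ∈ {l ∈ interlacingSeqs k | StrictMono l}) :
      2 ^ #(univ.image l \ univ.image k) * g (univ.image l) =
        (∏ i, if l i = k i.castSucc ∨ l i = k i.succ then 1 else 2) *
          delannoyDet R fun i => (l i : ℕ) := by
    rw [mem_filter] at hl
    rw [hg l hl.2, pow_card_image_sdiff_image 2 hk hl.2 hl.1]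
  rw [sum_interlaces_eq_sum_interlacingSeqs hk, Finset.sum_congr rfl hterm,
    ← sum_interlacingSeqs_delannoyDet hk]
  refine Finset.sum_filter_of_ne fun l hl hne => ?_
  have hinj : Function.Injective fun i => (l i : ℕ) :=
    injective_of_delannoyDet_ne_zero (right_ne_zero_of_mul hne)
  exact (monotone_of_mem_interlacingSeqs hk.monotone hl).strictMono_of_injective
    (hinj.of_comp (f := Fin.val))

end InterlacingDelannoy

section PartialASM

variable {r m : ℕ} {S T : Finset (Fin m)} {M : Matrix (Fin r) (Fin m) ℤ}

/-- The row conditions on an alternating sign matrix. -/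
structure IsASMRow (x : Fin m → ℤ) : Prop where
  entry : ∀ j, x j = -1 ∨ x j = 0 ∨ x j = 1
  sum : ∑ j, x j = 1
  sum_Iic : ∀ j, ∑ j' ∈ Iic j, x j' = 0 ∨ ∑ j' ∈ Iic j, x j' = 1

/-- `M` consists of the top rows of an alternating sign matrix, and `S` is the set of columns of `M`
with sum `1`. -/
structure IsPartialASM (S : Finset (Fin m)) (M : Matrix (Fin r) (Fin m) ℤ) : Prop where
  isASMRow : ∀ i, IsASMRow (M i)
  col_sum_Iic : ∀ i j, ∑ i' ∈ Iic i, M i' j = 0 ∨ ∑ i' ∈ Iic i, M i' j = 1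
  col_sum : ∀ j, ∑ i, M i j = if j ∈ S then 1 else 0

/-- The row leading from the column sum set `T` to the column sum set `S`. -/
def rowBetween (T S : Finset (Fin m)) (j : Fin m) : ℤ :=
  (if j ∈ S then 1 else 0) - (if j ∈ T then 1 else 0)

theorem filter_rowBetween_eq_neg_one (T S : Finset (Fin m)) :
    ({j | rowBetween T S j = -1} : Finset (Fin m)) = T \ S := by
  ext j
  simp only [mem_filter_univ, mem_sdiff]
  by_cases hS : j ∈ S <;> by_cases hT : j ∈ T <;> simp [rowBetween, hS, hT]

theorem isASMRow_rowBetween_iff : IsASMRow (rowBetween T S) ↔ Interlaces T S := by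
  have hentry (j : Fin m) :
      rowBetween T S j = -1 ∨ rowBetween T S j = 0 ∨ rowBetween T S j = 1 := by
    unfold rowBetween
    split_ifs <;> simp
  have hsum : ∑ j, rowBetween T S j = (#S : ℤ) - #T := by
    simp [rowBetween]
  have hsum_Iic (j : Fin m) : ∑ j' ∈ Iic j, rowBetween T S j' =
      (#{s ∈ S | s ≤ j} : ℤ) - #{t ∈ T | t ≤ j} := by
    have hfilter (U : Finset (Fin m)) : {x ∈ Iic j | x ∈ U} = {x ∈ U | x ≤ j} := by
      ext x
      simp [and_comm]
    simp only [rowBetween, Finset.sum_sub_distrib, Finset.sum_boole, hfilter]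
  constructor
  · intro h
    have hcard := hsum ▸ h.sum
    refine ⟨by omega, fun j => ?_⟩
    have hcard_le := hsum_Iic j ▸ h.sum_Iic j
    omega
  · rintro ⟨hcard, hcard_le⟩
    refine ⟨hentry, by rw [hsum]; omega, fun j => ?_⟩
    have hj := hcard_le j
    rw [hsum_Iic]
    omega

/-- The matrix obtained by appending the row `x` at the bottom of `M`. -/
def appendRow (M : Matrix (Fin r) (Fin m) ℤ) (x : Fin m → ℤ) : Matrix (Fin (r + 1)) (Fin m) ℤ :=
  Fin.snoc (α := fun _ => Fin m → ℤ) M x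

theorem appendRow_castSucc (M : Matrix (Fin r) (Fin m) ℤ) (x : Fin m → ℤ) (i : Fin r) :
    appendRow M x i.castSucc = M i :=
  Fin.snoc_castSucc _ _ _

theorem appendRow_last (M : Matrix (Fin r) (Fin m) ℤ) (x : Fin m → ℤ) :
    appendRow M x (Fin.last r) = x :=
  Fin.snoc_last _ _

/-- The matrix obtained by deleting the bottom row of `M`. -/
def initRows (M : Matrix (Fin (r + 1)) (Fin m) ℤ) : Matrix (Fin r) (Fin m) ℤ :=
  fun i => M i.castSucc

theorem initRows_appendRow (M : Matrix (Fin r) (Fin m) ℤ) (x : Fin m → ℤ) :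
    initRows (appendRow M x) = M :=
  funext (appendRow_castSucc M x)

theorem sum_Iic_last {R : Type*} [AddCommMonoid R] (f : Fin (r + 1) → R) :
    ∑ i ∈ Iic (Fin.last r), f i = ∑ i, f i := by
  rw [← Fin.top_eq_last, Finset.Iic_top]

theorem isPartialASM_appendRow_iff (hM : ∀ j, ∑ i, M i j = if j ∈ T then 1 else 0) :
    IsPartialASM S (appendRow M (rowBetween T S)) ↔ IsPartialASM T M ∧ Interlaces T S := by
  have hsum (j : Fin m) :
      ∑ i, appendRow M (rowBetween T S) i j = if j ∈ S then 1 else 0 := by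
    simp [Fin.sum_univ_castSucc, appendRow_castSucc, appendRow_last, hM, rowBetween]
  rw [← isASMRow_rowBetween_iff]
  constructor
  · intro h
    refine ⟨⟨fun i => ?_, fun i j => ?_, hM⟩, ?_⟩
    · simpa only [appendRow_castSucc] using h.isASMRow i.castSucc
    · simpa only [Fin.sum_Iic_castSucc, appendRow_castSucc] using h.col_sum_Iic i.castSucc j
    · simpa only [appendRow_last] using h.isASMRow (Fin.last r)
  · rintro ⟨h, hrow⟩
    refine ⟨Fin.lastCases ?_ fun i => ?_, Fin.lastCases ?_ fun i j => ?_, hsum⟩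
    · rwa [appendRow_last]
    · rw [appendRow_castSucc]
      exact h.isASMRow i
    · intro j
      rw [sum_Iic_last, hsum]
      exact (ite_eq_or_eq _ _ _).symm
    · simpa only [Fin.sum_Iic_castSucc, appendRow_castSucc] using h.col_sum_Iic i j

/-- The set of columns of `M` with sum `1`. -/
def columnSet (M : Matrix (Fin r) (Fin m) ℤ) : Finset (Fin m) := {j | ∑ i, M i j = 1}

theorem IsPartialASM.columnSet_eq (hM : IsPartialASM S M) : columnSet M = S := by
  ext j
  simp [columnSet, hM.col_sum j]

theorem IsPartialASM.col_sum_initRows {M : Matrix (Fin (r + 1)) (Fin m) ℤ} (hM : IsPartialASM S M)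
    (j : Fin m) : ∑ i, initRows M i j = if j ∈ columnSet (initRows M) then 1 else 0 := by
  have h : ∑ i, initRows M i j = 0 ∨ ∑ i, initRows M i j = 1 := by
    cases r with
    | zero => simp
    | succ r =>
      have h := hM.col_sum_Iic (Fin.last r).castSucc j
      rwa [Fin.sum_Iic_castSucc (fun i => M i j), sum_Iic_last] at h
  rcases h with h | h <;> simp [columnSet, h]

theorem IsPartialASM.appendRow_initRows {M : Matrix (Fin (r + 1)) (Fin m) ℤ}
    (hM : IsPartialASM S M) :
    appendRow (initRows M) (rowBetween (columnSet (initRows M)) S) = M := by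
  have hlast : rowBetween (columnSet (initRows M)) S = M (Fin.last r) := by
    ext j
    rw [rowBetween, ← hM.col_sum_initRows j, ← hM.col_sum j, Fin.sum_univ_castSucc]
    exact add_sub_cancel_left _ _
  rw [hlast]
  exact Fin.snoc_init_self M

theorem IsPartialASM.isPartialASM_initRows {M : Matrix (Fin (r + 1)) (Fin m) ℤ}
    (hM : IsPartialASM S M) :
    IsPartialASM (columnSet (initRows M)) (initRows M) ∧
      Interlaces (columnSet (initRows M)) S := by
  rwa [← isPartialASM_appendRow_iff hM.col_sum_initRows, hM.appendRow_initRows]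

open scoped Classical in
/-- The finite set of all partial alternating sign matrices with `r` rows and column sum set `S`. -/
def partialASMFinset (r : ℕ) (S : Finset (Fin m)) : Finset (Matrix (Fin r) (Fin m) ℤ) :=
  {M ∈ Fintype.piFinset fun _ => Fintype.piFinset fun _ => {-1, 0, 1} | IsPartialASM S M}

open scoped Classical in
theorem mem_partialASMFinset : M ∈ partialASMFinset r S ↔ IsPartialASM S M :=
  mem_filter.trans <| and_iff_right_of_imp fun hM => Fintype.mem_piFinset.2 fun i =>
    Fintype.mem_piFinset.2 fun j => by simpa using (hM.isASMRow i).entry j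

/-- The number of entries of `M` equal to `-1`. -/
def negCount (M : Matrix (Fin r) (Fin m) ℤ) : ℕ := ∑ i, #{j | M i j = -1}

theorem negCount_appendRow_rowBetween (M : Matrix (Fin r) (Fin m) ℤ) (T S : Finset (Fin m)) :
    negCount (appendRow M (rowBetween T S)) = negCount M + #(T \ S) := by
  simp only [negCount, Fin.sum_univ_castSucc, appendRow_castSucc, appendRow_last,
    filter_rowBetween_eq_neg_one]

/-- The `Q`-enumeration of the partial alternating sign matrices with `r` rows and column sum
set `S`. -/
def partialASMEnum {R : Type*} [CommRing R] (r : ℕ) (S : Finset (Fin m)) (Q : R) : R :=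
  ∑ M ∈ partialASMFinset r S, Q ^ negCount M

variable {R : Type*} [CommRing R]

theorem partialASMEnum_zero (Q : R) : partialASMEnum 0 (∅ : Finset (Fin m)) Q = 1 := by
  have hempty : IsPartialASM ∅ (0 : Matrix (Fin 0) (Fin m) ℤ) :=
    ⟨fun i => i.elim0, fun i => i.elim0, fun j => by simp⟩
  have hsingleton : partialASMFinset 0 (∅ : Finset (Fin m)) = {0} :=
    Finset.eq_singleton_iff_unique_mem.2
      ⟨mem_partialASMFinset.2 hempty, fun M _ => Subsingleton.elim M 0⟩
  simp [partialASMEnum, hsingleton, negCount]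

open scoped Classical in
theorem partialASMEnum_succ (S : Finset (Fin m)) (Q : R) :
    partialASMEnum (r + 1) S Q =
      ∑ T with Interlaces T S, Q ^ #(T \ S) * partialASMEnum r T Q := by
  simp only [partialASMEnum, Finset.mul_sum]
  rw [Finset.sum_sigma']
  refine Finset.sum_bij' (fun M _ => ⟨columnSet (initRows M), initRows M⟩)
    (fun p _ => appendRow p.2 (rowBetween p.1 S)) ?_ ?_ ?_ ?_ ?_ <;>
    simp only [mem_sigma, mem_filter_univ, mem_partialASMFinset]
  · exact fun M hM => hM.isPartialASM_initRows.symm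
  · exact fun p hp => (isPartialASM_appendRow_iff hp.2.col_sum).2 hp.symm
  · exact fun M hM => hM.appendRow_initRows
  · rintro ⟨T, M⟩ ⟨-, hM⟩
    simp only [initRows_appendRow, hM.columnSet_eq]
  · intro M hM
    conv_lhs => rw [← hM.appendRow_initRows, negCount_appendRow_rowBetween, pow_add, mul_comm]

theorem partialASMEnum_two {k : Fin r → Fin m} (hk : StrictMono k) :
    partialASMEnum r (univ.image k) (2 : R) = delannoyDet R fun i => (k i : ℕ) := by
  induction r with
  | zero => simp [partialASMEnum_zero, delannoyDet]
  | succ r ih =>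
    rw [partialASMEnum_succ, sum_interlaces_two_pow_mul_delannoyDet hk fun l hl => ih hl]

end PartialASM

section ASM

variable {n : ℕ} {A : Matrix (Fin n) (Fin n) ℤ}

theorem mem_asmFinset : A ∈ asmFinset n ↔ IsASM A := by
  simp only [asmFinset, mem_filter, mem_image, mem_univ, true_and, and_iff_right_iff_imp]
  intro hA
  refine ⟨fun i j => ⟨(A i j + 1).toNat, ?_⟩, ?_⟩
  · rcases hA.1 i j with h | h | h <;> simp [h]
  · ext i j
    rcases hA.1 i j with h | h | h <;> simp [h]

theorem isASM_iff_isPartialASM : IsASM A ↔ IsPartialASM univ A := by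
  constructor
  · rintro ⟨hentry, hrow, hcol, hrow_Iic, hcol_Iic⟩
    exact ⟨fun i => ⟨hentry i, hrow i, hrow_Iic i⟩, hcol_Iic, by simpa using hcol⟩
  · intro h
    exact ⟨fun i => (h.isASMRow i).entry, fun i => (h.isASMRow i).sum,
      by simpa using h.col_sum, fun i => (h.isASMRow i).sum_Iic, h.col_sum_Iic⟩

theorem asmMu_eq_negCount (A : Matrix (Fin n) (Fin n) ℤ) : asmMu A = negCount A := by
  simp only [asmMu, negCount, Finset.card_filter, Fintype.sum_prod_type]

theorem asmEnum_eq_partialASMEnum {R : Type*} [CommRing R] (n : ℕ) (Q : R) :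
    asmEnum n Q = partialASMEnum n (univ : Finset (Fin n)) Q := by
  have hset : asmFinset n = partialASMFinset n univ := by
    ext A
    rw [mem_asmFinset, isASM_iff_isPartialASM, mem_partialASMFinset]
  simp only [asmEnum, partialASMEnum, hset, asmMu_eq_negCount]

end ASM

theorem statement14_general {R : Type*} [CommRing R] (n : ℕ) :
    asmEnum n (2 : R) = 2 ^ (n * (n - 1) / 2) := by
  rw [asmEnum_eq_partialASMEnum, ← Finset.image_id (s := univ), partialASMEnum_two strictMono_id]
  exact delannoyDet_val n

/-- the 2-enumeration of ASMs of size n is A_n(2) = 2^{n(n-1)/2}. -/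
theorem statement14 (n : ℕ) (hn : 1 ≤ n) :
    asmEnum n (2 : ℚ) = 2 ^ (n * (n - 1) / 2) :=
  statement14_general n

end
end

section
/- Let q ∈ ℂ be a primitive sixth root of unity. Define c(n) := 3^{n(n−2)/4}·∏_{i=0}^{n−1}⌊i/2⌋!/i! if n is even, and c(n) := 3^{(n−1)²/4}·∏_{i=0}^{n−1}⌊i/2⌋!/i! if n is odd. Then for every integer k and all positive integers n the following identities hold in ℂ[x]: (1) d_{2n+1,3k}(x,q) = 0; (2) d_{2n,3k}(x,q) = (−1)^n·q^{−n}·c(2n)·∏_{i=0}^{n−1}(x+1+3i)·∏_{i=1}^{n−1}(x+3i)_{2(n−i)}; (3) d_{n,3k+1}(x,q) = c(n)·∏_{i=0}^{⌊(n−2)/2⌋}(x+2+3i)_{n−1−2i}; (4) d_{n,3k+2}(x,q) = q^{−n}·d_{n,3k+1}(x,q). -/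
open Polynomial Finset

noncomputable section

/-- c(n) = 3^{n(n-2)/4}·∏_{i=0}^{n-1}⌊i/2⌋!/i! for even n, and
c(n) = 3^{(n-1)²/4}·∏_{i=0}^{n-1}⌊i/2⌋!/i! for odd n. -/
noncomputable def cConst (n : ℕ) : ℂ :=
  if Even n then
    (3 : ℂ) ^ (n * (n - 2) / 4) * ∏ i ∈ Finset.range n, ((i / 2).factorial : ℂ) / (i.factorial : ℂ)
  else
    (3 : ℂ) ^ ((n - 1) ^ 2 / 4) * ∏ i ∈ Finset.range n, ((i / 2).factorial : ℂ) / (i.factorial : ℂ)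

/-!
Condensation (the Desnanot–Jacobi identity) expresses `d_{n+2,k}(x)` through the determinants of
sizes `n` and `n + 1` with `x` shifted by at most `2` and `k` by at most `1`: deleting the first row
or column of the matrix gives a matrix of the same kind, up to scaling rows and columns.

Since `a_{-m} = -(-q)^{-m} a_m`, transposing the matrix shows that `d_{n,-k}` is a scalar multiple
of `d_{n,k}`, and that `d_{n,0} = 0` for odd `n`. When `q` is a primitive sixth root of unity,
`a_m` moreover has period `3`, so that `d_{n,2} = d_{n,-1}` is a multiple of `d_{n,1}`. Condensation
is then a recurrence in `n` which determines `d_{n,1}` and `d_{2m,0}`, and the closed forms satisfy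
the same recurrence. Dividing by a determinant in it is harmless: the closed forms do not vanish at
`x`, nor at any of its shifts.
-/

/-! ## Jacobi's complementary minors and the Desnanot–Jacobi identity -/

section Determinants

variable {R m n : Type*} [CommRing R] [Fintype m] [DecidableEq m] [Fintype n] [DecidableEq n]

theorem det_mul_det_toBlocks₁₁_adjugate (A : Matrix (m ⊕ n) (m ⊕ n) R) :
    A.det * A.adjugate.toBlocks₁₁.det = A.det ^ Fintype.card m * A.toBlocks₂₂.det := by
  have hblocks : A * Matrix.fromBlocks A.adjugate.toBlocks₁₁ 0 A.adjugate.toBlocks₂₁ 1 =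
      Matrix.fromBlocks (A.det • 1) A.toBlocks₁₂ 0 A.toBlocks₂₂ := by
    ext i (j | j)
    · have hij := congrFun₂ A.mul_adjugate i (Sum.inl j)
      rw [Matrix.mul_apply, Fintype.sum_sum_type] at hij
      rcases i with i | i <;>
        simpa [Matrix.mul_apply, Matrix.one_apply, Matrix.toBlocks₁₁, Matrix.toBlocks₂₁] using hij
    · rcases i with i | i <;>
        simp [Matrix.mul_apply, Matrix.one_apply, Matrix.toBlocks₁₂, Matrix.toBlocks₂₂]
  simpa [Matrix.det_fromBlocks_zero₁₂, Matrix.det_fromBlocks_zero₂₁]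
    using congrArg Matrix.det hblocks

/-- The determinants are compared for a matrix of indeterminates, where `det A` may be cancelled. -/
theorem det_toBlocks₁₁_adjugate [Nonempty m] (A : Matrix (m ⊕ n) (m ⊕ n) R) :
    A.adjugate.toBlocks₁₁.det = A.det ^ (Fintype.card m - 1) * A.toBlocks₂₂.det := by
  let G := Matrix.mvPolynomialX (m ⊕ n) (m ⊕ n) ℤ
  have generic : G.adjugate.toBlocks₁₁.det = G.det ^ (Fintype.card m - 1) * G.toBlocks₂₂.det := by
    refine mul_left_cancel₀ (Matrix.det_mvPolynomialX_ne_zero (m ⊕ n) ℤ) ?_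
    rw [det_mul_det_toBlocks₁₁_adjugate, ← mul_assoc, mul_pow_sub_one Fintype.card_ne_zero]
  let φ := MvPolynomial.aeval (R := ℤ) fun p : (m ⊕ n) × (m ⊕ n) => A p.1 p.2
  have hA : φ.mapMatrix G = A := Matrix.mvPolynomialX_mapMatrix_aeval ℤ A
  have specialized := congrArg φ generic
  rw [map_mul, map_pow, AlgHom.map_det, AlgHom.map_det, AlgHom.map_det] at specialized
  rw [← hA, ← AlgHom.map_adjugate]
  exact specialized

end Determinants

/-- The first and the last index of `Fin (n + 2)`, split off from the interior ones. -/
def endsSumInterior (n : ℕ) : Fin 2 ⊕ Fin n ≃ Fin (n + 2) :=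
  Equiv.ofBijective (Sum.elim ![0, Fin.last _] fun i => i.castSucc.succ) <| by
    refine (Fintype.bijective_iff_injective_and_card _).mpr ⟨?_, by simp [add_comm]⟩
    refine Function.Injective.sumElim ?_
      ((Fin.succ_injective _).comp (Fin.castSucc_injective _)) ?_
    · intro a b
      fin_cases a <;> fin_cases b <;> simp [Fin.ext_iff]
    · intro a i
      fin_cases a
      · simp [Fin.ext_iff]
      · simp [Fin.ext_iff]; omega

theorem desnanot_jacobi {R : Type*} [CommRing R] {n : ℕ}
    (A : Matrix (Fin (n + 2)) (Fin (n + 2)) R) :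
    A.det * (A.submatrix (fun i : Fin n => i.castSucc.succ) fun j => j.castSucc.succ).det =
      (A.submatrix Fin.castSucc Fin.castSucc).det * (A.submatrix Fin.succ Fin.succ).det -
        (A.submatrix Fin.castSucc Fin.succ).det * (A.submatrix Fin.succ Fin.castSucc).det := by
  have jacobi := det_toBlocks₁₁_adjugate (A.submatrix (endsSumInterior n) (endsSumInterior n))
  have sign_sq : (-1 : R) ^ (n + 1) * (-1) ^ (n + 1) = 1 := by rw [← mul_pow]; simp
  have interior : (A.submatrix (endsSumInterior n) (endsSumInterior n)).toBlocks₂₂ =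
      A.submatrix (fun i => i.castSucc.succ) fun j => j.castSucc.succ := rfl
  rw [Matrix.adjugate_submatrix_equiv_self, Matrix.det_submatrix_equiv_self, Matrix.det_fin_two,
    interior] at jacobi
  simp only [Matrix.toBlocks₁₁, endsSumInterior, Equiv.coe_ofBijective, Matrix.submatrix_apply,
    Sum.elim_inl, Matrix.adjugate_fin_succ_eq_det_submatrix, Matrix.of_apply, Matrix.cons_val_zero,
    Matrix.cons_val_one, Matrix.cons_val_fin_one, Fin.val_zero, Fin.val_last, Fin.succAbove_zero,
    Fin.succAbove_last, add_zero, zero_add, pow_zero, one_mul, Even.add_self, Even.neg_pow,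
    one_pow, Fintype.card_fin, Nat.add_one_sub_one, pow_one] at jacobi
  linear_combination -jacobi - (A.submatrix Fin.castSucc Fin.succ).det *
    (A.submatrix Fin.succ Fin.castSucc).det * sign_sq

/-! ## The determinants for a general sequence and a general argument -/

section Pochhammer

variable {R : Type*}

theorem ascPochhammer_succ_eval_left [CommSemiring R] (n : ℕ) (y : R) :
    (ascPochhammer R (n + 1)).eval y = y * (ascPochhammer R n).eval (y + 1) := by
  simp [ascPochhammer_succ_left, eval_comp]

theorem ascPochhammer_eval_eq_prod_range [CommSemiring R] (n : ℕ) (y : R) :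
    (ascPochhammer R n).eval y = ∏ i ∈ range n, (y + i) := by
  induction n with
  | zero => simp
  | succ n ih => rw [ascPochhammer_succ_eval, ih, prod_range_succ]

theorem ascPochhammer_mul_eval [CommSemiring R] (m n : ℕ) (y : R) :
    (ascPochhammer R m).eval y * (ascPochhammer R n).eval (y + m) =
      (ascPochhammer R (m + n)).eval y := by
  simpa [eval_comp] using congrArg (eval y) (ascPochhammer_mul R m n)

theorem mul_ascPochhammer_eval_add_one [CommSemiring R] (n : ℕ) (y : R) :
    y * (ascPochhammer R n).eval (y + 1) = (ascPochhammer R n).eval y * (y + n) := by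
  rw [← ascPochhammer_succ_eval_left, ascPochhammer_succ_eval]

theorem add_one_add_natCast_ne_zero [Semiring R] {y : R} (hy : ∀ r : ℕ, y + r ≠ 0) (r : ℕ) :
    y + 1 + r ≠ 0 := by
  simpa [add_assoc] using hy (1 + r)

theorem add_two_add_natCast_ne_zero [Semiring R] {y : R} (hy : ∀ r : ℕ, y + r ≠ 0) (r : ℕ) :
    y + 2 + r ≠ 0 := by
  simpa [add_assoc] using hy (2 + r)

theorem ascPochhammer_eval_ne_zero [CommRing R] [IsDomain R] {y : R} (hy : ∀ r : ℕ, y + r ≠ 0)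
    (n : ℕ) : (ascPochhammer R n).eval y ≠ 0 := by
  rw [Ne, ascPochhammer_eval_eq_zero_iff]
  rintro ⟨r, -, hr⟩
  exact hy r (by rw [hr, add_neg_cancel])

end Pochhammer

section BinomDet

variable {F : Type*} [Field F]

theorem factorial_mul_binomP [CharZero F] (y : F[X]) (m : ℕ) :
    (m.factorial : F[X]) * binomP F y m = (ascPochhammer F[X] m).eval (y - m + 1) := by
  have hm : (m.factorial : F) ≠ 0 := mod_cast m.factorial_ne_zero
  rw [← descPochhammer_eval_eq_ascPochhammer, descPochhammer_eval_eq_prod_range, binomP,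
    ← mul_assoc, ← C_eq_natCast, ← C_mul, mul_inv_cancel₀ hm, C_1, one_mul]

theorem succ_mul_binomP_succ [CharZero F] (y : F[X]) (m : ℕ) :
    (m + 1) * binomP F y (m + 1) = (y - m) * binomP F y m := by
  have hm : (m.factorial : F[X]) ≠ 0 := mod_cast m.factorial_ne_zero
  refine mul_left_cancel₀ hm ?_
  have h := factorial_mul_binomP y (m + 1)
  rw [Nat.factorial_succ, ascPochhammer_succ_eval_left, Nat.cast_add_one,
    show y - (m + 1) + 1 = y - m by ring] at h
  push_cast at h
  linear_combination h - (y - m) * factorial_mul_binomP y m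

/-- The entry of `D_{n,k}` in row `i` and column `j`, both counted from `0`, with an arbitrary
sequence `α` in place of `m ↦ a_m(q)` and an arbitrary polynomial `y` in place of `x`. -/
def binomEntry (α : ℤ → F) (k : ℤ) (y : F[X]) (i j : ℕ) : F[X] :=
  binomP F (y + i + j) j * C (α (j - i + k))

theorem binomEntry_succ_left (α : ℤ → F) (k : ℤ) (y : F[X]) (i j : ℕ) :
    binomEntry α k y (i + 1) j = binomEntry α (k - 1) (y + 1) i j := by
  simp only [binomEntry]
  push_cast
  ring_nf

theorem succ_mul_binomEntry_succ_right [CharZero F] (α : ℤ → F) (k : ℤ) (y : F[X]) (i j : ℕ) :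
    (j + 1) * binomEntry α k y i (j + 1) = (y + 1 + i) * binomEntry α (k + 1) (y + 1) i j := by
  have h := succ_mul_binomP_succ (F := F) (y + 1 + i + j) j
  simp only [binomEntry]
  push_cast
  rw [show y + (i : F[X]) + (j + 1) = y + 1 + i + j by ring,
    show (j : ℤ) + 1 - i + k = j - i + (k + 1) by ring]
  linear_combination C (α (j - i + (k + 1))) * h

/-- The determinant `d_{n,k}` with an arbitrary sequence `α` in place of `m ↦ a_m(q)` and an
arbitrary polynomial `y` in place of `x`. -/
def binomDet (α : ℤ → F) (n : ℕ) (k : ℤ) (y : F[X]) : F[X] :=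
  (Matrix.of fun i j : Fin n => binomEntry α k y i j).det

theorem binomDet_zero (α : ℤ → F) (k : ℤ) (y : F[X]) : binomDet α 0 k y = 1 :=
  Matrix.det_fin_zero

theorem binomDet_one (α : ℤ → F) (k : ℤ) (y : F[X]) : binomDet α 1 k y = C (α k) := by
  simp [binomDet, binomEntry, binomP]

theorem binomDet_periodic {α : ℤ → F} {p : ℤ} (hα : Function.Periodic α p) (n : ℕ) (y : F[X]) :
    Function.Periodic (fun k => binomDet α n k y) p := fun k => by
  simp only [binomDet, binomEntry, ← add_assoc, hα _]

theorem binomDet_mul_zpow (α : ℤ → F) (c : F) {w : F} (hw : w ≠ 0) (n : ℕ) (k : ℤ) (y : F[X]) :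
    binomDet (fun m => c * w ^ m * α m) n k y = C (c * w ^ k) ^ n * binomDet α n k y := by
  have entries : (Matrix.of fun i j : Fin n => binomEntry (fun m => c * w ^ m * α m) k y i j) =
      Matrix.of fun i j : Fin n => C (w ^ (j : ℤ)) *
        (Matrix.of fun i j : Fin n => C (w ^ (-(i : ℤ))) *
          (C (c * w ^ k) • Matrix.of fun i j : Fin n => binomEntry α k y i j) i j) i j := by
    ext1 i j
    simp only [Matrix.of_apply, Matrix.smul_apply, smul_eq_mul, binomEntry, sub_eq_add_neg,
      zpow_add₀ hw, C_mul]
    ring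
  have powers_cancel (i : ℤ) : C (w ^ i) * C (w ^ (-i)) = 1 := by
    rw [← C_mul, ← zpow_add₀ hw, add_neg_cancel, zpow_zero, C_1]
  rw [binomDet, entries, Matrix.det_mul_row, Matrix.det_mul_column, Matrix.det_smul,
    Fintype.card_fin, ← mul_assoc, ← prod_mul_distrib]
  simp only [powers_cancel, prod_const_one, one_mul, binomDet]

/-- Both sides are `(y + 1)_{i + j}` times a value of `α`: transposing the matrix only rescales
its rows and columns. -/
theorem binomEntry_symm [CharZero F] (α : ℤ → F) (k : ℤ) (y : F[X]) (i j : ℕ) :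
    j.factorial * ((ascPochhammer F[X] i).eval (y + 1) *
        binomEntry (fun m => α (-m)) k y i j) =
      i.factorial * ((ascPochhammer F[X] j).eval (y + 1) * binomEntry α (-k) y j i) := by
  have hi := factorial_mul_binomP (F := F) (y + j + i) i
  have hj := factorial_mul_binomP (F := F) (y + i + j) j
  rw [add_sub_cancel_right, add_right_comm y _ 1] at hi hj
  have hij := ascPochhammer_mul_eval i j (y + 1)
  rw [add_comm i j, ← ascPochhammer_mul_eval] at hij
  simp only [binomEntry]
  rw [show -((j : ℤ) - i + k) = i - j + -k by ring]
  linear_combination C (α (i - j + -k)) * ((ascPochhammer F[X] i).eval (y + 1) * hj + hij -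
    (ascPochhammer F[X] j).eval (y + 1) * hi)

theorem binomDet_comp_neg [CharZero F] (α : ℤ → F) (n : ℕ) (k : ℤ) {y : F[X]}
    (hy : ∀ r : ℕ, y + r ≠ 0) :
    binomDet (fun m => α (-m)) n k y = binomDet α n (-k) y := by
  let u (j : Fin n) : F[X] := (j : ℕ).factorial
  let v (i : Fin n) : F[X] := (ascPochhammer F[X] i).eval (y + 1)
  let scaled (β : ℤ → F) (l : ℤ) : Matrix (Fin n) (Fin n) F[X] :=
    Matrix.of fun i j => u j * (Matrix.of fun i j => v i * binomEntry β l y i j) i j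
  have det_scaled (β : ℤ → F) (l : ℤ) :
      (scaled β l).det = (∏ j, u j) * ((∏ i, v i) * binomDet β n l y) :=
    (Matrix.det_mul_row u _).trans (congrArg _ (Matrix.det_mul_column v _))
  have transpose_scaled : scaled (fun m => α (-m)) k = (scaled α (-k)).transpose := by
    ext1 i j
    exact binomEntry_symm α k y i j
  have hu : ∏ j, u j ≠ 0 :=
    prod_ne_zero_iff.mpr fun j _ => Nat.cast_ne_zero.mpr (j : ℕ).factorial_ne_zero
  have hv : ∏ i, v i ≠ 0 := prod_ne_zero_iff.mpr fun i _ =>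
    ascPochhammer_eval_ne_zero (add_one_add_natCast_ne_zero hy) _
  have dets := congrArg Matrix.det transpose_scaled
  rw [Matrix.det_transpose, det_scaled, det_scaled] at dets
  exact mul_left_cancel₀ hv (mul_left_cancel₀ hu dets)

theorem factorial_mul_det_binomEntry_succ_right [CharZero F] (α : ℤ → F) (n : ℕ) (k : ℤ)
    (y : F[X]) :
    n.factorial * (Matrix.of fun i j : Fin n => binomEntry α k y i (j + 1)).det =
      (ascPochhammer F[X] n).eval (y + 1) * binomDet α n (k + 1) (y + 1) := by
  rw [← prod_range_add_one_eq_factorial, ascPochhammer_eval_eq_prod_range, Nat.cast_prod,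
    prod_range, prod_range, binomDet, ← Matrix.det_mul_row, ← Matrix.det_mul_column]
  congr 1
  ext1 i j
  simpa using succ_mul_binomEntry_succ_right α k y i j

theorem factorial_mul_det_binomEntry_succ_succ [CharZero F] (α : ℤ → F) (n : ℕ) (k : ℤ)
    (y : F[X]) :
    n.factorial * (Matrix.of fun i j : Fin n => binomEntry α k y (i + 1) (j + 1)).det =
      (ascPochhammer F[X] n).eval (y + 2) * binomDet α n k (y + 2) := by
  have h := factorial_mul_det_binomEntry_succ_right α n (k - 1) (y + 1)
  rw [sub_add_cancel, add_assoc, one_add_one_eq_two] at h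
  simpa only [binomEntry_succ_left] using h

theorem binomDet_condensation [CharZero F] (α : ℤ → F) (n : ℕ) (k : ℤ) {y : F[X]}
    (hy : ∀ r : ℕ, y + r ≠ 0) :
    (n + 1) * (binomDet α (n + 2) k y * binomDet α n k (y + 2)) =
      (y + n + 2) * (binomDet α (n + 1) k y * binomDet α (n + 1) k (y + 2)) -
        (y + 1) * (binomDet α (n + 1) (k + 1) (y + 1) * binomDet α (n + 1) (k - 1) (y + 1)) := by
  let A : Matrix (Fin (n + 2)) (Fin (n + 2)) F[X] := Matrix.of fun i j => binomEntry α k y i j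
  have bottom_left : (A.submatrix Fin.succ Fin.castSucc).det =
      binomDet α (n + 1) (k - 1) (y + 1) := by
    refine congrArg Matrix.det ?_
    ext1 i j
    exact binomEntry_succ_left α k y i j
  have top_right : (n + 1).factorial * (A.submatrix Fin.castSucc Fin.succ).det =
      (ascPochhammer F[X] (n + 1)).eval (y + 1) * binomDet α (n + 1) (k + 1) (y + 1) :=
    factorial_mul_det_binomEntry_succ_right α (n + 1) k y
  have interior := factorial_mul_det_binomEntry_succ_succ α n k y
  have bottom_right := factorial_mul_det_binomEntry_succ_succ α (n + 1) k y
  have desnanot := desnanot_jacobi A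
  change binomDet α (n + 2) k y *
      (Matrix.of fun i j : Fin n => binomEntry α k y (i + 1) (j + 1)).det =
    binomDet α (n + 1) k y *
      (Matrix.of fun i j : Fin (n + 1) => binomEntry α k y (i + 1) (j + 1)).det - _ at desnanot
  rw [bottom_left] at desnanot
  rw [ascPochhammer_succ_eval] at bottom_right
  rw [ascPochhammer_succ_eval_left, add_assoc y, one_add_one_eq_two] at top_right
  rw [Nat.factorial_succ] at bottom_right top_right
  push_cast at bottom_right top_right
  refine mul_left_cancel₀ (ascPochhammer_eval_ne_zero (add_two_add_natCast_ne_zero hy) n) ?_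
  linear_combination (n + 1) * n.factorial * desnanot -
    (n + 1) * binomDet α (n + 2) k y * interior + binomDet α (n + 1) k y * bottom_right -
    binomDet α (n + 1) (k - 1) (y + 1) * top_right

end BinomDet

/-! ## The sequence `a_m(q)` -/

section Sequence

variable {F : Type*} [Field F] {q : F}

theorem aF_neg_natCast (hq : q ≠ 0) (m : ℕ) : aF F q (-m) = -((-q) ^ (-m : ℤ) * aF F q m) := by
  rcases m.eq_zero_or_pos with rfl | hm
  · simp [aF]
  have hq' : -q ≠ 0 := neg_ne_zero.mpr hq
  rw [aF, aF, if_neg (by omega), if_pos (by omega), neg_neg, Int.toNat_natCast, mul_sum,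
    ← sum_range_reflect]
  refine congrArg _ (sum_congr rfl fun l hl => ?_)
  have hl : l < m := mem_range.mp hl
  rw [← zpow_natCast, ← zpow_add₀ hq']
  congr 1
  omega

theorem aF_neg (hq : q ≠ 0) (m : ℤ) : aF F q (-m) = -((-q) ^ (-m) * aF F q m) := by
  obtain ⟨m, rfl | rfl⟩ := m.eq_nat_or_neg
  · exact aF_neg_natCast hq m
  · rw [aF_neg_natCast hq, neg_neg, mul_neg, neg_neg, ← mul_assoc,
      ← zpow_add₀ (neg_ne_zero.mpr hq), add_neg_cancel, zpow_zero, one_mul]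

theorem aF_add_one (q : F) (m : ℤ) : aF F q (m + 1) = aF F q m + (-q) ^ m := by
  obtain ⟨m, rfl | rfl⟩ := m.eq_nat_or_neg
  · rcases m.eq_zero_or_pos with rfl | hm
    · simp [aF]
    · rw [aF, aF, if_pos (by omega), if_pos (by omega), Int.toNat_natCast_add_one,
        Int.toNat_natCast, sum_range_succ, zpow_natCast]
  · cases m with
    | zero => simp [aF]
    | succ m =>
      rw [aF, aF, if_neg (by omega), if_neg (by omega), neg_neg, Int.toNat_natCast,
        show (-(-((m + 1 : ℕ) : ℤ) + 1)).toNat = m by omega, sum_range_succ, neg_add,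
        Nat.cast_add_one, neg_add_cancel_right]

theorem ne_zero_of_sq_sub_self_add_one (hq : q ^ 2 - q + 1 = 0) : q ≠ 0 := by
  rintro rfl
  simp at hq

theorem aF_periodic (hq : q ^ 2 - q + 1 = 0) : Function.Periodic (aF F q) 3 := fun m => by
  have hq' : -q ≠ 0 := neg_ne_zero.mpr (ne_zero_of_sq_sub_self_add_one hq)
  have step := aF_add_one q m
  have step_two := aF_add_one q (m + 1)
  have step_three := aF_add_one q (m + 1 + 1)
  rw [zpow_add_one₀ hq'] at step_two step_three
  rw [zpow_add_one₀ hq'] at step_three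
  simp only [add_assoc, Int.reduceAdd] at step_two step_three
  linear_combination step + step_two + step_three + (-q) ^ m * hq

theorem sq_sub_self_add_one_eq_zero_of_isPrimitiveRoot_six (hq : IsPrimitiveRoot q 6) :
    q ^ 2 - q + 1 = 0 := by
  simpa [cyclotomic_six] using hq.isRoot_cyclotomic (by norm_num)

variable [CharZero F]

theorem binomDet_aF_neg (hq : q ≠ 0) (n : ℕ) (k : ℤ) {y : F[X]} (hy : ∀ r : ℕ, y + r ≠ 0) :
    binomDet (aF F q) n (-k) y = C (-(-q) ^ (-k)) ^ n * binomDet (aF F q) n k y := by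
  have twisted : (fun m => aF F q (-m)) = fun m => -1 * (-q)⁻¹ ^ m * aF F q m := by
    funext m
    rw [aF_neg hq, inv_zpow, zpow_neg, neg_one_mul, neg_mul]
  rw [← binomDet_comp_neg _ _ _ hy, twisted,
    binomDet_mul_zpow _ _ (inv_ne_zero (neg_ne_zero.mpr hq)), inv_zpow, zpow_neg, neg_one_mul]

theorem binomDet_aF_odd_zero (hq : q ≠ 0) (m : ℕ) {y : F[X]} (hy : ∀ r : ℕ, y + r ≠ 0) :
    binomDet (aF F q) (2 * m + 1) 0 y = 0 := by
  have h := binomDet_aF_neg hq (2 * m + 1) 0 hy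
  rw [neg_zero, zpow_zero, C_neg, C_1, (odd_two_mul_add_one m).neg_one_pow, neg_one_mul] at h
  exact self_eq_neg.mp h

theorem binomDet_aF_neg_one (hq : q ≠ 0) (n : ℕ) {y : F[X]} (hy : ∀ r : ℕ, y + r ≠ 0) :
    binomDet (aF F q) n (-1) y = C q⁻¹ ^ n * binomDet (aF F q) n 1 y := by
  rw [binomDet_aF_neg hq n 1 hy, zpow_neg_one, inv_neg, neg_neg]

theorem binomDet_aF_two (hq : q ^ 2 - q + 1 = 0) (n : ℕ) {y : F[X]} (hy : ∀ r : ℕ, y + r ≠ 0) :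
    binomDet (aF F q) n 2 y = C q⁻¹ ^ n * binomDet (aF F q) n 1 y := by
  rw [← binomDet_aF_neg_one (ne_zero_of_sq_sub_self_add_one hq) n hy]
  simpa using binomDet_periodic (aF_periodic hq) n y (-1)

end Sequence

/-! ## The closed forms and their recurrences -/

section Products

variable {R : Type*} [CommSemiring R]

/-- The product `∏ i, (y + 2 + 3 * i)_{n - 1 - 2 * i}` over `i < n / 2`, the part of the closed form
of `d_{n,1}` that depends on `x`. -/
def pochStair (n : ℕ) (y : R) : R :=
  ∏ i ∈ range (n / 2), (ascPochhammer R (n - 1 - 2 * i)).eval (y + 2 + 3 * i)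

/-- The Pochhammer symbol with step three, `y * (y + 3) * ⋯ * (y + 3 * (n - 1))`. -/
def stepThreePoch (n : ℕ) (y : R) : R :=
  ∏ i ∈ range n, (y + 3 * i)

theorem stepThreePoch_succ (n : ℕ) (y : R) :
    stepThreePoch (n + 1) y = y * stepThreePoch n (y + 3) := by
  rw [stepThreePoch, prod_range_succ', Nat.cast_zero, mul_zero, add_zero, mul_comm, stepThreePoch]
  refine congrArg _ (prod_congr rfl fun i _ => ?_)
  push_cast
  ring

theorem pochStair_eq_prod_range_succ_div_two (n : ℕ) (y : R) :
    pochStair n y =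
      ∏ i ∈ range ((n + 1) / 2), (ascPochhammer R (n - 1 - 2 * i)).eval (y + 2 + 3 * i) := by
  obtain ⟨m, rfl | rfl⟩ := n.even_or_odd'
  · rw [pochStair, show (2 * m + 1) / 2 = 2 * m / 2 by omega]
  · rw [pochStair, show (2 * m + 1) / 2 = m by omega, show (2 * m + 1 + 1) / 2 = m + 1 by omega,
      prod_range_succ, Nat.add_sub_cancel, Nat.sub_self, ascPochhammer_zero, eval_one, mul_one]

theorem pochStair_succ (n : ℕ) (y : R) :
    pochStair (n + 1) y =
      pochStair n y * (ascPochhammer R ((n + 1) / 2)).eval (y + n + 1) := by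
  rw [pochStair_eq_prod_range_succ_div_two n, ascPochhammer_eval_eq_prod_range, ← prod_mul_distrib,
    pochStair]
  refine prod_congr rfl fun i hi => ?_
  obtain ⟨d, rfl⟩ : ∃ d, n = d + 2 * i + 1 := ⟨n - 1 - 2 * i, by have := mem_range.mp hi; omega⟩
  rw [show d + 2 * i + 1 + 1 - 1 - 2 * i = d + 1 by omega,
    show d + 2 * i + 1 - 1 - 2 * i = d by omega, ascPochhammer_succ_eval]
  push_cast
  ring

theorem pochStair_succ_eq_stepThreePoch_mul (n : ℕ) (y : R) :
    pochStair (n + 1) y = stepThreePoch ((n + 1) / 2) (y + 2) * pochStair n (y + 1) := by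
  rw [pochStair_eq_prod_range_succ_div_two n, stepThreePoch, ← prod_mul_distrib, pochStair]
  refine prod_congr rfl fun i hi => ?_
  obtain ⟨d, rfl⟩ : ∃ d, n = d + 2 * i + 1 := ⟨n - 1 - 2 * i, by have := mem_range.mp hi; omega⟩
  rw [show d + 2 * i + 1 + 1 - 1 - 2 * i = d + 1 by omega,
    show d + 2 * i + 1 - 1 - 2 * i = d by omega, ascPochhammer_succ_eval_left]
  ring_nf

theorem pochStair_two_mul (m : ℕ) (y : R) :
    pochStair (2 * m) y = stepThreePoch m (y + 2) * pochStair (2 * m - 1) (y + 1) := by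
  cases m with
  | zero => simp [pochStair, stepThreePoch]
  | succ m =>
    rw [show 2 * (m + 1) = 2 * m + 1 + 1 by ring, pochStair_succ_eq_stepThreePoch_mul,
      show (2 * m + 1 + 1) / 2 = m + 1 by omega, Nat.add_sub_cancel]

end Products

section ProductsDomain

variable {R : Type*} [CommRing R] [IsDomain R] {y : R}

theorem pochStair_ne_zero (hy : ∀ r : ℕ, y + r ≠ 0) (n : ℕ) : pochStair n y ≠ 0 :=
  prod_ne_zero_iff.mpr fun i _ => ascPochhammer_eval_ne_zero
    (fun r => by simpa [add_assoc] using hy (2 + (3 * i + r))) _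

theorem stepThreePoch_ne_zero (hy : ∀ r : ℕ, y + r ≠ 0) (n : ℕ) : stepThreePoch n y ≠ 0 :=
  prod_ne_zero_iff.mpr fun i _ => by simpa using hy (3 * i)

end ProductsDomain

section Constants

/-- The quotient of consecutive constants, `c(n + 1) / c(n)`. -/
def cRatio (n : ℕ) : ℂ :=
  3 ^ (n / 2) * (n / 2).factorial / n.factorial

theorem cRatio_ne_zero (n : ℕ) : cRatio n ≠ 0 := by
  simp [cRatio, Nat.factorial_ne_zero]

theorem mul_C_cRatio_odd (m : ℕ) :
    (2 * m + 1) * C (cRatio (2 * m + 1)) = C (cRatio (2 * m)) := by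
  have ratio : (2 * m + 1) * cRatio (2 * m + 1) = cRatio (2 * m) := by
    have hm : (2 * m + 1 : ℂ) ≠ 0 := mod_cast (2 * m).succ_ne_zero
    have hfact : ((2 * m).factorial : ℂ) ≠ 0 := mod_cast (2 * m).factorial_ne_zero
    rw [cRatio, cRatio, show (2 * m + 1) / 2 = m by omega, show 2 * m / 2 = m by omega,
      Nat.factorial_succ]
    push_cast
    field_simp
  simpa [map_ofNat] using congrArg C ratio

theorem mul_C_cRatio_even (m : ℕ) :
    (2 * m + 2) * C (cRatio (2 * m + 2)) = 3 * (m + 1) * C (cRatio (2 * m + 1)) := by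
  have ratio : (2 * m + 2) * cRatio (2 * m + 2) = 3 * (m + 1) * cRatio (2 * m + 1) := by
    have hfact : ((2 * m + 1).factorial : ℂ) ≠ 0 := mod_cast (2 * m + 1).factorial_ne_zero
    rw [cRatio, cRatio, show (2 * m + 2) / 2 = m + 1 by omega, show (2 * m + 1) / 2 = m by omega,
      Nat.factorial_succ, Nat.factorial_succ (2 * m + 1)]
    push_cast
    rw [show (2 * m + 1 + 1 : ℂ) = 2 * m + 2 by ring]
    field_simp
    ring
  simpa [map_ofNat] using congrArg C ratio

theorem cConst_eq (n : ℕ) :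
    cConst n = 3 ^ ((n - 1) ^ 2 / 4) *
      ∏ i ∈ range n, ((i / 2).factorial : ℂ) / (i.factorial : ℂ) := by
  rw [cConst]
  split_ifs with hn
  · obtain ⟨_ | m, rfl⟩ := even_iff_two_dvd.mp hn
    · simp
    · congr 2
      rw [show 2 * (m + 1) - 1 = 2 * m + 1 by omega, show 2 * (m + 1) - 2 = 2 * m by omega,
        show (2 * m + 1) ^ 2 = 2 * (m + 1) * (2 * m) + 1 by ring,
        show 2 * (m + 1) * (2 * m) = 4 * ((m + 1) * m) by ring]
      omega
  · rfl

theorem cConst_succ (n : ℕ) : cConst (n + 1) = cRatio n * cConst n := by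
  have exponent : n ^ 2 / 4 = (n - 1) ^ 2 / 4 + n / 2 := by
    obtain ⟨_ | m, rfl | rfl⟩ := n.even_or_odd'
    · rfl
    · rfl
    · rw [show 2 * (m + 1) - 1 = 2 * m + 1 by omega,
        show (2 * (m + 1)) ^ 2 = 4 * (m * m + 2 * m + 1) by ring,
        show (2 * m + 1) ^ 2 = 4 * (m * m + m) + 1 by ring]
      omega
    · rw [show 2 * (m + 1) + 1 - 1 = 2 * (m + 1) by omega,
        show (2 * (m + 1) + 1) ^ 2 = 4 * ((m + 1) * (m + 1)) + 4 * (m + 1) + 1 by ring,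
        show (2 * (m + 1)) ^ 2 = 4 * ((m + 1) * (m + 1)) by ring]
      omega
  rw [cConst_eq, cConst_eq, prod_range_succ, Nat.add_sub_cancel, exponent, pow_add, cRatio]
  ring

theorem cConst_ne_zero (n : ℕ) : cConst n ≠ 0 := by
  induction n with
  | zero => simp [cConst]
  | succ n ih => exact cConst_succ n ▸ mul_ne_zero (cRatio_ne_zero n) ih

end Constants

section ClosedForms

/-- The closed form of `d_{n,1}(y, q)`. -/
def closedFormOne (n : ℕ) (y : ℂ[X]) : ℂ[X] :=
  C (cConst n) * pochStair n y

/-- The closed form of `d_{2m,0}(y, q)`, up to the factor `(-q)⁻ᵐ`. Truncated subtraction is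
harmless at `m = 0`, since `pochStair 0` is an empty product. -/
def closedFormZero (m : ℕ) (y : ℂ[X]) : ℂ[X] :=
  C (cConst (2 * m)) * (stepThreePoch m (y + 1) * pochStair (2 * m - 1) (y + 1))

theorem closedFormOne_succ (n : ℕ) (y : ℂ[X]) :
    closedFormOne (n + 1) y =
      C (cRatio n) * closedFormOne n y * (ascPochhammer ℂ[X] ((n + 1) / 2)).eval (y + n + 1) := by
  rw [closedFormOne, closedFormOne, cConst_succ, pochStair_succ, C_mul]
  ring

theorem closedFormOne_succ_eq_stepThreePoch_mul (n : ℕ) (y : ℂ[X]) :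
    closedFormOne (n + 1) y =
      C (cRatio n) * stepThreePoch ((n + 1) / 2) (y + 2) * closedFormOne n (y + 1) := by
  rw [closedFormOne, closedFormOne, cConst_succ, pochStair_succ_eq_stepThreePoch_mul, C_mul]
  ring

theorem closedFormOne_odd (m : ℕ) (y : ℂ[X]) :
    closedFormOne (2 * m + 1) y = C (cRatio (2 * m)) * closedFormOne (2 * m) y *
      (ascPochhammer ℂ[X] m).eval (y + 2 * m + 1) := by
  rw [closedFormOne_succ, show (2 * m + 1) / 2 = m by omega, Nat.cast_mul, Nat.cast_two]

theorem closedFormOne_even (m : ℕ) (y : ℂ[X]) :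
    closedFormOne (2 * m + 2) y = C (cRatio (2 * m + 1)) * closedFormOne (2 * m + 1) y *
      (ascPochhammer ℂ[X] (m + 1)).eval (y + 2 * m + 2) := by
  rw [closedFormOne_succ, show (2 * m + 1 + 1) / 2 = m + 1 by omega]
  push_cast
  rw [show y + (2 * m + 1) + 1 = y + 2 * m + 2 by ring]

theorem closedFormOne_even_eq_stepThreePoch_mul (m : ℕ) (y : ℂ[X]) :
    closedFormOne (2 * m + 2) y = C (cRatio (2 * m + 1)) * stepThreePoch (m + 1) (y + 2) *
      closedFormOne (2 * m + 1) (y + 1) := by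
  rw [closedFormOne_succ_eq_stepThreePoch_mul, show (2 * m + 1 + 1) / 2 = m + 1 by omega]

theorem closedFormZero_succ (m : ℕ) (y : ℂ[X]) :
    closedFormZero (m + 1) y =
      C (cRatio (2 * m + 1)) * stepThreePoch (m + 1) (y + 1) *
        closedFormOne (2 * m + 1) (y + 1) := by
  rw [closedFormZero, closedFormOne, show 2 * (m + 1) = 2 * m + 1 + 1 by ring, cConst_succ,
    Nat.add_sub_cancel, C_mul]
  ring

theorem closedFormOne_odd_eq_mul_closedFormZero (m : ℕ) (y : ℂ[X]) :
    closedFormOne (2 * m + 1) y =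
      C (cRatio (2 * m)) * stepThreePoch m (y + 3) * closedFormZero m (y + 1) := by
  rw [closedFormOne_succ_eq_stepThreePoch_mul, closedFormOne, closedFormZero, pochStair_two_mul,
    show (2 * m + 1) / 2 = m by omega]
  ring_nf

theorem closedFormOne_ne_zero {y : ℂ[X]} (hy : ∀ r : ℕ, y + r ≠ 0) (n : ℕ) :
    closedFormOne n y ≠ 0 :=
  mul_ne_zero (C_ne_zero.mpr (cConst_ne_zero n)) (pochStair_ne_zero hy n)

theorem closedFormZero_ne_zero {y : ℂ[X]} (hy : ∀ r : ℕ, y + r ≠ 0) (m : ℕ) :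
    closedFormZero m y ≠ 0 := by
  have hy' := add_one_add_natCast_ne_zero hy
  exact mul_ne_zero (C_ne_zero.mpr (cConst_ne_zero _))
    (mul_ne_zero (stepThreePoch_ne_zero hy' m) (pochStair_ne_zero hy' _))

theorem closedFormOne_condensation_even (m : ℕ) (y : ℂ[X]) :
    (2 * m + 1) * (closedFormOne (2 * m + 2) y * closedFormOne (2 * m) (y + 2)) =
      (y + 2 * m + 2) * (closedFormOne (2 * m + 1) y * closedFormOne (2 * m + 1) (y + 2)) := by
  rw [closedFormOne_even m y, closedFormOne_odd m (y + 2), ← mul_C_cRatio_odd,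
    ascPochhammer_succ_eval_left, show y + 2 + 2 * m + 1 = y + 2 * m + 2 + 1 by ring]
  ring

theorem closedFormZero_condensation (m : ℕ) (y : ℂ[X]) :
    (2 * m + 1) * (closedFormZero (m + 1) y * closedFormZero m (y + 2)) =
      (y + 1) * closedFormOne (2 * m + 1) (y + 1) ^ 2 := by
  have expand := closedFormOne_odd_eq_mul_closedFormZero m (y + 1)
  rw [← mul_C_cRatio_odd, add_assoc y 1 1, one_add_one_eq_two] at expand
  rw [closedFormZero_succ, stepThreePoch_succ]
  linear_combination -(y + 1) * closedFormOne (2 * m + 1) (y + 1) * expand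

theorem closedFormOne_condensation_odd (m : ℕ) (y : ℂ[X]) :
    (2 * m + 2) * (closedFormOne (2 * m + 3) y * closedFormOne (2 * m + 1) (y + 2)) =
      (y + 2 * m + 3) * (closedFormOne (2 * m + 2) y * closedFormOne (2 * m + 2) (y + 2)) -
        (y + 1) * (closedFormOne (2 * m + 2) (y + 1) * closedFormZero (m + 1) (y + 1)) := by
  let r := C (cRatio (2 * m + 1))
  let L := stepThreePoch (m + 1) (y + 2)
  let P := (ascPochhammer ℂ[X] (m + 1)).eval (y + 2 * m + 3)
  let P' := (ascPochhammer ℂ[X] (m + 1)).eval (y + 2 * m + 4)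
  let V := closedFormOne (2 * m + 2) y
  let W := closedFormOne (2 * m + 1) (y + 2)
  have odd : closedFormOne (2 * m + 3) y = C (cRatio (2 * m + 2)) * V * P := by
    have h := closedFormOne_odd (m + 1) y
    push_cast at h
    rwa [show y + 2 * (m + 1) + 1 = y + 2 * m + 3 by ring] at h
  have even : closedFormOne (2 * m + 2) (y + 2) = r * W * P' := by
    rw [closedFormOne_even, show y + 2 + 2 * m + 2 = y + 2 * m + 4 by ring]
  have even' : closedFormOne (2 * m + 2) (y + 1) = r * closedFormOne (2 * m + 1) (y + 1) * P := by
    rw [closedFormOne_even, show y + 1 + 2 * m + 2 = y + 2 * m + 3 by ring]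
  have zero : closedFormZero (m + 1) (y + 1) = r * L * W := by
    rw [closedFormZero_succ, add_assoc y 1 1, one_add_one_eq_two]
  have pochhammer : (y + 2 * m + 3) * P' = P * (y + 3 * m + 4) := by
    have h := mul_ascPochhammer_eval_add_one (m + 1) (y + 2 * m + 3)
    rw [add_assoc _ 3 1, three_add_one_eq_four] at h
    push_cast at h
    linear_combination h
  rw [odd, even, even', zero]
  linear_combination V * P * W * mul_C_cRatio_even m - r * V * W * pochhammer -
    r * P * W * (y + 1) * closedFormOne_even_eq_stepThreePoch_mul m y

end ClosedForms

/-! ## Induction on the size of the determinant -/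

section Induction

variable {q : ℂ} {y : ℂ[X]} {m : ℕ}

theorem binomDet_aF_even_one_step (hq : q ≠ 0) (hy : ∀ r : ℕ, y + r ≠ 0)
    (even : binomDet (aF ℂ q) (2 * m) 1 (y + 2) = closedFormOne (2 * m) (y + 2))
    (odd : binomDet (aF ℂ q) (2 * m + 1) 1 y = closedFormOne (2 * m + 1) y)
    (odd' : binomDet (aF ℂ q) (2 * m + 1) 1 (y + 2) = closedFormOne (2 * m + 1) (y + 2)) :
    binomDet (aF ℂ q) (2 * m + 2) 1 y = closedFormOne (2 * m + 2) y := by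
  have hm : (2 * m + 1 : ℂ[X]) ≠ 0 := mod_cast (2 * m).succ_ne_zero
  have hV := closedFormOne_ne_zero (add_two_add_natCast_ne_zero hy) (2 * m)
  have vanishing := binomDet_aF_odd_zero hq m (add_one_add_natCast_ne_zero hy)
  have condensation := binomDet_condensation (aF ℂ q) (2 * m) 1 hy
  rw [sub_self, vanishing, even, odd, odd'] at condensation
  push_cast at condensation
  refine mul_left_cancel₀ (mul_ne_zero hm hV) ?_
  linear_combination condensation - closedFormOne_condensation_even m y

theorem binomDet_aF_even_zero_step (hq : q ≠ 0) (hy : ∀ r : ℕ, y + r ≠ 0)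
    (zero : binomDet (aF ℂ q) (2 * m) 0 (y + 2) = C (-q)⁻¹ ^ m * closedFormZero m (y + 2))
    (odd : binomDet (aF ℂ q) (2 * m + 1) 1 (y + 1) = closedFormOne (2 * m + 1) (y + 1)) :
    binomDet (aF ℂ q) (2 * m + 2) 0 y = C (-q)⁻¹ ^ (m + 1) * closedFormZero (m + 1) y := by
  have hm : (2 * m + 1 : ℂ[X]) ≠ 0 := mod_cast (2 * m).succ_ne_zero
  have hw : C (-q)⁻¹ ≠ 0 := C_ne_zero.mpr (inv_ne_zero (neg_ne_zero.mpr hq))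
  have hZ := closedFormZero_ne_zero (add_two_add_natCast_ne_zero hy) m
  have vanishing := binomDet_aF_odd_zero hq m hy
  have neg_one := binomDet_aF_neg_one hq (2 * m + 1) (add_one_add_natCast_ne_zero hy)
  have inv_eq : C q⁻¹ ^ (2 * m + 1) = -C (-q)⁻¹ ^ (2 * m + 1) := by
    rw [← (odd_two_mul_add_one m).neg_pow, inv_neg, C_neg, neg_neg]
  have condensation := binomDet_condensation (aF ℂ q) (2 * m) 0 hy
  rw [zero_add, zero_sub, neg_one, odd, vanishing, zero, inv_eq] at condensation
  push_cast at condensation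
  refine mul_left_cancel₀ (mul_ne_zero (mul_ne_zero hm (pow_ne_zero m hw)) hZ) ?_
  linear_combination condensation - C (-q)⁻¹ ^ (2 * m + 1) * closedFormZero_condensation m y

theorem binomDet_aF_odd_one_step (hq : q ^ 2 - q + 1 = 0) (hy : ∀ r : ℕ, y + r ≠ 0)
    (odd : binomDet (aF ℂ q) (2 * m + 1) 1 (y + 2) = closedFormOne (2 * m + 1) (y + 2))
    (even : binomDet (aF ℂ q) (2 * m + 2) 1 y = closedFormOne (2 * m + 2) y)
    (even' : binomDet (aF ℂ q) (2 * m + 2) 1 (y + 1) = closedFormOne (2 * m + 2) (y + 1))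
    (even'' : binomDet (aF ℂ q) (2 * m + 2) 1 (y + 2) = closedFormOne (2 * m + 2) (y + 2))
    (zero : binomDet (aF ℂ q) (2 * m + 2) 0 (y + 1) =
      C (-q)⁻¹ ^ (m + 1) * closedFormZero (m + 1) (y + 1)) :
    binomDet (aF ℂ q) (2 * m + 3) 1 y = closedFormOne (2 * m + 3) y := by
  have hm : (2 * m + 2 : ℂ[X]) ≠ 0 := mod_cast (2 * m + 1).succ_ne_zero
  have hV := closedFormOne_ne_zero (add_two_add_natCast_ne_zero hy) (2 * m + 1)
  have two := binomDet_aF_two hq (2 * m + 2) (add_one_add_natCast_ne_zero hy)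
  have cube : C q⁻¹ ^ (2 * m + 2) * C (-q)⁻¹ ^ (m + 1) = 1 := by
    have neg_cube : -q ^ 3 = 1 := by linear_combination -(q + 1) * hq
    rw [show 2 * m + 2 = 2 * (m + 1) by ring, pow_mul, ← mul_pow, ← C_pow, ← C_mul, inv_neg,
      mul_neg, ← pow_succ, inv_pow, ← inv_neg, neg_cube, inv_one, C_1, one_pow]
  have condensation := binomDet_condensation (aF ℂ q) (2 * m + 1) 1 hy
  rw [sub_self, one_add_one_eq_two, zero, two, even', even'', even, odd] at condensation
  push_cast at condensation
  refine mul_left_cancel₀ (mul_ne_zero hm hV) ?_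
  linear_combination condensation - closedFormOne_condensation_odd m y - (y + 1) *
    closedFormOne (2 * m + 2) (y + 1) * closedFormZero (m + 1) (y + 1) * cube

theorem binomDet_aF_eq_closedForm (hq : q ^ 2 - q + 1 = 0) (m : ℕ) :
    ∀ y : ℂ[X], (∀ r : ℕ, y + r ≠ 0) →
      binomDet (aF ℂ q) (2 * m) 1 y = closedFormOne (2 * m) y ∧
      binomDet (aF ℂ q) (2 * m + 1) 1 y = closedFormOne (2 * m + 1) y ∧
      binomDet (aF ℂ q) (2 * m) 0 y = C (-q)⁻¹ ^ m * closedFormZero m y := by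
  have hq0 := ne_zero_of_sq_sub_self_add_one hq
  induction m with
  | zero =>
    intro y _
    simp [binomDet_zero, binomDet_one, closedFormOne, closedFormZero, pochStair, stepThreePoch,
      cConst, aF]
  | succ m ih =>
    have hy_one {y : ℂ[X]} (hy : ∀ r : ℕ, y + r ≠ 0) := add_one_add_natCast_ne_zero hy
    have hy_two {y : ℂ[X]} (hy : ∀ r : ℕ, y + r ≠ 0) := add_two_add_natCast_ne_zero hy
    have even (y : ℂ[X]) (hy : ∀ r : ℕ, y + r ≠ 0) :=
      binomDet_aF_even_one_step hq0 hy (ih _ (hy_two hy)).1 (ih y hy).2.1 (ih _ (hy_two hy)).2.1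
    have zero (y : ℂ[X]) (hy : ∀ r : ℕ, y + r ≠ 0) :=
      binomDet_aF_even_zero_step hq0 hy (ih _ (hy_two hy)).2.2 (ih _ (hy_one hy)).2.1
    intro y hy
    exact ⟨even y hy, binomDet_aF_odd_one_step hq hy (ih _ (hy_two hy)).2.1 (even y hy)
      (even _ (hy_one hy)) (even _ (hy_two hy)) (zero _ (hy_one hy)), zero y hy⟩

theorem binomDet_aF_one (hq : q ^ 2 - q + 1 = 0) (n : ℕ) (hy : ∀ r : ℕ, y + r ≠ 0) :
    binomDet (aF ℂ q) n 1 y = closedFormOne n y := by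
  obtain ⟨m, rfl | rfl⟩ := n.even_or_odd'
  · exact (binomDet_aF_eq_closedForm hq m y hy).1
  · exact (binomDet_aF_eq_closedForm hq m y hy).2.1

theorem binomDet_aF_two_mul_zero (hq : q ^ 2 - q + 1 = 0) (m : ℕ) (hy : ∀ r : ℕ, y + r ≠ 0) :
    binomDet (aF ℂ q) (2 * m) 0 y = C (-q)⁻¹ ^ m * closedFormZero m y :=
  (binomDet_aF_eq_closedForm hq m y hy).2.2

end Induction

section Specialization

theorem X_add_natCast_ne_zero (R : Type*) [Ring R] [Nontrivial R] (r : ℕ) :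
    X + (r : R[X]) ≠ 0 := by
  simpa using X_add_C_ne_zero (r : R)

theorem poch_natCast (y : ℂ[X]) (m : ℕ) : poch y m = (ascPochhammer ℂ[X] m).eval y := by
  rw [poch, Int.toNat_natCast, ascPochhammer_eval_eq_prod_range]

theorem closedFormOne_X (n : ℕ) :
    closedFormOne n X = C (cConst n) * ∏ i ∈ range ((((n : ℤ) - 2) / 2 + 1).toNat),
      poch (X + C (2 + 3 * (i : ℂ))) ((n : ℤ) - 1 - 2 * i) := by
  rw [closedFormOne, pochStair, show (((n : ℤ) - 2) / 2 + 1).toNat = n / 2 by omega]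
  refine congrArg _ (prod_congr rfl fun i hi => ?_)
  have hi : i < n / 2 := mem_range.mp hi
  rw [show (n : ℤ) - 1 - 2 * i = (n - 1 - 2 * i : ℕ) by omega, poch_natCast]
  simp [add_assoc, map_ofNat]

theorem closedFormZero_X (m : ℕ) :
    closedFormZero m X = C (cConst (2 * m)) * (∏ i ∈ range m, (X + C (1 + 3 * (i : ℂ)))) *
      ∏ i ∈ range (m - 1), poch (X + C (3 * ((i : ℂ) + 1))) (2 * ((m : ℤ) - (i + 1))) := by
  rw [closedFormZero, ← mul_assoc, pochStair, stepThreePoch,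
    show (2 * m - 1) / 2 = m - 1 by omega]
  congr 1
  · simp [add_assoc, map_ofNat]
  refine prod_congr rfl fun i hi => ?_
  have hi : i < m - 1 := mem_range.mp hi
  rw [show 2 * ((m : ℤ) - (i + 1)) = (2 * m - 1 - 1 - 2 * i : ℕ) by omega, poch_natCast]
  congr 1
  simp only [C_mul, C_add, C_1, map_natCast, map_ofNat]
  ring

theorem dF_three_mul_add {F : Type*} [Field F] {q : F} (hq : q ^ 2 - q + 1 = 0) (n : ℕ)
    (k l : ℤ) : dF F n (3 * k + l) q = binomDet (aF F q) n l X := by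
  have h := (binomDet_periodic (aF_periodic hq) n X).int_mul k l
  rwa [Int.cast_id, add_comm, mul_comm] at h

end Specialization

/-- the evaluations of d_{n,k}(x,q) for q a primitive sixth root of unity. -/
theorem statement15 (q : ℂ) (hq : IsPrimitiveRoot q 6) (k : ℤ) (n : ℕ) (hn : 1 ≤ n) :
    (dF ℂ (2 * n + 1) (3 * k) q = 0) ∧
    (dF ℂ (2 * n) (3 * k) q =
      Polynomial.C ((-1 : ℂ) ^ n * q ^ (-(n : ℤ)) * cConst (2 * n)) *
      (∏ i ∈ Finset.range n, (Polynomial.X + Polynomial.C (1 + 3 * (i : ℂ)))) *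
      ∏ i ∈ Finset.range (n - 1),
        poch (Polynomial.X + Polynomial.C (3 * ((i : ℂ) + 1))) (2 * ((n : ℤ) - (i + 1)))) ∧
    (dF ℂ n (3 * k + 1) q =
      Polynomial.C (cConst n) *
      ∏ i ∈ Finset.range ((((n : ℤ) - 2) / 2 + 1).toNat),
        poch (Polynomial.X + Polynomial.C (2 + 3 * (i : ℂ))) ((n : ℤ) - 1 - 2 * i)) ∧
    (dF ℂ n (3 * k + 2) q = Polynomial.C (q ^ (-(n : ℤ))) * dF ℂ n (3 * k + 1) q) := by
  have hroot := sq_sub_self_add_one_eq_zero_of_isPrimitiveRoot_six hq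
  have hq0 := ne_zero_of_sq_sub_self_add_one hroot
  have hX := X_add_natCast_ne_zero ℂ
  have dF_three_mul (m : ℕ) : dF ℂ m (3 * k) q = binomDet (aF ℂ q) m 0 X := by
    rw [← dF_three_mul_add hroot m k 0, add_zero]
  rw [dF_three_mul, dF_three_mul, dF_three_mul_add hroot, dF_three_mul_add hroot]
  refine ⟨binomDet_aF_odd_zero hq0 n hX, ?_, ?_, ?_⟩
  · have scalar : (-1 : ℂ) ^ n * q ^ (-(n : ℤ)) = (-q)⁻¹ ^ n := by
      rw [zpow_neg, zpow_natCast, ← inv_pow, ← mul_pow, neg_one_mul, inv_neg]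
    rw [binomDet_aF_two_mul_zero hroot n hX, closedFormZero_X, scalar, C_mul, C_pow]
    simp only [mul_assoc]
  · rw [binomDet_aF_one hroot n hX, closedFormOne_X]
  · rw [binomDet_aF_two hroot n hX, zpow_neg, zpow_natCast, ← inv_pow, C_pow]

end
end

section
/- There exists a sequence of polynomials p_m(x) ∈ ℚ[x] (m ≥ 0) with p_0(x) = 1, p_1(x) = 1, p_3(x) = 2x+5, p_{2m}(x) = p_{2m−1}(x+2) for all m ≥ 1, and satisfying for all m ≥ 2 the recursion 2m·p_{2m−3}(x+4)·p_{2m+1}(x) = (x+2m+1)(x+2m+2)·p_{2m−1}(x)·p_{2m−1}(x+4) − (x+1)(x+2)·p_{2m−1}(x+2)², such that for every integer k and all positive integers n the following identities hold in ℚ[x]: d_{n,2k+1}(x,1) = [∏_{i=2}^{⌊n/2⌋}(2i−1)^{−(n+1−2i)}]·∏_{i=1}^{⌊n/2⌋}(x+2i)·p_n(x)·p_{n−1}(x); d_{2n,2k}(x,1) = (−1)^n·[∏_{i=2}^{n}(2i−1)^{−(2n+1−2i)}]·∏_{i=1}^{n}(x+2i−1)·p_{2n}(x−1)²; and d_{2n+1,2k}(x,1)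 = 0. -/
open Polynomial Finset

noncomputable section

/-!
At `q = 1` the factor `a_m` only records the parity of `m`, so the matrix of `d_{n,k}` is a
checkerboard. Sorting rows and columns by parity splits its determinant into minors with entries
`binom(y + 2i + 2j, 2j)` and `binom(y + 2i + 2j, 2j + 1)`; when `k` is even and the size is odd, one
block of zeros is too large and the determinant vanishes. Pulling factors out of rows and columns
turns both kinds of minors into the single family `D_n(y) = det((2j - 1)!! binom(y + 2i + 2j, 2j))`,
and the extracted double factorials reassemble into the powers of the `2i - 1`.

In `D_n(y)`, deleting the first row replaces `y` by `y + 2`, and deleting the first column replaces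
`y` by `y + 2` after extracting the factors `(y + 2i + 1)(y + 2i + 2)` from the rows and
`1 / (2j + 2)` from the columns. Thus all five minors in the Desnanot–Jacobi identity are explicit
multiples of `D`, and cancelling their common factors leaves the recursion for `p_{2m-1} = D_m`.
-/

section Determinants

variable {m n R : Type*} [Fintype m] [DecidableEq m] [Fintype n] [DecidableEq n] [CommRing R]

lemma det_mul_det_adjugate_toBlocks₁₁ (M : Matrix (m ⊕ n) (m ⊕ n) R) :
    M.det * M.adjugate.toBlocks₁₁.det = M.det ^ Fintype.card m * M.toBlocks₂₂.det := by
  have hadj := M.mul_adjugate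
  rw [← M.adjugate.fromBlocks_toBlocks] at hadj
  nth_rewrite 1 [← M.fromBlocks_toBlocks] at hadj
  rw [Matrix.fromBlocks_multiply, ← Matrix.fromBlocks_one, Matrix.fromBlocks_smul,
    Matrix.fromBlocks_inj] at hadj
  obtain ⟨hadj₁₁, -, hadj₂₁, -⟩ := hadj
  have hmul : M * Matrix.fromBlocks M.adjugate.toBlocks₁₁ 0 M.adjugate.toBlocks₂₁ 1 =
      Matrix.fromBlocks (M.det • 1) M.toBlocks₁₂ 0 M.toBlocks₂₂ := by
    nth_rewrite 1 [← M.fromBlocks_toBlocks]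
    rw [Matrix.fromBlocks_multiply, hadj₁₁, hadj₂₁]
    simp
  simpa [Matrix.det_mul] using congrArg Matrix.det hmul

/-- **Jacobi's complementary minor formula** for the adjugate. -/
theorem det_adjugate_toBlocks₁₁ [Nonempty m] (M : Matrix (m ⊕ n) (m ⊕ n) R) :
    M.adjugate.toBlocks₁₁.det = M.det ^ (Fintype.card m - 1) * M.toBlocks₂₂.det := by
  -- The generic matrix has a nonzero determinant in a domain, which can be cancelled.
  let G := Matrix.mvPolynomialX (m ⊕ n) (m ⊕ n) ℤ
  have hG : G.adjugate.toBlocks₁₁.det = G.det ^ (Fintype.card m - 1) * G.toBlocks₂₂.det := by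
    apply mul_left_cancel₀ (Matrix.det_mvPolynomialX_ne_zero (m ⊕ n) ℤ)
    rw [det_mul_det_adjugate_toBlocks₁₁, ← mul_assoc, mul_pow_sub_one Fintype.card_ne_zero]
  let φ : MvPolynomial ((m ⊕ n) × (m ⊕ n)) ℤ →ₐ[ℤ] R := MvPolynomial.aeval fun p => M p.1 p.2
  have hev : φ.mapMatrix G = M := Matrix.mvPolynomialX_mapMatrix_aeval ℤ M
  have hev₁₁ : φ.mapMatrix G.adjugate.toBlocks₁₁ = M.adjugate.toBlocks₁₁ := by
    rw [← hev, ← AlgHom.map_adjugate]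
    rfl
  have hev₂₂ : φ.mapMatrix G.toBlocks₂₂ = M.toBlocks₂₂ := by
    rw [← hev]
    rfl
  simpa only [map_mul, map_pow, AlgHom.map_det, hev, hev₁₁, hev₂₂] using congrArg φ hG

lemma det_fromBlocks_zero₁₁ (B C D : Matrix n n R) :
    (Matrix.fromBlocks 0 B C D).det = (-1) ^ Fintype.card n * (B.det * C.det) := by
  have hswap : Matrix.fromBlocks 0 B C D = Matrix.fromBlocks B 0 D C *
      (Matrix.fromBlocks 1 1 1 0 * Matrix.fromBlocks 1 0 (-1) 1) := by
    simp [Matrix.fromBlocks_multiply]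
  rw [hswap, Matrix.det_mul, Matrix.det_mul, Matrix.det_fromBlocks_zero₁₂,
    Matrix.det_fromBlocks_one₁₁, Matrix.det_fromBlocks_zero₁₂]
  simp [Matrix.det_neg, mul_comm]

lemma det_fromBlocks_zero₁₁_eq_zero_of_card_lt (h : Fintype.card n < Fintype.card m)
    (B : Matrix m n R) (C : Matrix n m R) (D : Matrix n n R) :
    (Matrix.fromBlocks 0 B C D).det = 0 := by
  rw [Matrix.det_apply]
  refine sum_eq_zero fun σ _ => ?_
  obtain ⟨i, j, hij⟩ : ∃ i j, σ (Sum.inl i) = Sum.inl j := by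
    by_contra! hσ
    have hinr (i : m) : ∃ j, σ (Sum.inl i) = Sum.inr j := by
      cases hi : σ (Sum.inl i) with
      | inl j => exact absurd hi (hσ i j)
      | inr j => exact ⟨j, rfl⟩
    choose g hg using hinr
    have hinj : Function.Injective g := fun i j hij =>
      Sum.inl_injective (σ.injective (by rw [hg, hg, hij]))
    exact (Fintype.card_le_of_injective g hinj).not_gt h
  rw [prod_eq_zero (mem_univ (Sum.inl i)) (by rw [hij]; rfl), smul_zero]

/-- The indices below `n + 2`, split into the first and the last one and the interior ones. -/
def finEndpointsInterior (n : ℕ) : Fin 2 ⊕ Fin n ≃ Fin (n + 2) :=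
  Equiv.ofBijective (Sum.elim ![0, Fin.last (n + 1)] fun i => i.castSucc.succ) (by
    rw [Fintype.bijective_iff_injective_and_card]
    refine ⟨?_, by simp; omega⟩
    rintro (a | a) (b | b) h
    · fin_cases a <;> fin_cases b <;> simp_all [Fin.ext_iff]
    · fin_cases a <;> simp [Fin.ext_iff] at h; omega
    · fin_cases b <;> simp [Fin.ext_iff] at h; omega
    · simpa [Fin.ext_iff] using h)

/-- The **Desnanot–Jacobi identity**. -/
theorem det_mul_det_interior {n : ℕ} (M : Matrix (Fin (n + 2)) (Fin (n + 2)) R) :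
    M.det * (M.submatrix (fun i : Fin n => i.castSucc.succ) (fun i => i.castSucc.succ)).det =
      (M.submatrix Fin.castSucc Fin.castSucc).det * (M.submatrix Fin.succ Fin.succ).det -
        (M.submatrix Fin.succ Fin.castSucc).det * (M.submatrix Fin.castSucc Fin.succ).det := by
  let e := finEndpointsInterior n
  have hcorners : (M.adjugate.submatrix e e).toBlocks₁₁ =
      !![M.adjugate 0 0, M.adjugate 0 (Fin.last _);
        M.adjugate (Fin.last _) 0, M.adjugate (Fin.last _) (Fin.last _)] := by
    ext i j
    fin_cases i <;> fin_cases j <;> rfl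
  have hjacobi := det_adjugate_toBlocks₁₁ (M.submatrix e e)
  rw [Matrix.adjugate_submatrix_equiv_self, hcorners, Matrix.det_fin_two_of,
    Matrix.det_submatrix_equiv_self, Fintype.card_fin, pow_one] at hjacobi
  have hinterior : (M.submatrix e e).toBlocks₂₂ =
      M.submatrix (fun i : Fin n => i.castSucc.succ) (fun i => i.castSucc.succ) := rfl
  have hsign : (-1 : R) ^ (n + 1) * (-1) ^ (n + 1) = 1 := by rw [← mul_pow]; simp
  rw [← hinterior, ← hjacobi]
  simp only [Matrix.adjugate_fin_succ_eq_det_submatrix, Fin.succAbove_zero, Fin.succAbove_last,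
    Fin.val_zero, Fin.val_last, add_zero, zero_add, pow_zero, one_mul, pow_add _ (n + 1)]
  linear_combination ((M.submatrix Fin.castSucc Fin.castSucc).det *
    (M.submatrix Fin.succ Fin.succ).det - (M.submatrix Fin.succ Fin.castSucc).det *
      (M.submatrix Fin.castSucc Fin.succ).det) * hsign

end Determinants

/-- The `n × n` leading principal minor of the infinite matrix `f`. -/
def leadingMinor {R : Type*} [CommRing R] (f : ℕ → ℕ → R) (n : ℕ) : R :=
  Matrix.det (Matrix.of fun i j : Fin n => f i j)

section LeadingMinor

variable {R : Type*} [CommRing R]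

lemma map_leadingMinor {S : Type*} [CommRing S] (φ : R →+* S) (f : ℕ → ℕ → R) (n : ℕ) :
    φ (leadingMinor f n) = leadingMinor (fun i j => φ (f i j)) n :=
  φ.map_det _

lemma leadingMinor_mul_mul (u v : ℕ → R) (f : ℕ → ℕ → R) (n : ℕ) :
    leadingMinor (fun i j => u i * (v j * f i j)) n =
      (∏ i ∈ range n, u i) * ((∏ j ∈ range n, v j) * leadingMinor f n) := by
  rw [leadingMinor, leadingMinor, ← Fin.prod_univ_eq_prod_range, ← Fin.prod_univ_eq_prod_range,
    ← Matrix.det_mul_row, ← Matrix.det_mul_column]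
  rfl

lemma leadingMinor_desnanot_jacobi (f : ℕ → ℕ → R) (n : ℕ) :
    leadingMinor f (n + 2) * leadingMinor (fun i j => f (i + 1) (j + 1)) n =
      leadingMinor f (n + 1) * leadingMinor (fun i j => f (i + 1) (j + 1)) (n + 1) -
        leadingMinor (fun i j => f (i + 1) j) (n + 1) *
          leadingMinor (fun i j => f i (j + 1)) (n + 1) :=
  det_mul_det_interior (Matrix.of fun i j : Fin (n + 2) => f i j)

/-- The indices below `n`, split into the even and the odd ones. -/
def finEvenOdd (n : ℕ) : Fin ((n + 1) / 2) ⊕ Fin (n / 2) ≃ Fin n :=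
  Equiv.ofBijective
    (Sum.elim (fun i => ⟨2 * i, by omega⟩) (fun i => ⟨2 * i + 1, by omega⟩)) (by
      rw [Fintype.bijective_iff_injective_and_card]
      refine ⟨?_, by simp; omega⟩
      rintro (a | a) (b | b) h <;> simp [Fin.ext_iff] at h ⊢ <;> omega)

lemma leadingMinor_eq_det_fromBlocks (f : ℕ → ℕ → R) (n : ℕ) :
    leadingMinor f n = (Matrix.fromBlocks
      (Matrix.of fun i j : Fin ((n + 1) / 2) => f (2 * i) (2 * j))
      (Matrix.of fun (i : Fin ((n + 1) / 2)) (j : Fin (n / 2)) => f (2 * i) (2 * j + 1))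
      (Matrix.of fun (i : Fin (n / 2)) (j : Fin ((n + 1) / 2)) => f (2 * i + 1) (2 * j))
      (Matrix.of fun i j : Fin (n / 2) => f (2 * i + 1) (2 * j + 1))).det := by
  rw [leadingMinor, ← Matrix.det_submatrix_equiv_self (finEvenOdd n)]
  congr 1
  ext (i | i) (j | j) <;> rfl

lemma leadingMinor_of_odd_even_eq_zero {f : ℕ → ℕ → R} (h : ∀ i j, f (2 * i + 1) (2 * j) = 0)
    (n : ℕ) :
    leadingMinor f n = leadingMinor (fun i j => f (2 * i) (2 * j)) ((n + 1) / 2) *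
      leadingMinor (fun i j => f (2 * i + 1) (2 * j + 1)) (n / 2) := by
  simp only [leadingMinor_eq_det_fromBlocks f, h]
  exact Matrix.det_fromBlocks_zero₂₁ _ _ _

lemma leadingMinor_two_mul_of_even_even_eq_zero {f : ℕ → ℕ → R}
    (h : ∀ i j, f (2 * i) (2 * j) = 0) (n : ℕ) :
    leadingMinor f (2 * n) = (-1) ^ n * (leadingMinor (fun i j => f (2 * i) (2 * j + 1)) n *
      leadingMinor (fun i j => f (2 * i + 1) (2 * j)) n) := by
  rw [leadingMinor_eq_det_fromBlocks, show (2 * n + 1) / 2 = n by omega,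
    show 2 * n / 2 = n by omega]
  simp only [h]
  exact (det_fromBlocks_zero₁₁ _ _ _).trans (by rw [Fintype.card_fin]; rfl)

lemma leadingMinor_two_mul_add_one_of_even_even_eq_zero {f : ℕ → ℕ → R}
    (h : ∀ i j, f (2 * i) (2 * j) = 0) (n : ℕ) : leadingMinor f (2 * n + 1) = 0 := by
  simp only [leadingMinor_eq_det_fromBlocks, h]
  refine det_fromBlocks_zero₁₁_eq_zero_of_card_lt ?_ _ _ _
  simp only [Fintype.card_fin]
  omega

end LeadingMinor

section ScaledBinomial

open scoped Nat

variable {F : Type*} [Field F]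

lemma binomP_succ (y : F[X]) (m : ℕ) :
    binomP F y (m + 1) = (y - m) * (C ((m : F) + 1)⁻¹ * binomP F y m) := by
  simp only [binomP, prod_range_succ, Nat.factorial_succ, Nat.cast_mul, Nat.cast_succ,
    mul_inv, C_mul]
  ring

/-- The entry `(2j - 1)!! binom(y + 2j, 2j)`; for `j = 0` the truncated subtraction gives the
customary value `(-1)!! = 1`. -/
def scaledBinom (y : F[X]) (j : ℕ) : F[X] :=
  C (((2 * j - 1)‼ : ℕ) : F) * binomP F (y + 2 * (j : F[X])) (2 * j)

/-- The determinant with entries `(2j - 1)!! binom(y + 2i + 2j, 2j)`, `0 ≤ i, j < n`. -/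
def scaledBinomDet (y : F[X]) (n : ℕ) : F[X] :=
  leadingMinor (fun i j => scaledBinom (y + 2 * (i : F[X])) j) n

lemma scaledBinom_comp (y z : F[X]) (j : ℕ) :
    (scaledBinom y j).comp z = scaledBinom (y.comp z) j := by
  simp [scaledBinom, binomP, Polynomial.prod_comp]

lemma scaledBinomDet_comp (y z : F[X]) (n : ℕ) :
    (scaledBinomDet y n).comp z = scaledBinomDet (y.comp z) n := by
  rw [scaledBinomDet, ← coe_compRingHom_apply, map_leadingMinor]
  simp [scaledBinomDet, scaledBinom_comp]

lemma scaledBinomDet_zero (y : F[X]) : scaledBinomDet y 0 = 1 := by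
  simp [scaledBinomDet, leadingMinor]

lemma scaledBinomDet_one (y : F[X]) : scaledBinomDet y 1 = 1 := by
  simp [scaledBinomDet, leadingMinor, scaledBinom, binomP]

variable [CharZero F]

lemma scaledBinom_succ (y : F[X]) (j : ℕ) :
    scaledBinom y (j + 1) =
      (y + 1) * (y + 2) * (C (2 * (j : F) + 2)⁻¹ * scaledBinom (y + 2) j) := by
  have hinv : C (2 * (j : F) + 1) * C (2 * (j : F) + 1)⁻¹ = 1 := by
    rw [← C_mul, mul_inv_cancel₀ (by exact_mod_cast (2 * j).succ_ne_zero), C_1]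
  rw [scaledBinom, scaledBinom, show 2 * (j + 1) = 2 * j + 1 + 1 by ring, binomP_succ, binomP_succ,
    Nat.add_sub_cancel, Nat.doubleFactorial_add_one,
    show y + 2 * ((j + 1 : ℕ) : F[X]) = y + 2 + 2 * (j : F[X]) by push_cast; ring]
  push_cast
  rw [C_mul, add_assoc (2 * (j : F)) 1 1, one_add_one_eq_two]
  linear_combination (y + 1) * (y + 2) * C (2 * (j : F) + 2)⁻¹ * C (((2 * j - 1)‼ : ℕ) : F) *
    binomP F (y + 2 + 2 * (j : F[X])) (2 * j) * hinv

lemma binomP_two_mul (y : F[X]) (j : ℕ) :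
    binomP F (y + 2 * (j : F[X])) (2 * j) = C (((2 * j - 1)‼ : ℕ) : F)⁻¹ * scaledBinom y j := by
  rw [scaledBinom, ← mul_assoc, ← C_mul,
    inv_mul_cancel₀ (Nat.cast_ne_zero.mpr (Nat.doubleFactorial_pos _).ne'), C_1, one_mul]

lemma binomP_two_mul_add_one (y : F[X]) (j : ℕ) :
    binomP F (y + 2 * (j : F[X])) (2 * j + 1) =
      y * (C (((2 * j + 1)‼ : ℕ) : F)⁻¹ * scaledBinom y j) := by
  rw [binomP_succ, binomP_two_mul, Nat.doubleFactorial_add_one]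
  push_cast
  rw [mul_inv, C_mul]
  ring

lemma leadingMinor_binomP_two_mul (y : F[X]) (n : ℕ) :
    leadingMinor (fun i j => binomP F (y + 2 * (i : F[X]) + 2 * (j : F[X])) (2 * j)) n =
      C (∏ j ∈ range n, (((2 * j - 1)‼ : ℕ) : F)⁻¹) * scaledBinomDet y n := by
  have h := leadingMinor_mul_mul (fun _ => 1) (fun j => C (((2 * j - 1)‼ : ℕ) : F)⁻¹)
    (fun i j => scaledBinom (y + 2 * (i : F[X])) j) n
  simpa only [binomP_two_mul, scaledBinomDet, map_prod, one_mul, prod_const_one] using h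

lemma leadingMinor_binomP_two_mul_add_one (y : F[X]) (n : ℕ) :
    leadingMinor (fun i j => binomP F (y + 2 * (i : F[X]) + 2 * (j : F[X])) (2 * j + 1)) n =
      (∏ i ∈ range n, (y + 2 * (i : F[X]))) *
        (C (∏ j ∈ range n, (((2 * j + 1)‼ : ℕ) : F)⁻¹) * scaledBinomDet y n) := by
  simp only [binomP_two_mul_add_one, leadingMinor_mul_mul, scaledBinomDet, map_prod]

lemma leadingMinor_scaledBinom_succ (y : F[X]) (n : ℕ) :
    leadingMinor (fun i j => scaledBinom (y + 2 * (i : F[X])) (j + 1)) n =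
      (∏ i ∈ range n, ((y + 2 * (i : F[X]) + 1) * (y + 2 * (i : F[X]) + 2))) *
        (C (∏ j ∈ range n, (2 * (j : F) + 2)⁻¹) * scaledBinomDet (y + 2) n) := by
  simp only [scaledBinom_succ, leadingMinor_mul_mul, scaledBinomDet, map_prod,
    add_right_comm y 2]

theorem scaledBinomDet_rec (n : ℕ) :
    (2 * (n : F[X]) + 2) * scaledBinomDet (X + 4) n * scaledBinomDet X (n + 2) =
      (X + (2 * (n : F[X]) + 3)) * (X + (2 * (n : F[X]) + 4)) * scaledBinomDet X (n + 1) *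
          scaledBinomDet (X + 4) (n + 1) -
        (X + 1) * (X + 2) * scaledBinomDet (X + 2) (n + 1) ^ 2 := by
  have hshift (i : ℕ) : (X : F[X]) + 2 * ((i + 1 : ℕ) : F[X]) = X + 2 + 2 * (i : F[X]) := by
    push_cast; ring
  have hdesnanot :=
    leadingMinor_desnanot_jacobi (fun i j => scaledBinom ((X : F[X]) + 2 * (i : F[X])) j) n
  simp only [hshift, leadingMinor_scaledBinom_succ, ← scaledBinomDet.eq_def] at hdesnanot
  rw [prod_range_succ' fun i : ℕ => ((X : F[X]) + 2 * (i : F[X]) + 1) * (X + 2 * (i : F[X]) + 2),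
    prod_range_succ, prod_range_succ, C_mul, show (X : F[X]) + 2 + 2 = X + 4 by ring] at hdesnanot
  simp only [hshift] at hdesnanot
  set W := ∏ i ∈ range n, (((X : F[X]) + 2 + 2 * (i : F[X]) + 1) * (X + 2 + 2 * (i : F[X]) + 2))
  set K := ∏ j ∈ range n, (2 * (j : F) + 2)⁻¹
  have hK : K ≠ 0 := prod_ne_zero_iff.mpr fun j _ =>
    inv_ne_zero (by exact_mod_cast (2 * j + 1).succ_ne_zero)
  have hW : W ≠ 0 := prod_ne_zero_iff.mpr fun i _ => by
    have h₁ : (X : F[X]) + 2 + 2 * (i : F[X]) + 1 = X + C (2 * (i : F) + 3) := by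
      simp only [map_add, map_mul, map_ofNat, map_natCast]; ring
    have h₂ : (X : F[X]) + 2 + 2 * (i : F[X]) + 2 = X + C (2 * (i : F) + 4) := by
      simp only [map_add, map_mul, map_ofNat, map_natCast]; ring
    rw [h₁, h₂]
    exact mul_ne_zero (X_add_C_ne_zero _) (X_add_C_ne_zero _)
  have hinv : (2 * (n : F[X]) + 2) * C (2 * (n : F) + 2)⁻¹ = 1 := by
    rw [show 2 * (n : F[X]) + 2 = C (2 * (n : F) + 2) by
        simp only [map_add, map_mul, map_ofNat, map_natCast], ← C_mul,
      mul_inv_cancel₀ (by exact_mod_cast (2 * n + 1).succ_ne_zero), C_1]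
  apply mul_left_cancel₀ (mul_ne_zero hW (C_ne_zero.mpr hK))
  push_cast at hdesnanot
  linear_combination (2 * (n : F[X]) + 2) * hdesnanot +
    W * C K * ((X + (2 * (n : F[X]) + 3)) * (X + (2 * (n : F[X]) + 4)) * scaledBinomDet X (n + 1) *
          scaledBinomDet (X + 4) (n + 1) -
        (X + 1) * (X + 2) * scaledBinomDet (X + 2) (n + 1) ^ 2) * hinv

lemma scaledBinomDet_X_two : scaledBinomDet (X : F[X]) 2 = 2 * X + 5 := by
  have h := scaledBinomDet_rec (F := F) 0
  simp only [scaledBinomDet_zero, zero_add, scaledBinomDet_one, Nat.cast_zero] at h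
  apply mul_left_cancel₀ (two_ne_zero : (2 : F[X]) ≠ 0)
  linear_combination h

end ScaledBinomial

section Factorization

open scoped Nat

variable {F : Type*} [Field F]

lemma aF_one (m : ℤ) : aF F 1 m = if Even m then 0 else 1 := by
  have hterm (l : ℕ) : (-1 : F) ^ (-(l + 1 : ℤ)) = -(-1) ^ l := by
    rw [zpow_neg, ← Nat.cast_succ, zpow_natCast, ← inv_pow, inv_neg_one, pow_succ, mul_neg_one]
  rcases lt_or_ge 0 m with hm | hm
  · lift m to ℕ using hm.le
    rw [aF, if_pos hm, neg_one_geom_sum, Int.toNat_natCast]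
    simp only [Int.even_coe_nat]
  · obtain ⟨m, rfl⟩ := Int.exists_eq_neg_ofNat hm
    rw [aF, if_neg hm.not_gt, neg_neg, Int.toNat_natCast]
    simp only [hterm, sum_neg_distrib, neg_neg, neg_one_geom_sum, even_neg, Int.even_coe_nat]

lemma dF_one_eq_leadingMinor (n : ℕ) (k : ℤ) :
    dF F n k 1 = leadingMinor (fun i j =>
      if Even ((j : ℤ) - i + k) then 0 else binomP F (X + (i : F[X]) + (j : F[X])) j) n := by
  simp only [dF, leadingMinor, aF_one, apply_ite C, C_0, C_1, mul_ite, mul_zero, mul_one]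

lemma dF_odd_eq_leadingMinor_mul (k : ℤ) (n : ℕ) :
    dF F n (2 * k + 1) 1 =
      leadingMinor (fun i j => binomP F (X + 2 * (i : F[X]) + 2 * (j : F[X])) (2 * j))
          ((n + 1) / 2) *
        leadingMinor (fun i j => binomP F (X + 2 + 2 * (i : F[X]) + 2 * (j : F[X])) (2 * j + 1))
          (n / 2) := by
  rw [dF_one_eq_leadingMinor, leadingMinor_of_odd_even_eq_zero
    fun i j => if_pos ⟨j - i + k, by push_cast; ring⟩]
  congr 3 with i j <;> rw [if_neg (by simp [parity_simps])] <;> push_cast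
  · rfl
  · congr 2
    ring

lemma dF_even_two_mul_eq_leadingMinor_mul (k : ℤ) (n : ℕ) :
    dF F (2 * n) (2 * k) 1 = (-1) ^ n *
      (leadingMinor (fun i j => binomP F (X + 1 + 2 * (i : F[X]) + 2 * (j : F[X])) (2 * j + 1)) n *
        leadingMinor (fun i j => binomP F (X + 1 + 2 * (i : F[X]) + 2 * (j : F[X])) (2 * j))
          n) := by
  rw [dF_one_eq_leadingMinor, leadingMinor_two_mul_of_even_even_eq_zero
    fun i j => if_pos ⟨j - i + k, by push_cast; ring⟩]
  congr 4 with i j <;> rw [if_neg (by simp [parity_simps])] <;> push_cast <;> congr 2 <;> ring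

theorem dF_even_two_mul_add_one (k : ℤ) (n : ℕ) : dF F (2 * n + 1) (2 * k) 1 = 0 := by
  rw [dF_one_eq_leadingMinor, leadingMinor_two_mul_add_one_of_even_even_eq_zero
    fun i j => if_pos ⟨j - i + k, by push_cast; ring⟩]

lemma prod_Icc_two_mul_sub_one (n : ℕ) :
    ∏ i ∈ Icc 2 n, (2 * (i : F) - 1) = (((2 * n - 1)‼ : ℕ) : F) := by
  induction n with
  | zero => simp
  | succ n ih =>
    rcases n with _ | n
    · simp
    · rw [prod_Icc_succ_top (by omega), ih,
        show 2 * (n + 1 + 1) - 1 = 2 * (n + 1) + 1 by omega, Nat.doubleFactorial_add_one]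
      push_cast
      ring

variable [CharZero F]

lemma prod_zpow_succ (n : ℕ) :
    ∏ i ∈ Icc 2 ((n + 1) / 2), (2 * (i : F) - 1) ^ (-(((n + 1 : ℕ) : ℤ) + 1 - 2 * (i : ℤ))) =
      (∏ i ∈ Icc 2 (n / 2), (2 * (i : F) - 1) ^ (-((n : ℤ) + 1 - 2 * (i : ℤ)))) *
        (((2 * ((n + 1) / 2) - 1)‼ : ℕ) : F)⁻¹ := by
  have hextend : ∏ i ∈ Icc 2 (n / 2), (2 * (i : F) - 1) ^ (-((n : ℤ) + 1 - 2 * (i : ℤ))) =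
      ∏ i ∈ Icc 2 ((n + 1) / 2), (2 * (i : F) - 1) ^ (-((n : ℤ) + 1 - 2 * (i : ℤ))) := by
    refine prod_subset (Icc_subset_Icc_right (by omega)) fun i hi hi' => ?_
    rw [mem_Icc] at hi hi'
    rw [show -((n : ℤ) + 1 - 2 * (i : ℤ)) = 0 by omega, zpow_zero]
  rw [hextend, ← prod_Icc_two_mul_sub_one, ← prod_inv_distrib, ← prod_mul_distrib]
  refine prod_congr rfl fun i hi => ?_
  have hbase : 2 * (i : F) - 1 ≠ 0 := by
    rw [mem_Icc] at hi
    rw [sub_ne_zero]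
    exact_mod_cast show 2 * i ≠ 1 by omega
  rw [← zpow_neg_one, ← zpow_add₀ hbase]
  congr 1
  push_cast
  ring

lemma prod_zpow_eq_prod_doubleFactorial (n : ℕ) :
    ∏ i ∈ Icc 2 (n / 2), (2 * (i : F) - 1) ^ (-((n : ℤ) + 1 - 2 * (i : ℤ))) =
      (∏ j ∈ range ((n + 1) / 2), (((2 * j - 1)‼ : ℕ) : F)⁻¹) *
        ∏ j ∈ range (n / 2), (((2 * j + 1)‼ : ℕ) : F)⁻¹ := by
  induction n with
  | zero => simp
  | succ n ih =>
    rw [prod_zpow_succ, ih]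
    obtain ⟨m, rfl | rfl⟩ := n.even_or_odd'
    · rw [show (2 * m + 1 + 1) / 2 = m + 1 by omega, show (2 * m + 1) / 2 = m by omega,
        show 2 * m / 2 = m by omega, prod_range_succ _ m]
      ring
    · rw [show (2 * m + 1 + 1 + 1) / 2 = m + 1 by omega, show (2 * m + 1 + 1) / 2 = m + 1 by omega,
        show (2 * m + 1) / 2 = m by omega,
        prod_range_succ (fun j => (((2 * j + 1)‼ : ℕ) : F)⁻¹) m,
        show 2 * (m + 1) - 1 = 2 * m + 1 by omega]
      ring

theorem dF_odd (k : ℤ) (n : ℕ) :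
    dF F n (2 * k + 1) 1 =
      C (∏ i ∈ Icc 2 (n / 2), (2 * (i : F) - 1) ^ (-((n : ℤ) + 1 - 2 * (i : ℤ)))) *
        (∏ i ∈ range (n / 2), (X + C (2 * (i : F) + 2))) *
        (scaledBinomDet X ((n + 1) / 2) * scaledBinomDet (X + 2) (n / 2)) := by
  have hlin (i : ℕ) : (X : F[X]) + C (2 * (i : F) + 2) = X + 2 + 2 * (i : F[X]) := by
    simp only [map_add, map_mul, map_ofNat, map_natCast]; ring
  rw [dF_odd_eq_leadingMinor_mul, leadingMinor_binomP_two_mul, leadingMinor_binomP_two_mul_add_one,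
    prod_zpow_eq_prod_doubleFactorial, C_mul]
  simp only [hlin]
  ring

theorem dF_even_two_mul (k : ℤ) (n : ℕ) :
    dF F (2 * n) (2 * k) 1 =
      C ((-1) ^ n * ∏ i ∈ Icc 2 n, (2 * (i : F) - 1) ^ (-(2 * (n : ℤ) + 1 - 2 * (i : ℤ)))) *
        (∏ i ∈ range n, (X + C (2 * (i : F) + 1))) * scaledBinomDet (X + 1) n ^ 2 := by
  have hlin (i : ℕ) : (X : F[X]) + C (2 * (i : F) + 1) = X + 1 + 2 * (i : F[X]) := by
    simp only [map_add, map_mul, map_ofNat, map_natCast, map_one]; ring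
  have hconst := prod_zpow_eq_prod_doubleFactorial (F := F) (2 * n)
  rw [show (2 * n + 1) / 2 = n by omega, show 2 * n / 2 = n by omega] at hconst
  push_cast at hconst
  rw [dF_even_two_mul_eq_leadingMinor_mul, leadingMinor_binomP_two_mul,
    leadingMinor_binomP_two_mul_add_one, hconst]
  simp only [hlin, C_mul, C_pow, C_neg, C_1]
  ring

end Factorization

/-- The polynomials `p_m` of the theorem: `p_{2m-1}(x)` is the `m × m` determinant
`scaledBinomDet` at `x`, and `p_{2m}(x)` is the same determinant at `x + 2`. -/
def factorPoly (F : Type*) [Field F] (m : ℕ) : F[X] :=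
  scaledBinomDet (if Even m then X + 2 else X) ((m + 1) / 2)

section FactorPoly

variable {F : Type*} [Field F]

lemma factorPoly_two_mul (m : ℕ) : factorPoly F (2 * m) = scaledBinomDet (X + 2) m := by
  rw [factorPoly, if_pos (even_two_mul m), show (2 * m + 1) / 2 = m by omega]

lemma factorPoly_two_mul_add_one (m : ℕ) :
    factorPoly F (2 * m + 1) = scaledBinomDet X (m + 1) := by
  rw [factorPoly, if_neg (by simp), show (2 * m + 1 + 1) / 2 = m + 1 by omega]

lemma factorPoly_succ_mul (n : ℕ) :
    factorPoly F (n + 1) * factorPoly F n =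
      scaledBinomDet X ((n + 2) / 2) * scaledBinomDet (X + 2) ((n + 1) / 2) := by
  obtain ⟨m, rfl | rfl⟩ := n.even_or_odd'
  · rw [factorPoly_two_mul_add_one, factorPoly_two_mul, show (2 * m + 2) / 2 = m + 1 by omega,
      show (2 * m + 1) / 2 = m by omega]
  · rw [show 2 * m + 1 + 1 = 2 * (m + 1) by ring, factorPoly_two_mul, factorPoly_two_mul_add_one,
      show (2 * m + 1 + 2) / 2 = m + 1 by omega, show 2 * (m + 1) / 2 = m + 1 by omega, mul_comm]

end FactorPoly

theorem statement17_general (F : Type*) [Field F] [CharZero F] :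
    ∃ p : ℕ → F[X],
      p 0 = 1 ∧ p 1 = 1 ∧ p 3 = 2 * X + 5 ∧
      (∀ m : ℕ, 1 ≤ m → p (2 * m) = (p (2 * m - 1)).comp (X + 2)) ∧
      (∀ m : ℕ, 2 ≤ m →
        (2 * m : F[X]) * (p (2 * m - 3)).comp (X + 4) * p (2 * m + 1) =
          (X + (2 * m + 1 : F[X])) * (X + (2 * m + 2 : F[X])) *
              p (2 * m - 1) * (p (2 * m - 1)).comp (X + 4) -
            (X + 1) * (X + 2) * ((p (2 * m - 1)).comp (X + 2)) ^ 2) ∧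
      (∀ k : ℤ, ∀ n : ℕ, 1 ≤ n →
        (dF F n (2 * k + 1) 1 =
          C (∏ i ∈ Icc 2 (n / 2), (2 * (i : F) - 1) ^ (-((n : ℤ) + 1 - 2 * (i : ℤ)))) *
            (∏ i ∈ range (n / 2), (X + C (2 * (i : F) + 2))) *
            p n * p (n - 1)) ∧
        (dF F (2 * n) (2 * k) 1 =
          C ((-1 : F) ^ n * ∏ i ∈ Icc 2 n,
              (2 * (i : F) - 1) ^ (-((2 * (n : ℤ)) + 1 - 2 * (i : ℤ)))) *
            (∏ i ∈ range n, (X + C (2 * (i : F) + 1))) *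
            ((p (2 * n)).comp (X - 1)) ^ 2) ∧
        (dF F (2 * n + 1) (2 * k) 1 = 0)) := by
  refine ⟨factorPoly F, ?_, ?_, ?_, fun m hm => ?_, fun m hm => ?_,
    fun k n hn => ⟨?_, ?_, dF_even_two_mul_add_one k n⟩⟩
  · exact (factorPoly_two_mul 0).trans (scaledBinomDet_zero _)
  · exact (factorPoly_two_mul_add_one 0).trans (scaledBinomDet_one _)
  · exact (factorPoly_two_mul_add_one 1).trans scaledBinomDet_X_two
  · obtain ⟨l, rfl⟩ := Nat.exists_eq_add_of_le' hm
    rw [show 2 * (l + 1) - 1 = 2 * l + 1 by omega, factorPoly_two_mul, factorPoly_two_mul_add_one,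
      scaledBinomDet_comp, X_comp]
  · obtain ⟨l, rfl⟩ := Nat.exists_eq_add_of_le' hm
    rw [show 2 * (l + 2) - 3 = 2 * l + 1 by omega, show 2 * (l + 2) - 1 = 2 * (l + 1) + 1 by omega]
    simp only [factorPoly_two_mul_add_one, scaledBinomDet_comp, X_comp]
    have hrec := scaledBinomDet_rec (F := F) (l + 1)
    push_cast at hrec ⊢
    linear_combination hrec
  · obtain ⟨l, rfl⟩ := Nat.exists_eq_add_of_le' hn
    rw [dF_odd, Nat.add_sub_cancel, mul_assoc _ (factorPoly F (l + 1)), factorPoly_succ_mul]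
  · rw [dF_even_two_mul, factorPoly_two_mul, scaledBinomDet_comp,
      show (X + 2 : F[X]).comp (X - 1) = X + 1 by simp; ring]

/-- there are polynomials p_m(x) ∈ ℚ[x] with p_0 = p_1 = 1, p_3 = 2x+5,
p_{2m}(x) = p_{2m-1}(x+2), satisfying the stated recursion, and giving the factorisations
of d_{n,2k+1}(x,1), d_{2n,2k}(x,1) and d_{2n+1,2k}(x,1). -/
theorem statement17 :
    ∃ p : ℕ → Polynomial ℚ,
      p 0 = 1 ∧ p 1 = 1 ∧ p 3 = 2 * Polynomial.X + 5 ∧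
      (∀ m : ℕ, 1 ≤ m → p (2 * m) = (p (2 * m - 1)).comp (Polynomial.X + 2)) ∧
      (∀ m : ℕ, 2 ≤ m →
        (2 * m : Polynomial ℚ) * (p (2 * m - 3)).comp (Polynomial.X + 4) * p (2 * m + 1) =
          (Polynomial.X + (2 * m + 1 : Polynomial ℚ)) *
              (Polynomial.X + (2 * m + 2 : Polynomial ℚ)) *
              p (2 * m - 1) * (p (2 * m - 1)).comp (Polynomial.X + 4) -
            (Polynomial.X + 1) * (Polynomial.X + 2) *
              ((p (2 * m - 1)).comp (Polynomial.X + 2)) ^ 2) ∧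
      (∀ k : ℤ, ∀ n : ℕ, 1 ≤ n →
        (dF ℚ n (2 * k + 1) 1 =
          Polynomial.C (∏ i ∈ Finset.Icc 2 (n / 2),
              (2 * (i : ℚ) - 1) ^ (-((n : ℤ) + 1 - 2 * (i : ℤ)))) *
            (∏ i ∈ Finset.range (n / 2), (Polynomial.X + Polynomial.C (2 * (i : ℚ) + 2))) *
            p n * p (n - 1)) ∧
        (dF ℚ (2 * n) (2 * k) 1 =
          Polynomial.C ((-1 : ℚ) ^ n * ∏ i ∈ Finset.Icc 2 n,
              (2 * (i : ℚ) - 1) ^ (-((2 * (n : ℤ)) + 1 - 2 * (i : ℤ)))) *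
            (∏ i ∈ Finset.range n, (Polynomial.X + Polynomial.C (2 * (i : ℚ) + 1))) *
            ((p (2 * n)).comp (Polynomial.X - 1)) ^ 2) ∧
        (dF ℚ (2 * n + 1) (2 * k) 1 = 0)) :=
  statement17_general ℚ

end
end

section
/- Let q ∈ ℂ be a primitive sixth root of unity and k an integer. Then for every positive integer n the following identity holds in ℂ[x]: d_{n,3−k}(x,q²) = q^{−n} · det_{1≤i,j≤n}( binom(x+i+j−2, j−1) + q^k·δ_{i,j} ), where δ_{i,j} is the Kronecker delta. (Note q² is a primitive third root of unity, so the left-hand side is d_{n,3−k} evaluated at the parameter q².) -/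
open Polynomial Finset

noncomputable section

/-!
Let `P_x(s)` be the lower triangular matrix with entries `binom(x+i, i-j) s^(i-j)`. For fixed `x`
these matrices form a one-parameter group, `P_x(s) P_x(r) = P_x(s + r)`, and conjugation by
`D = diag(qⁱ)` rescales the parameter: `D P_x(s) D⁻¹ = P_x(q s)`. Vandermonde's identity is the LU
decomposition `B = P_0(1) P_x(1)ᵀ` of `B = (binom(x+i+j, j))`.

The root of unity enters only through `q + q⁻¹ = 1`. On the one hand it makes the entries of
`d_{n,3-k}(x, q²)` equal to `q⁻¹` times those of `B + q^k D B D⁻¹`. On the other hand it gives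
`B + t D B D⁻¹ = P_0(1) M P_x(q⁻¹)ᵀ` and `B + t = P_0(1) (D M D⁻¹)` with the same
`M = P_x(q)ᵀ + t P_0(-q⁻¹)`, so the two determinants agree.
-/

theorem sum_fin_ite_eq_sum_antidiagonal {M : Type*} [AddCommMonoid M] {n i j : ℕ} (hi : i < n)
    (hji : j ≤ i) (f : ℕ → ℕ → M) :
    ∑ k : Fin n, (if j ≤ k ∧ k ≤ i then f (i - k) (k - j) else 0) =
      ∑ p ∈ antidiagonal (i - j), f p.1 p.2 := by
  rw [Fin.sum_univ_eq_sum_range (fun k => if j ≤ k ∧ k ≤ i then f (i - k) (k - j) else 0),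
    ← sum_filter]
  refine sum_bij' (fun k _ => (i - k, k - j)) (fun p _ => p.2 + j) ?_ ?_ ?_ ?_ ?_
  all_goals simp only [mem_filter, mem_range, HasAntidiagonal.mem_antidiagonal, Prod.forall,
    Prod.mk.injEq]
  all_goals lia

section Pascal

variable {R : Type*} [CommRing R] [BinomialRing R] {n : ℕ}

/-- The truncated generalized Pascal matrix `P_x(s)`: it is lower triangular with `(i, j)` entry
`binom(x + i, i - j) s^(i - j)` for `j ≤ i`, indices starting at `0`. -/
def pascalMatrix (n : ℕ) (x s : R) : Matrix (Fin n) (Fin n) R :=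
  Matrix.of fun i j => if j ≤ i then Ring.choose (x + (i : ℕ)) (i - j : ℕ) * s ^ (i - j : ℕ) else 0

/-- The matrix `B` of the generalized binomial coefficients `binom(x + i + j, j)`, indices
starting at `0`. -/
def chooseMatrix (n : ℕ) (x : R) : Matrix (Fin n) (Fin n) R :=
  Matrix.of fun i j => Ring.choose (x + (i : ℕ) + (j : ℕ)) j

theorem pascalMatrix_isLowerTriangular (x s : R) : (pascalMatrix n x s).IsLowerTriangular :=
  fun _ _ hij => if_neg (not_le.2 hij)

theorem det_pascalMatrix (x s : R) : (pascalMatrix n x s).det = 1 := by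
  rw [Matrix.det_of_isLowerTriangular _ (pascalMatrix_isLowerTriangular x s)]
  simp [pascalMatrix]

theorem pascalMatrix_zero (x : R) : pascalMatrix n x 0 = 1 := by
  ext i j
  rw [Matrix.one_apply]
  rcases lt_trichotomy i j with h | rfl | h
  · rw [pascalMatrix_isLowerTriangular x 0 h, if_neg h.ne]
  · simp [pascalMatrix]
  · have hsub : (i : ℕ) - j ≠ 0 := by lia
    simp [pascalMatrix, hsub, h.ne']

theorem choose_mul_choose_add_natCast (x : R) {i j k : ℕ} (hjk : j ≤ k) (hki : k ≤ i) :
    Ring.choose (x + i) (i - k) * Ring.choose (x + k) (k - j) =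
      Ring.choose (x + i) (i - j) * ((i - j).choose (i - k) : ℕ) := by
  have h := Ring.choose_smul_choose (x + (i : R)) (Nat.sub_le_sub_left hjk i)
  rw [show x + (i : R) - (i - k : ℕ) = x + k by rw [Nat.cast_sub hki]; ring,
    show i - j - (i - k) = k - j by lia, nsmul_eq_mul] at h
  rw [← h, mul_comm]

theorem pascalMatrix_mul (x s r : R) :
    pascalMatrix n x s * pascalMatrix n x r = pascalMatrix n x (s + r) := by
  ext i j
  have hterm (k : Fin n) : pascalMatrix n x s i k * pascalMatrix n x r k j =
      if (j : ℕ) ≤ k ∧ (k : ℕ) ≤ i then Ring.choose (x + (i : ℕ)) (i - j : ℕ) *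
        (s ^ (i - k : ℕ) * r ^ (k - j : ℕ) * ((i - j : ℕ).choose (i - k) : ℕ)) else 0 := by
    simp only [pascalMatrix, Matrix.of_apply, Fin.le_def, ite_and]
    split_ifs with hki hjk
    · linear_combination s ^ (i - k : ℕ) * r ^ (k - j : ℕ) *
        choose_mul_choose_add_natCast x hjk hki
    all_goals simp
  rw [Matrix.mul_apply, sum_congr rfl fun k _ => hterm k]
  by_cases hji : j ≤ i
  · rw [sum_fin_ite_eq_sum_antidiagonal i.isLt hji fun a b =>
      Ring.choose (x + (i : ℕ)) (i - j : ℕ) * (s ^ a * r ^ b * ((i - j : ℕ).choose a : ℕ)),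
      ← mul_sum]
    simp [pascalMatrix, hji, (Commute.all s r).add_pow', nsmul_eq_mul, mul_comm]
  · rw [pascalMatrix_isLowerTriangular x _ (not_le.1 hji)]
    exact sum_eq_zero fun k _ => if_neg fun h => hji (Fin.le_def.2 (h.1.trans h.2))

theorem pascalMatrix_zero_one_apply (i j : Fin n) :
    pascalMatrix n (0 : R) 1 i j = ((i : ℕ).choose j : ℕ) := by
  by_cases hji : j ≤ i
  · simp [pascalMatrix, hji, Ring.choose_natCast, Nat.choose_symm (Fin.le_def.1 hji)]
  · simp [pascalMatrix, hji, Nat.choose_eq_zero_of_lt (Fin.lt_def.1 (not_le.1 hji))]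

/-- Vandermonde's identity as an LU decomposition. -/
theorem pascalMatrix_mul_transpose (x : R) :
    pascalMatrix n 0 1 * (pascalMatrix n x 1).transpose = chooseMatrix n x := by
  ext i j
  have hterm (k : Fin n) :
      pascalMatrix n (0 : R) 1 i k * (pascalMatrix n x 1).transpose k j =
        if 0 ≤ (k : ℕ) ∧ (k : ℕ) ≤ j then
          Ring.choose (x + (j : ℕ)) (j - k : ℕ) * Ring.choose ((i : ℕ) : R) (k - 0 : ℕ)
        else 0 := by
    rw [pascalMatrix_zero_one_apply, Ring.choose_natCast]
    simp [pascalMatrix, mul_comm]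
  rw [Matrix.mul_apply, sum_congr rfl fun k _ => hterm k,
    sum_fin_ite_eq_sum_antidiagonal j.isLt (Nat.zero_le _) fun a b =>
      Ring.choose (x + (j : ℕ)) a * Ring.choose ((i : ℕ) : R) b,
    ← Ring.add_choose_eq _ (Commute.all _ _), chooseMatrix, Matrix.of_apply, add_right_comm,
    Nat.sub_zero]

end Pascal

section PowDiagonal

variable {R : Type*} [CommRing R] {q q' : R} {n : ℕ}

/-- The matrix `D = diag(1, q, …, q^(n-1))`, by which Pascal matrices are conjugated. For
`q * q' = 1` its inverse is written `powDiagonal n q'`, so that no inversion in `R` is needed. -/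
def powDiagonal (n : ℕ) (q : R) : Matrix (Fin n) (Fin n) R :=
  Matrix.diagonal fun i => q ^ (i : ℕ)

theorem powDiagonal_mul_powDiagonal (h : q * q' = 1) :
    powDiagonal n q * powDiagonal n q' = 1 := by
  simp [powDiagonal, Matrix.diagonal_mul_diagonal, ← mul_pow, h]

theorem powDiagonal_mul_mul_apply (A : Matrix (Fin n) (Fin n) R) (i j : Fin n) :
    (powDiagonal n q * A * powDiagonal n q') i j = q ^ (i : ℕ) * A i j * q' ^ (j : ℕ) := by
  rw [powDiagonal, powDiagonal, Matrix.mul_diagonal, Matrix.diagonal_mul]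

theorem transpose_powDiagonal_mul_mul (A : Matrix (Fin n) (Fin n) R) :
    (powDiagonal n q * A * powDiagonal n q').transpose =
      powDiagonal n q' * A.transpose * powDiagonal n q := by
  simp [powDiagonal, Matrix.transpose_mul, Matrix.mul_assoc]

theorem powDiagonal_conj_mul (h : q * q' = 1) (A B : Matrix (Fin n) (Fin n) R) :
    powDiagonal n q * (A * B) * powDiagonal n q' =
      (powDiagonal n q * A * powDiagonal n q') * (powDiagonal n q * B * powDiagonal n q') := by
  calc powDiagonal n q * (A * B) * powDiagonal n q'
      = powDiagonal n q * A * 1 * B * powDiagonal n q' := by simp [Matrix.mul_assoc]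
    _ = powDiagonal n q * A * (powDiagonal n q' * powDiagonal n q) * B * powDiagonal n q' := by
      rw [powDiagonal_mul_powDiagonal (mul_comm q q' ▸ h)]
    _ = (powDiagonal n q * A * powDiagonal n q') * (powDiagonal n q * B * powDiagonal n q') := by
      simp only [Matrix.mul_assoc]

variable [BinomialRing R]

theorem powDiagonal_conj_pascalMatrix (h : q * q' = 1) (x s : R) :
    powDiagonal n q * pascalMatrix n x s * powDiagonal n q' = pascalMatrix n x (q * s) := by
  ext i j
  rw [powDiagonal_mul_mul_apply]
  by_cases hji : j ≤ i
  · have hpow : q ^ (i : ℕ) * q' ^ (j : ℕ) = q ^ (i - j : ℕ) := by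
      rw [← Nat.sub_add_cancel (Fin.le_def.1 hji), pow_add, mul_assoc, ← mul_pow, h, one_pow,
        mul_one, Nat.add_sub_cancel]
    simp only [pascalMatrix, Matrix.of_apply, if_pos hji, mul_pow, ← hpow]
    ring
  · simp [pascalMatrix, hji]

theorem powDiagonal_conj_transpose_pascalMatrix (h : q * q' = 1) (x s : R) :
    powDiagonal n q * (pascalMatrix n x s).transpose * powDiagonal n q' =
      (pascalMatrix n x (q' * s)).transpose := by
  rw [← transpose_powDiagonal_mul_mul, powDiagonal_conj_pascalMatrix (mul_comm q q' ▸ h)]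

theorem chooseMatrix_add_smul_conj (hadd : q + q' = 1) (hmul : q * q' = 1) (x t : R) :
    chooseMatrix n x + t • (powDiagonal n q * chooseMatrix n x * powDiagonal n q') =
      pascalMatrix n 0 1 * ((pascalMatrix n x q).transpose + t • pascalMatrix n 0 (-q')) *
        (pascalMatrix n x q').transpose := by
  have hU : (pascalMatrix n x q).transpose * (pascalMatrix n x q').transpose =
      (pascalMatrix n x 1).transpose := by
    rw [← Matrix.transpose_mul, pascalMatrix_mul, add_comm, hadd]
  have hP : pascalMatrix n (0 : R) 1 * pascalMatrix n 0 (-q') = pascalMatrix n 0 q := by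
    rw [pascalMatrix_mul, ← hadd, add_neg_cancel_right]
  rw [← pascalMatrix_mul_transpose, powDiagonal_conj_mul hmul,
    powDiagonal_conj_pascalMatrix hmul, powDiagonal_conj_transpose_pascalMatrix hmul, mul_one,
    mul_one, Matrix.mul_add, Matrix.add_mul, Matrix.mul_assoc, hU, Matrix.mul_smul,
    Matrix.smul_mul, hP]

theorem chooseMatrix_add_smul_one (hmul : q * q' = 1) (x t : R) :
    chooseMatrix n x + t • 1 =
      pascalMatrix n 0 1 * (powDiagonal n q *
        ((pascalMatrix n x q).transpose + t • pascalMatrix n 0 (-q')) * powDiagonal n q') := by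
  have hP : pascalMatrix n (0 : R) 1 * pascalMatrix n 0 (-1) = 1 := by
    rw [pascalMatrix_mul, add_neg_cancel, pascalMatrix_zero]
  rw [Matrix.mul_add, Matrix.add_mul, Matrix.mul_smul, Matrix.smul_mul,
    powDiagonal_conj_transpose_pascalMatrix hmul, powDiagonal_conj_pascalMatrix hmul, mul_neg,
    mul_comm q' q, hmul, Matrix.mul_add, Matrix.mul_smul, hP, pascalMatrix_mul_transpose]

theorem det_chooseMatrix_add_smul_conj (hadd : q + q' = 1) (hmul : q * q' = 1) (x t : R) :
    (chooseMatrix n x + t • (powDiagonal n q * chooseMatrix n x * powDiagonal n q')).det =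
      (chooseMatrix n x + t • 1).det := by
  rw [chooseMatrix_add_smul_conj hadd hmul, chooseMatrix_add_smul_one hmul, Matrix.det_mul,
    Matrix.det_mul, Matrix.det_transpose, det_pascalMatrix, det_pascalMatrix, mul_one,
    Matrix.det_mul, det_pascalMatrix,
    Matrix.det_conj_of_mul_eq_one (powDiagonal_mul_powDiagonal hmul)
      (powDiagonal_mul_powDiagonal (mul_comm q q' ▸ hmul))]

end PowDiagonal

section Field

variable {F : Type*} [Field F]

theorem binomP_eq_choose [CharZero F] (y : F[X]) (m : ℕ) : binomP F y m = Ring.choose y m := by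
  have hprod : ∏ t ∈ range m, (y - (t : F[X])) = (m.factorial : F[X]) * Ring.choose y m := by
    rw [← nsmul_eq_mul, ← Ring.descPochhammer_eq_factorial_smul_choose,
      ← descPochhammer_eval_eq_prod_range, ← descPochhammer_map (Int.castRingHom F[X]),
      eval_map, ← aeval_eq_smeval]
    rfl
  have hm : (m.factorial : F) ≠ 0 := Nat.cast_ne_zero.2 m.factorial_ne_zero
  rw [binomP, hprod, ← mul_assoc, ← C_eq_natCast, ← C_mul, inv_mul_cancel₀ hm, C_1, one_mul]

theorem aF_mul_one_add {q : F} (hq : q ≠ 0) (m : ℤ) : aF F q m * (1 + q) = 1 - (-q) ^ m := by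
  unfold aF
  split_ifs with hm
  · lift m to ℕ using hm.le
    simpa using geom_sum_mul_neg (-q) m
  · obtain ⟨N, rfl⟩ : ∃ N : ℕ, m = -N := ⟨(-m).toNat, by lia⟩
    have hstep (l : ℕ) : (-q) ^ (-(l + 1 : ℤ)) * (1 + q) =
        (-q) ^ (-((l + 1 : ℕ) : ℤ)) - (-q) ^ (-(l : ℤ)) := by
      have hsucc : (-q) ^ (-(l : ℤ)) = (-q) ^ (-(l + 1 : ℤ)) * (-q) := by
        rw [← zpow_add_one₀ (neg_ne_zero.2 hq), neg_add, neg_add_cancel_right]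
      rw [hsucc, Nat.cast_add_one]
      ring
    rw [neg_neg, Int.toNat_natCast, neg_mul, sum_mul, sum_congr rfl fun l _ => hstep l,
      sum_range_sub fun l : ℕ => (-q) ^ (-(l : ℤ))]
    simp

theorem add_inv_eq_one_of_isPrimitiveRoot_six {q : F} (hq : IsPrimitiveRoot q 6) :
    q + q⁻¹ = 1 := by
  have hroot : q ^ 2 - q + 1 = 0 := by
    simpa [cyclotomic_six] using hq.isRoot_cyclotomic (by norm_num)
  have hq0 : q ≠ 0 := hq.ne_zero (by norm_num)
  field_simp
  linear_combination hroot

theorem ne_zero_of_add_inv_eq_one {q : F} (hq : q + q⁻¹ = 1) : q ≠ 0 := by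
  rintro rfl
  simp at hq

theorem aF_sq_of_add_inv_eq_one {q : F} (hq : q + q⁻¹ = 1) (m : ℤ) :
    aF F (q ^ 2) m = q⁻¹ * (1 - q ^ (-m)) := by
  have hq0 : q ≠ 0 := ne_zero_of_add_inv_eq_one hq
  have hsq : q ^ 2 = -q⁻¹ := by field_simp at hq ⊢; linear_combination (q + 1) * hq
  have h := aF_mul_one_add (pow_ne_zero 2 hq0) m
  rw [show 1 + q ^ 2 = q by linear_combination hsq - hq, hsq, neg_neg, inv_zpow'] at h
  rw [hsq, eq_inv_mul_iff_mul_eq₀ hq0, mul_comm, h]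

theorem aF_sq_sub_add_three_sub {q : F} (hq : q + q⁻¹ = 1) (i j : ℕ) (k : ℤ) :
    aF F (q ^ 2) (j - i + (3 - k)) = q⁻¹ * (1 + q ^ k * (q ^ i * q⁻¹ ^ j)) := by
  have hq0 : q ≠ 0 := ne_zero_of_add_inv_eq_one hq
  have hcube : q ^ 3 = -1 := by field_simp at hq; linear_combination (q + 1) * hq
  rw [aF_sq_of_add_inv_eq_one hq,
    show -((j : ℤ) - i + (3 - k)) = k + (i - j) - (3 : ℕ) by push_cast; ring,
    zpow_sub₀ hq0, zpow_add₀ hq0, zpow_sub₀ hq0, zpow_natCast, zpow_natCast, zpow_natCast, hcube,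
    inv_pow]
  ring

theorem dF_three_sub_sq [CharZero F] {q : F} (hq : q + q⁻¹ = 1) (k : ℤ) (n : ℕ) :
    dF F n (3 - k) (q ^ 2) =
      (C q⁻¹ • (chooseMatrix n (X : F[X]) + C (q ^ k) •
        (powDiagonal n (C q) * chooseMatrix n X * powDiagonal n (C q⁻¹)))).det := by
  rw [dF]
  congr 1
  ext1 i j
  simp only [Matrix.of_apply, Matrix.smul_apply, Matrix.add_apply, powDiagonal_mul_mul_apply,
    chooseMatrix, binomP_eq_choose, aF_sq_sub_add_three_sub hq, smul_eq_mul, C_mul, C_add, C_1,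
    C_pow]
  ring

theorem statement18_general [CharZero F] {q : F} (hq : IsPrimitiveRoot q 6) (k : ℤ) (n : ℕ) :
    dF F n (3 - k) (q ^ 2) =
      C (q ^ (-(n : ℤ))) *
        Matrix.det (Matrix.of fun i j : Fin n =>
          binomP F (X + ((i : ℕ) : F[X]) + ((j : ℕ) : F[X])) (j : ℕ)
            + C (q ^ k) * (if i = j then 1 else 0)) := by
  have hadd : q + q⁻¹ = 1 := add_inv_eq_one_of_isPrimitiveRoot_six hq
  have hmul : q * q⁻¹ = 1 := mul_inv_cancel₀ (ne_zero_of_add_inv_eq_one hadd)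
  have hmatrix : chooseMatrix n (X : F[X]) + C (q ^ k) • 1 = Matrix.of fun i j : Fin n =>
      binomP F (X + ((i : ℕ) : F[X]) + ((j : ℕ) : F[X])) (j : ℕ)
        + C (q ^ k) * (if i = j then 1 else 0) := by
    ext1 i j
    simp only [chooseMatrix, binomP_eq_choose, Matrix.add_apply, Matrix.smul_apply,
      Matrix.one_apply, Matrix.of_apply, smul_eq_mul]
  rw [dF_three_sub_sq hadd, Matrix.det_smul, det_chooseMatrix_add_smul_conj
    (by rw [← C_add, hadd, C_1]) (by rw [← C_mul, hmul, C_1]), hmatrix, Fintype.card_fin,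
    ← C_pow, inv_pow, zpow_neg, zpow_natCast]

end Field

/-- for q a primitive sixth root of unity and k ∈ ℤ,
d_{n,3-k}(x,q²) = q^{-n}·det( binom(x+i+j-2, j-1) + q^k·δ_{i,j} ). -/
theorem statement18 (q : ℂ) (hq : IsPrimitiveRoot q 6) (k : ℤ) (n : ℕ) (hn : 1 ≤ n) :
    dF ℂ n (3 - k) (q ^ 2) =
      Polynomial.C (q ^ (-(n : ℤ))) *
        Matrix.det (Matrix.of fun i j : Fin n =>
          binomP ℂ (Polynomial.X + ((i : ℕ) : Polynomial ℂ) + ((j : ℕ) : Polynomial ℂ)) (j : ℕ)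
            + Polynomial.C (q ^ k) * (if i = j then 1 else 0)) :=
  statement18_general hq k n

end
end
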